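/- arXiv:2211.01359 — 7 statements merged into one kernel-verified Lean document; each statement's English description precedes it below -/
import Mathlib

section
/- Let P be a simply connected polygonal region in the plane (a simple polygon) and let a_1, …, a_k be positive real numbers with a_1 + ⋯ + a_k equal to the area of P. Then there exist sets Q_1, …, Q_k ⊆ ℝ², each of which is a simply connected polygonal region, such that the interiors of the Q_i are pairwise disjoint, the union Q_1 ∪ ⋯ ∪ Q_k equals P, and the area of Q_i equals a_i for every i ∈ {1, …, k}. -/
open MeasureTheory

/-- A polygonal region: a compact subset of the plane that equals the closure of its
interior and whose frontier is contained in a finite union of closed line segments. -/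
def IsPolygonalRegion (S : Set (EuclideanSpace ℝ (Fin 2))) : Prop :=
  IsCompact S ∧ S = closure (interior S) ∧
    ∃ F : Finset (EuclideanSpace ℝ (Fin 2) × EuclideanSpace ℝ (Fin 2)),
      frontier S ⊆ ⋃ e ∈ F, segment ℝ e.1 e.2

/-- A simple polygon: a polygonal region that is simply connected as a topological subspace. -/
def IsSimplePolygon (S : Set (EuclideanSpace ℝ (Fin 2))) : Prop :=
  IsPolygonalRegion S ∧ SimplyConnectedSpace S

namespace PP
open Set Filter Topology

abbrev E := EuclideanSpace ℝ (Fin 2)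

def Ret (K : Set E) : Prop := ∃ r : E → E, Continuous r ∧ (∀ x, r x ∈ K) ∧ ∀ x ∈ K, r x = x

lemma ret_of_convex {K : Set E} (hc : IsClosed K) (hv : Convex ℝ K) (hn : K.Nonempty) : Ret K := by
  have h : ∀ x : E, ∃ y ∈ K, ∀ w ∈ K, inner ℝ (x - y) (w - y) ≤ 0 := by
    intro x
    obtain ⟨y, hy, hy2⟩ := exists_norm_eq_iInf_of_complete_convex hn hc.isComplete hv x
    exact ⟨y, hy, (norm_eq_iInf_iff_real_inner_le_zero hv hy).1 hy2⟩
  choose r hr hr2 using h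
  refine ⟨r, ?_, hr, ?_⟩
  · have : LipschitzWith 1 r := by
      refine LipschitzWith.of_dist_le_mul fun x y => ?_
      rw [dist_eq_norm, dist_eq_norm, NNReal.coe_one, one_mul]
      have h1 := hr2 x (r y) (hr y)
      have h2 := hr2 y (r x) (hr x)
      have h3 : inner ℝ (x - y) (r x - r y) ≤ ‖x - y‖ * ‖r x - r y‖ := real_inner_le_norm _ _
      have h4 : inner ℝ (r x - r y) (r x - r y) = ‖r x - r y‖ ^ 2 := real_inner_self_eq_norm_sq _
      have h5 : inner ℝ (r x - r y) (r x - r y) =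
        inner ℝ (x - y) (r x - r y) + inner ℝ (x - r x) (r y - r x) + inner ℝ (y - r y) (r x - r y) := by
        simp only [inner_sub_left, inner_sub_right]; ring
      by_contra hlt
      push Not at hlt
      have h6 : 0 ≤ ‖x - y‖ := norm_nonneg _
      nlinarith
    exact this.continuous
  · intro x hx
    have := hr2 x x hx
    rw [real_inner_self_eq_norm_sq] at this
    have h2 : ‖x - r x‖ = 0 := by nlinarith [norm_nonneg (x - r x)]
    rw [norm_eq_zero, sub_eq_zero] at h2
    exact h2.symm

/-- extension from a closed set -/
lemma tietze {s : Set E} (hs : IsClosed s) {f : E → E} (hf : ContinuousOn f s) :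
    ∃ g : E → E, Continuous g ∧ ∀ x ∈ s, g x = f x := by
  obtain ⟨g, hg⟩ := ContinuousMap.exists_restrict_eq hs (⟨s.domRestrict f, hf.domRestrict⟩ : C(s, E))
  refine ⟨g, g.continuous, fun x hx => ?_⟩
  have := congrArg (fun h : C(s, E) => h ⟨x, hx⟩) hg
  simpa using this

lemma Ret.nonempty {K : Set E} (h : Ret K) : K.Nonempty := by
  obtain ⟨r, _, h2, _⟩ := h
  exact ⟨r 0, h2 0⟩

lemma Ret.isClosed {K : Set E} (h : Ret K) : IsClosed K := by
  obtain ⟨r, h1, h2, h3⟩ := h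
  have : K = {x | r x = x} := by
    ext x; constructor
    · exact h3 x
    · intro hx; rw [← show r x = x from hx]; exact h2 x
  rw [this]; exact isClosed_eq h1 continuous_id

lemma ret_glue {A B : Set E} (hA : Ret A) (hB : Ret B) (hAB : Ret (A ∩ B)) : Ret (A ∪ B) := by
  have cA := hA.isClosed
  have cB := hB.isClosed
  have nA := hA.nonempty
  have nB := hB.nonempty
  obtain ⟨r0, c0, m0, i0⟩ := hAB
  set X1 : Set E := {x | Metric.infDist x A ≤ Metric.infDist x B} with hX1
  set X2 : Set E := {x | Metric.infDist x B ≤ Metric.infDist x A} with hX2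
  have cX1 : IsClosed X1 := isClosed_le (Metric.continuous_infDist_pt A) (Metric.continuous_infDist_pt B)
  have cX2 : IsClosed X2 := isClosed_le (Metric.continuous_infDist_pt B) (Metric.continuous_infDist_pt A)
  have key : ∀ C D : Set E, Ret C → IsClosed D → (D.Nonempty) → (C ∩ D = A ∩ B) →
      ∀ Z : Set E, IsClosed Z → (Z ⊆ {x | Metric.infDist x D ≤ Metric.infDist x C}) →
      ∃ g : E → E, Continuous g ∧ (∀ x, g x ∈ C) ∧ (∀ x ∈ C, g x = x) ∧ ∀ x ∈ Z, g x = r0 x := by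
    intro C D hC cD nD hCD Z cZ hZ
    have cC := hC.isClosed
    have hcz : ∀ x ∈ C, x ∈ Z → r0 x = x := by
      intro x hx hz
      apply i0
      rw [← hCD]
      refine ⟨hx, ?_⟩
      have h1 := hZ hz
      simp only [mem_ofPred_eq] at h1
      rw [Metric.infDist_zero_of_mem hx] at h1
      rw [cD.mem_iff_infDist_zero nD]
      exact le_antisymm h1 Metric.infDist_nonneg
    classical
    have hcont : ContinuousOn (fun x => if x ∈ C then x else r0 x) (C ∪ Z) := by
      apply ContinuousOn.union_of_isClosed _ _ cC cZ
      · exact continuousOn_id.congr (fun x hx => by simp [hx])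
      · refine c0.continuousOn.congr (fun x hx => ?_)
        by_cases h : x ∈ C
        · simp [h, hcz x h hx]
        · simp [h]
    obtain ⟨g, hg, hg2⟩ := tietze (cC.union cZ) hcont
    obtain ⟨r, c, m, i⟩ := hC
    refine ⟨r ∘ g, c.comp hg, fun x => m _, fun x hx => ?_, fun x hx => ?_⟩
    · simp [hg2 x (Or.inl hx), hx, i x hx]
    · have : g x = r0 x := by
        rw [hg2 x (Or.inr hx)]
        by_cases h : x ∈ C
        · simp [h, hcz x h hx]
        · simp [h]
      simp only [Function.comp, this]
      apply i
      have := m0 x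
      rw [← hCD] at this
      exact this.1
  obtain ⟨g1, cg1, mg1, ig1, zg1⟩ := key A B hA cB nB rfl (X1 ∩ X2) (cX1.inter cX2) (fun x hx => hx.2)
  obtain ⟨g2, cg2, mg2, ig2, zg2⟩ := key B A hB cA nA (inter_comm _ _) (X1 ∩ X2) (cX1.inter cX2) (fun x hx => hx.1)
  classical
  refine ⟨fun x => if Metric.infDist x A ≤ Metric.infDist x B then g1 x else g2 x, ?_, ?_, ?_⟩
  · apply Continuous.if_le cg1 cg2 (Metric.continuous_infDist_pt A) (Metric.continuous_infDist_pt B)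
    intro x hx
    rw [zg1 x ⟨hx.le, hx.ge⟩, zg2 x ⟨hx.le, hx.ge⟩]
  · intro x
    dsimp only
    split_ifs
    · exact Or.inl (mg1 x)
    · exact Or.inr (mg2 x)
  · intro x hx
    dsimp only
    split_ifs with h
    · apply ig1
      rcases hx with hx | hx
      · exact hx
      · rw [Metric.infDist_zero_of_mem hx] at h
        rw [cA.mem_iff_infDist_zero nA]
        exact le_antisymm h Metric.infDist_nonneg
    · apply ig2
      rcases hx with hx | hx
      · rw [Metric.infDist_zero_of_mem hx] at h
        exact absurd Metric.infDist_nonneg h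
      · exact hx

lemma ret_path {c : ℝ → E} {u v : ℝ} (huv : u ≤ v) (hc : ContinuousOn c (Icc u v)) (hi : InjOn c (Icc u v)) :
    Ret (c '' Icc u v) := by
  let f : Icc u v → E := (Icc u v).domRestrict c
  have hf : Continuous f := hc.domRestrict
  have hemb : IsClosedEmbedding f := hf.isClosedEmbedding (injOn_iff_injective.1 hi)
  have hr : range f = c '' Icc u v := by simp [f, range_domRestrict]
  let e := hemb.isEmbedding.toHomeomorph
  have hcl : IsClosed (range f) := hemb.isClosed_range
  obtain ⟨g, hg⟩ := ContinuousMap.exists_restrict_eq hcl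
    (⟨fun y => ((e.symm y : Icc u v) : ℝ), by fun_prop⟩ : C(range f, ℝ))
  refine ⟨fun x => c (projIcc u v huv (g x)), ?_, ?_, ?_⟩
  · have : Continuous fun x => f (projIcc u v huv (g x)) :=
      hf.comp (continuous_projIcc.comp g.continuous)
    exact this
  · intro x
    exact ⟨_, (projIcc u v huv (g x)).2, rfl⟩
  · rintro _ ⟨t, ht, rfl⟩
    have h1 : c t ∈ range f := ⟨⟨t, ht⟩, rfl⟩
    have h2 := congrArg (fun h : C(range f, ℝ) => h ⟨c t, h1⟩) hg
    have h3 : e.symm ⟨c t, h1⟩ = ⟨t, ht⟩ := by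
      rw [Homeomorph.symm_apply_eq]; rfl
    simp only [ContinuousMap.restrict_apply, ContinuousMap.coe_mk, h3] at h2
    show c (projIcc u v huv (g (c t))) = c t
    rw [h2, projIcc_of_mem huv ht]

lemma sc_retract {X Y : Type*} [TopologicalSpace X] [TopologicalSpace Y] [SimplyConnectedSpace X]
    (i : Y → X) (r : X → Y) (hi : Continuous i) (hr : Continuous r) (h : ∀ y, r (i y) = y) :
    SimplyConnectedSpace Y := by
  rw [simply_connected_iff_paths_homotopic']
  have hX := (simply_connected_iff_paths_homotopic' (Y := X)).1 inferInstance
  have := hX.1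
  have hs : Function.Surjective r := fun y => ⟨i y, h y⟩
  refine ⟨hs.pathConnectedSpace hr, ?_⟩
  intro x y p q
  have h1 := (hX.2 (p.map hi) (q.map hi)).map ⟨r, hr⟩
  have e : ∀ p : Path x y, ((p.map hi).map hr) = p.cast (h x) (h y) := by
    intro p; ext t; simp [h]
  have h2 : Path.Homotopic (p.cast (h x) (h y)) (q.cast (h x) (h y)) := by
    rw [← e, ← e]; exact h1
  have gen : ∀ (x' y' : Y) (hx : x' = x) (hy : y' = y),
      Path.Homotopic (p.cast hx hy) (q.cast hx hy) → Path.Homotopic p q := by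
    intro x' y' hx hy H
    subst hx hy
    exact H
  exact gen _ _ _ _ h2

lemma Ret.sc {K : Set E} (h : Ret K) : SimplyConnectedSpace K := by
  obtain ⟨r, h1, h2, h3⟩ := h
  exact sc_retract (X := E) (fun x : K => (x : E)) (fun x => ⟨r x, h2 x⟩) continuous_subtype_val
    (by fun_prop) (fun y => Subtype.ext (h3 y y.2))

lemma sc_of_union {A B : Set E} (cA : IsClosed A) (cB : IsClosed B) (hAB : Ret (A ∩ B))
    (h : SimplyConnectedSpace (A ∪ B : Set E)) : SimplyConnectedSpace A := by
  obtain ⟨r, h1, h2, h3⟩ := hAB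
  classical
  have hc : ContinuousOn (fun x => if x ∈ A then x else r x) (A ∪ B) := by
    apply ContinuousOn.union_of_isClosed _ _ cA cB
    · exact continuousOn_id.congr (fun x hx => by simp [hx])
    · refine h1.continuousOn.congr (fun x hx => ?_)
      by_cases h : x ∈ A
      · simp [h, h3 x ⟨h, hx⟩]
      · simp [h]
  refine sc_retract (X := (A ∪ B : Set E)) (fun x : A => (⟨x, Or.inl x.2⟩ : (A ∪ B : Set E)))
    (fun x => ⟨if (x : E) ∈ A then x else r x, ?_⟩) (by fun_prop) ?_ ?_
  · split_ifs with h
    · exact h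
    · exact (h2 _).1
  · exact Continuous.subtype_mk hc.domRestrict _
  · intro y; ext1; simp [y.2]

end PP

namespace PP
open Set Filter Topology

def side (a b z : E) : ℝ := (b 0 - a 0) * (z 1 - a 1) - (b 1 - a 1) * (z 0 - a 0)

lemma ext2 {x y : E} (h0 : x 0 = y 0) (h1 : x 1 = y 1) : x = y := by
  ext i; fin_cases i
  · exact h0
  · exact h1

lemma side_cyc (a b z : E) : side b z a = side a b z := by simp [side]; ring
lemma side_swap (a b z : E) : side b a z = - side a b z := by simp [side]; ring
lemma side_left (a b : E) : side a b a = 0 := by simp [side]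
lemma side_right (a b : E) : side a b b = 0 := by simp [side]; ring

@[fun_prop]
lemma side_cont (a b : E) : Continuous (side a b) := by unfold side; fun_prop

/-- `side` as affine function along combos -/
lemma side_comb (a b x y : E) (s t : ℝ) (h : s + t = 1) :
    side a b (s • x + t • y) = s * side a b x + t * side a b y := by
  obtain rfl : s = 1 - t := by linarith
  simp [side]; ring

lemma side_lin (a b x v : E) (t : ℝ) :
    side a b (x + t • v) = side a b x + t * ((b 0 - a 0) * v 1 - (b 1 - a 1) * v 0) := by
  simp [side]; ring

lemma mem_segment_side {a b z : E} (h : z ∈ segment ℝ a b) : side a b z = 0 := by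
  obtain ⟨s, t, hs, ht, hst, rfl⟩ := h
  rw [side_comb _ _ _ _ _ _ hst, side_left, side_right]; ring

lemma bary {o p q : E} (h : side o p q ≠ 0) (x : E) :
    x = o + (side q o x / side o p q) • (p - o) + (side o p x / side o p q) • (q - o) := by
  apply ext2
  · simp only [PiLp.add_apply, PiLp.smul_apply, PiLp.sub_apply, smul_eq_mul]
    field_simp; simp [side]; ring
  · simp only [PiLp.add_apply, PiLp.smul_apply, PiLp.sub_apply, smul_eq_mul]
    field_simp; simp [side]; ring

lemma side_sum (o p q x : E) : side q o x + side o p x + side p q x = side o p q := by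
  simp [side]; ring

lemma bary_a (o p q : E) (α β : ℝ) :
    side q o (o + α • (p - o) + β • (q - o)) = α * side o p q := by
  simp [side]; ring
lemma bary_b (o p q : E) (α β : ℝ) :
    side o p (o + α • (p - o) + β • (q - o)) = β * side o p q := by
  simp [side]; ring
lemma bary_c (o p q : E) (α β : ℝ) :
    side p q (o + α • (p - o) + β • (q - o)) = (1 - α - β) * side o p q := by
  simp [side]; ring

lemma sq_pos_of_ne {a b : E} (h : a ≠ b) : 0 < (b 0 - a 0) ^ 2 + (b 1 - a 1) ^ 2 := by
  by_contra hh
  push Not at hh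
  apply h
  apply ext2
  · nlinarith [sq_nonneg (b 0 - a 0), sq_nonneg (b 1 - a 1)]
  · nlinarith [sq_nonneg (b 0 - a 0), sq_nonneg (b 1 - a 1)]

/-- the inner normal -/
noncomputable def nrm (a b : E) : E := !₂[-(b 1 - a 1), b 0 - a 0]

lemma side_nrm (a b x : E) (t : ℝ) :
    side a b (x + t • nrm a b) = side a b x + t * ((b 0 - a 0) ^ 2 + (b 1 - a 1) ^ 2) := by
  rw [side_lin]; simp [nrm]; left; ring

lemma tendsto_line (x v : E) : Tendsto (fun t : ℝ => x + t • v) (𝓝 0) (𝓝 x) := by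
  have : Continuous (fun t : ℝ => x + t • v) := by fun_prop
  simpa using this.tendsto 0

lemma side_pos_of_interior {a b : E} {Y : Set E} (hab : a ≠ b) (hY : ∀ y ∈ Y, 0 ≤ side a b y)
    {x : E} (hx : x ∈ interior Y) : 0 < side a b x := by
  have h1 : ∀ᶠ t : ℝ in 𝓝 0, x + t • nrm a b ∈ Y :=
    (tendsto_line x (nrm a b)).eventually (mem_interior_iff_mem_nhds.1 hx)
  obtain ⟨ε, hε, h2⟩ := Metric.eventually_nhds_iff.1 h1
  have h3 := hY _ (h2 (y := -(ε/2)) (by simp [abs_of_pos hε]; linarith))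
  rw [side_nrm] at h3
  have := sq_pos_of_ne hab
  nlinarith [mul_pos hε this]

/-- a point near which side<0 exists -/
lemma exists_neg_near {a b x : E} (hab : a ≠ b) (hx : side a b x ≤ 0) {U : Set E} (hU : U ∈ 𝓝 x) :
    ∃ z ∈ U, side a b z < 0 := by
  have h1 : ∀ᶠ t : ℝ in 𝓝 0, x + t • nrm a b ∈ U := (tendsto_line x (nrm a b)).eventually hU
  obtain ⟨ε, hε, h2⟩ := Metric.eventually_nhds_iff.1 h1
  refine ⟨_, h2 (y := -(ε/2)) (by simp [abs_of_pos hε]; linarith), ?_⟩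
  rw [side_nrm]
  have := sq_pos_of_ne hab
  nlinarith [mul_pos hε this]

lemma exists_line {a b : E} (hab : a ≠ b) {x : E} (h : side a b x = 0) : ∃ t : ℝ, x = a + t • (b - a) := by
  have := sq_pos_of_ne hab
  refine ⟨((b 0 - a 0) * (x 0 - a 0) + (b 1 - a 1) * (x 1 - a 1)) / ((b 0 - a 0) ^ 2 + (b 1 - a 1) ^ 2), ?_⟩
  simp only [side] at h
  apply ext2
  · simp only [PiLp.add_apply, PiLp.smul_apply, PiLp.sub_apply, smul_eq_mul]
    field_simp; linear_combination (b 1 - a 1) * (-h)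
  · simp only [PiLp.add_apply, PiLp.smul_apply, PiLp.sub_apply, smul_eq_mul]
    field_simp; linear_combination (b 0 - a 0) * (h)

lemma openSeg_iff {a b x : E} : x ∈ openSegment ℝ a b ↔ ∃ t : ℝ, 0 < t ∧ t < 1 ∧ x = a + t • (b - a) := by
  rw [openSegment_eq_image']
  constructor
  · rintro ⟨t, ht, rfl⟩; exact ⟨t, ht.1, ht.2, rfl⟩
  · rintro ⟨t, h1, h2, rfl⟩; exact ⟨t, ⟨h1, h2⟩, rfl⟩

lemma seg_iff {a b x : E} : x ∈ segment ℝ a b ↔ ∃ t : ℝ, 0 ≤ t ∧ t ≤ 1 ∧ x = a + t • (b - a) := by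
  rw [segment_eq_image']
  constructor
  · rintro ⟨t, ht, rfl⟩; exact ⟨t, ht.1, ht.2, rfl⟩
  · rintro ⟨t, h1, h2, rfl⟩; exact ⟨t, ⟨h1, h2⟩, rfl⟩

lemma halfdisc {Y : Set E} (hY : Convex ℝ Y) {a b p x : E} (ha : a ∈ Y) (hb : b ∈ Y) (hp : p ∈ Y)
    (hs : 0 < side a b p) (hx : x ∈ openSegment ℝ a b) :
    ∀ᶠ z in 𝓝 x, 0 ≤ side a b z → z ∈ Y := by
  obtain ⟨t, h0, h1, rfl⟩ := openSeg_iff.1 hx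
  have e1 : 0 < side b p (a + t • (b - a)) := by
    have : side b p (a + t • (b - a)) = (1 - t) * side a b p := by simp [side]; ring
    rw [this]; exact mul_pos (by linarith) hs
  have e2 : 0 < side p a (a + t • (b - a)) := by
    have : side p a (a + t • (b - a)) = t * side a b p := by simp [side]; ring
    rw [this]; exact mul_pos h0 hs
  have n1 := (side_cont b p).continuousAt.eventually (lt_mem_nhds e1)
  have n2 := (side_cont p a).continuousAt.eventually (lt_mem_nhds e2)
  filter_upwards [n1, n2] with z hz1 hz2 hz3
  have e := bary (o := p) (p := a) (q := b) (by rw [← side_cyc]; rw [side_cyc, side_cyc] ; exact (by simpa [side_cyc] using hs.ne')) z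
  have hD : side p a b = side a b p := by rw [← side_cyc p a b]
  rw [hD] at e
  have hsum := side_sum p a b z
  rw [hD] at hsum
  have e3 : z = (side b p z / side a b p) • a + (side p a z / side a b p) • b + (side a b z / side a b p) • p := by
    have : side a b z / side a b p = 1 - side b p z / side a b p - side p a z / side a b p := by
      field_simp; linarith
    rw [this]
    rw [e]
    have hz : p + (side b p z / side a b p) • (a - p) + (side p a z / side a b p) • (b - p) = z := e.symm
    rw [hz]
    conv_lhs => rw [e]
    module
  rw [e3]
  have key := hY.sum_mem (t := Finset.univ) (w := ![side b p z / side a b p, side p a z / side a b p, side a b z / side a b p])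
    (z := ![a, b, p]) ?_ ?_ ?_
  · simpa [Fin.sum_univ_three] using key
  · intro i _; fin_cases i
    · exact (div_pos hz1 hs).le
    · exact (div_pos hz2 hs).le
    · exact div_nonneg hz3 hs.le
  · simp [Fin.sum_univ_three]; field_simp; linarith
  · intro i _; fin_cases i
    · exact ha
    · exact hb
    · exact hp

lemma seg_frontier {Y : Set E} {a b : E} (hab : a ≠ b) (hY : ∀ y ∈ Y, 0 ≤ side a b y)
    {x : E} (hx : x ∈ Y) (h : side a b x = 0) : x ∈ frontier Y := by
  refine ⟨subset_closure hx, fun hi => ?_⟩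
  have := side_pos_of_interior hab hY hi
  linarith

end PP

namespace PP
open Set Filter Topology

lemma lemL {Y : Set E} (hYc : IsCompact Y) (hYv : Convex ℝ Y) (hYi : (interior Y).Nonempty)
    {a b : E} (hab : a ≠ b) (ha : a ∈ Y) (hb : b ∈ Y) (hs : ∀ y ∈ Y, 0 ≤ side a b y) :
    Ret (frontier Y \ openSegment ℝ a b) ∧
    ∀ (T X : Set E), T.Finite → IsClosed X → (frontier Y \ openSegment ℝ a b) \ T ⊆ X →
      frontier Y \ openSegment ℝ a b ⊆ X := by
  obtain ⟨o, ho⟩ := hYi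
  have hD : 0 < side a b o := side_pos_of_interior hab hs ho
  have hD' : side o a b = side a b o := by rw [← side_cyc o a b]
  set Y' : Set E := (fun y => o + y) ⁻¹' Y with hY'
  have hY'v : Convex ℝ Y' := hYv.translate_preimage_right o
  have hY'c : IsCompact Y' := (Homeomorph.addLeft o).isCompact_preimage.2 hYc
  have h0 : Y' ∈ 𝓝 (0 : E) := by
    have : Continuous fun y : E => o + y := by fun_prop
    apply this.continuousAt.preimage_mem_nhds
    simpa using mem_interior_iff_mem_nhds.1 ho
  have hfr : ∀ x, o + x ∈ frontier Y ↔ gauge Y' x = 1 := by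
    intro x
    rw [gauge_eq_one_iff_mem_frontier hY'v h0]
    have := (Homeomorph.addLeft o).preimage_frontier Y
    have h2 : x ∈ (Homeomorph.addLeft o) ⁻¹' frontier Y ↔ x ∈ frontier (Homeomorph.addLeft o ⁻¹' Y) := by rw [this]
    exact h2
  set g := gauge Y' with hg
  have gc : Continuous g := continuous_gauge hY'v h0
  have gpos : ∀ x, x ≠ 0 → 0 < g x := fun x hx =>
    (gauge_pos (absorbent_nhds_zero h0) ((NormedSpace.isVonNBounded_iff ℝ).2 hY'c.isBounded)).2 hx
  have ghom : ∀ (s : ℝ) x, 0 ≤ s → g (s • x) = s * g x := fun s x hs => by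
    rw [hg, gauge_smul_of_nonneg hs]; rfl
  set u := a - o with hu
  set w := b - o with hw
  have indep : ∀ α β α' β' : ℝ, α • u + β • w = α' • u + β' • w → α = α' ∧ β = β' := by
    intro α β α' β' h
    have h1 : o + α • u + β • w = o + α' • u + β' • w := by rw [add_assoc, h, add_assoc]
    have e1 := congrArg (side b o) h1
    have e2 := congrArg (side o a) h1
    rw [bary_a, bary_a, hD'] at e1
    rw [bary_b, bary_b, hD'] at e2
    exact ⟨mul_right_cancel₀ hD.ne' e1, mul_right_cancel₀ hD.ne' e2⟩
  let A : ℝ → ℝ := fun τ => |τ - 2| - 1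
  let Bt : ℝ → ℝ := fun τ => |τ - 1| - 1
  have hAB : ∀ τ ∈ Icc (0:ℝ) 3, |A τ| + |Bt τ| = 1 := by
    rintro τ ⟨h1, h2⟩
    simp only [A, Bt]
    rcases le_total τ 1 with h | h
    · rw [abs_of_nonpos (show τ - 2 ≤ 0 by linarith), abs_of_nonpos (show τ - 1 ≤ 0 by linarith),
        abs_of_nonneg (by linarith), abs_of_nonpos (by linarith)]; ring
    · rcases le_total τ 2 with h' | h'
      · rw [abs_of_nonpos (show τ - 2 ≤ 0 by linarith), abs_of_nonneg (show 0 ≤ τ - 1 by linarith),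
          abs_of_nonpos (by linarith), abs_of_nonpos (by linarith)]; ring
      · rw [abs_of_nonneg (show 0 ≤ τ - 2 by linarith), abs_of_nonneg (show 0 ≤ τ - 1 by linarith),
          abs_of_nonpos (by linarith), abs_of_nonneg (by linarith)]; ring
  let d : ℝ → E := fun τ => A τ • u + Bt τ • w
  have dc : Continuous d := by simp only [d, A, Bt]; fun_prop
  have dne : ∀ τ ∈ Icc (0:ℝ) 3, d τ ≠ 0 := by
    intro τ hτ h
    have := indep (A τ) (Bt τ) 0 0 (by simpa using h)
    have h2 := hAB τ hτ
    rw [this.1, this.2] at h2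
    simp at h2
  let c : ℝ → E := fun τ => o + (g (d τ))⁻¹ • d τ
  have hc : ContinuousOn c (Icc 0 3) := by
    apply continuousOn_const.add
    exact ContinuousOn.smul (ContinuousOn.inv₀ (gc.comp dc).continuousOn
      (fun τ hτ => (gpos _ (dne τ hτ)).ne')) dc.continuousOn
  have hinj : InjOn c (Icc 0 3) := by
    intro τ hτ τ' hτ' h
    have h1 : (g (d τ))⁻¹ • d τ = (g (d τ'))⁻¹ • d τ' := add_left_cancel h
    have p1 := inv_pos.2 (gpos _ (dne τ hτ))
    have p2 := inv_pos.2 (gpos _ (dne τ' hτ'))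
    set s := (g (d τ))⁻¹
    set s' := (g (d τ'))⁻¹
    have h2 := indep (s * A τ) (s * Bt τ) (s' * A τ') (s' * Bt τ') (by
      simp only [mul_smul, ← smul_add]; exact h1)
    have e1 := congrArg abs h2.1
    have e2 := congrArg abs h2.2
    rw [abs_mul, abs_mul, abs_of_pos p1, abs_of_pos p2] at e1 e2
    have h3 := hAB τ hτ
    have h4 := hAB τ' hτ'
    have h5 : s = s' := by
      calc s = s * (|A τ| + |Bt τ|) := by rw [h3, mul_one]
        _ = s' * (|A τ'| + |Bt τ'|) := by linarith
        _ = s' := by rw [h4, mul_one]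
    rw [← h5] at h2
    have f1 : |τ - 2| = |τ' - 2| := by
      have := mul_left_cancel₀ p1.ne' h2.1
      simp only [A] at this; linarith
    have f2 : |τ - 1| = |τ' - 1| := by
      have := mul_left_cancel₀ p1.ne' h2.2
      simp only [Bt] at this; linarith
    have q1 := congrArg (· ^ 2) f1
    have q2 := congrArg (· ^ 2) f2
    simp only [sq_abs] at q1 q2
    linarith
  have himg : c '' Icc 0 3 = frontier Y \ openSegment ℝ a b := by
    apply Subset.antisymm
    · rintro _ ⟨τ, hτ, rfl⟩
      have gp := gpos _ (dne τ hτ)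
      refine ⟨?_, ?_⟩
      · rw [hfr, ghom _ _ (inv_nonneg.2 gp.le), inv_mul_cancel₀ gp.ne']
      · intro hm
        obtain ⟨t, h1, h2, h3⟩ := openSeg_iff.1 hm
        have h4 := indep ((g (d τ))⁻¹ * A τ) ((g (d τ))⁻¹ * Bt τ) (1 - t) t (by
          simp only [mul_smul, ← smul_add]
          have : (g (d τ))⁻¹ • d τ = a + t • (b - a) - o := by rw [← h3]; simp [c]
          refine this.trans ?_
          rw [hu, hw]; module)
        have p1 := inv_pos.2 gp
        have k1 : 0 < A τ := by
          by_contra hh; push Not at hh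
          nlinarith [mul_nonneg p1.le (neg_nonneg.2 hh)]
        have k2 : 0 < Bt τ := by
          by_contra hh; push Not at hh
          nlinarith [mul_nonneg p1.le (neg_nonneg.2 hh)]
        simp only [A, Bt] at k1 k2
        rcases hτ with ⟨l1, l2⟩
        have k1 : 1 < |τ - 2| := by linarith
        have k2 : 1 < |τ - 1| := by linarith
        rw [lt_abs] at k1 k2
        rcases k1 with k1 | k1 <;> rcases k2 with k2 | k2 <;> linarith
    · rintro x ⟨hx, hxn⟩
      have hb := bary (o := o) (p := a) (q := b) (by rw [hD']; exact hD.ne') x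
      set α := side b o x / side o a b
      set β := side o a x / side o a b
      have hx1 : x = o + (α • u + β • w) := by rw [← add_assoc]; exact hb
      have hgx : g (α • u + β • w) = 1 := by rw [← hfr, ← hx1]; exact hx
      have hne : α • u + β • w ≠ 0 := by
        intro h; rw [h, hg, gauge_zero] at hgx; norm_num at hgx
      have hnot : ¬ (0 < α ∧ 0 < β) := by
        rintro ⟨h1, h2⟩
        have hsum : 0 < α + β := by linarith
        have hm : a + (β / (α + β)) • (b - a) ∈ openSegment ℝ a b :=
          openSeg_iff.2 ⟨_, div_pos h2 hsum, by rw [div_lt_one hsum]; linarith, rfl⟩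
        have hm2 := openSegment_subset_segment ℝ a b hm
        have hm3 : a + (β / (α + β)) • (b - a) ∈ frontier Y :=
          seg_frontier hab hs (hYv.segment_subset ha ‹b ∈ Y› hm2) (mem_segment_side hm2)
        have e : a + (β / (α + β)) • (b - a) = o + (α + β)⁻¹ • (α • u + β • w) := by
          rw [hu, hw]
          have : β / (α + β) = 1 - (α + β)⁻¹ * α := by field_simp; ring
          rw [smul_add, smul_smul, smul_smul]
          have h2 : (α + β)⁻¹ * β = 1 - (α + β)⁻¹ * α := by field_simp; ring
          rw [this, h2]; module
        rw [e, hfr, ghom _ _ (inv_nonneg.2 hsum.le), hgx, mul_one, inv_eq_one] at hm3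
        apply hxn
        rw [hx1]
        rw [e, hm3, inv_one, one_smul] at hm
        exact hm
      set s := |α| + |β| with hsdef
      have spos : 0 < s := by
        rcases eq_or_ne α 0 with h | h
        · rcases eq_or_ne β 0 with h' | h'
          · exfalso; apply hne; rw [h, h']; simp
          · have := abs_pos.2 h'; have := abs_nonneg α; linarith
        · have := abs_pos.2 h; have := abs_nonneg β; linarith
      have fin : ∃ τ ∈ Icc (0:ℝ) 3, A τ = s⁻¹ * α ∧ Bt τ = s⁻¹ * β := by
        have hsi := inv_pos.2 spos
        have hss : s⁻¹ * |α| + s⁻¹ * |β| = 1 := by rw [← mul_add, ← hsdef, inv_mul_cancel₀ spos.ne']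
        rcases le_or_gt β 0 with hβ | hβ
        · rw [abs_of_nonpos hβ] at hss
          have t2 : s⁻¹ * β ≤ 0 := mul_nonpos_of_nonneg_of_nonpos hsi.le hβ
          rcases le_total 0 α with hα | hα
          · rw [abs_of_nonneg hα] at hss
            have t1 : 0 ≤ s⁻¹ * α := mul_nonneg hsi.le hα
            refine ⟨- (s⁻¹ * β), ⟨by linarith, by linarith⟩, ?_, ?_⟩
            · simp only [A]; rw [abs_of_nonpos (by linarith)]; linarith
            · simp only [Bt]; rw [abs_of_nonpos (by linarith)]; linarith
          · rw [abs_of_nonpos hα] at hss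
            have t1 : s⁻¹ * α ≤ 0 := mul_nonpos_of_nonneg_of_nonpos hsi.le hα
            refine ⟨1 - (s⁻¹ * α), ⟨by linarith, by linarith⟩, ?_, ?_⟩
            · simp only [A]; rw [abs_of_nonpos (by linarith)]; linarith
            · simp only [Bt]; rw [abs_of_nonneg (by linarith)]; linarith
        · have hα' : α ≤ 0 := by
            by_contra hh; push Not at hh
            exact hnot ⟨hh, hβ⟩
          rw [abs_of_pos hβ, abs_of_nonpos hα'] at hss
          have t2 : 0 ≤ s⁻¹ * β := mul_nonneg hsi.le hβ.le
          have t1 : s⁻¹ * α ≤ 0 := mul_nonpos_of_nonneg_of_nonpos hsi.le hα'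
          refine ⟨2 + (s⁻¹ * β), ⟨by linarith, by linarith⟩, ?_, ?_⟩
          · simp only [A]; rw [abs_of_nonneg (by linarith)]; linarith
          · simp only [Bt]; rw [abs_of_nonneg (by linarith)]; linarith
      obtain ⟨τ, hτ, h1, h2⟩ := fin
      refine ⟨τ, hτ, ?_⟩
      have e1 : d τ = s⁻¹ • (α • u + β • w) := by
        simp only [d]; rw [h1, h2]; module
      show o + (g (d τ))⁻¹ • d τ = x
      rw [e1, ghom _ _ (inv_nonneg.2 spos.le), hgx, mul_one, inv_inv, smul_smul, mul_inv_cancel₀ spos.ne', one_smul, ← hx1]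
  refine ⟨himg ▸ ret_path (by norm_num) hc hinj, ?_⟩
  rintro T X hT hX hsub
  rw [← himg] at hsub ⊢
  rintro _ ⟨τ, hτ, rfl⟩
  set F := Icc (0:ℝ) 3 ∩ c ⁻¹' T with hF
  have hFf : F.Finite := by
    apply Set.Finite.of_finite_image (f := c)
    · exact hT.subset (by rintro _ ⟨t, ht, rfl⟩; exact ht.2)
    · exact hinj.mono (fun t ht => ht.1)
  have hd : τ ∈ closure (Ioo (0:ℝ) 3 ∩ Fᶜ) := by
    have h1 := (hFf.countable.dense_compl ℝ).open_subset_closure_inter (isOpen_Ioo (a := (0:ℝ)) (b := 3))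
    have h2 := closure_minimal h1 isClosed_closure
    rw [closure_Ioo (by norm_num)] at h2
    exact h2 hτ
  have hcl := hc.mono (Ioo_subset_Icc_self (a := (0:ℝ)) (b := 3))
  have h1 : c τ ∈ closure (c '' (Ioo (0:ℝ) 3 ∩ Fᶜ)) := by
    have hw : ContinuousWithinAt c (Ioo (0:ℝ) 3 ∩ Fᶜ) τ :=
      (hc τ hτ).mono (inter_subset_left.trans Ioo_subset_Icc_self)
    exact hw.mem_closure_image hd
  refine closure_minimal ?_ hX h1
  rintro _ ⟨t, ⟨ht1, ht2⟩, rfl⟩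
  apply hsub
  refine ⟨⟨t, Ioo_subset_Icc_self ht1, rfl⟩, fun hT => ht2 ⟨Ioo_subset_Icc_self ht1, hT⟩⟩

end PP

namespace PP
open Set Filter Topology

def FinSeg (S : Set E) : Prop := ∃ F : Finset (E × E), S ⊆ ⋃ e ∈ F, segment ℝ e.1 e.2

lemma FinSeg.mono {S T : Set E} (h : FinSeg T) (hs : S ⊆ T) : FinSeg S := by
  obtain ⟨F, hF⟩ := h; exact ⟨F, hs.trans hF⟩

lemma FinSeg.union {S T : Set E} (h : FinSeg S) (h' : FinSeg T) : FinSeg (S ∪ T) := by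
  classical
  obtain ⟨F, hF⟩ := h
  obtain ⟨G, hG⟩ := h'
  refine ⟨F ∪ G, ?_⟩
  rintro x (hx | hx)
  · have := hF hx
    simp only [mem_iUnion, Finset.mem_union] at this ⊢
    obtain ⟨e, he, h⟩ := this
    exact ⟨e, Or.inl he, h⟩
  · have := hG hx
    simp only [mem_iUnion, Finset.mem_union] at this ⊢
    obtain ⟨e, he, h⟩ := this
    exact ⟨e, Or.inr he, h⟩

lemma finSeg_segment (a b : E) : FinSeg (segment ℝ a b) := ⟨{(a, b)}, by simp⟩

lemma line_closed (a b : E) (s : ℝ) : IsClosed {z | side a b z = s} :=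
  isClosed_eq (side_cont a b) continuous_const

lemma line_convex (a b : E) (s : ℝ) : Convex ℝ {z | side a b z = s} := by
  intro x hx y hy α β _ _ h
  simp only [mem_ofPred_eq] at *
  rw [side_comb _ _ _ _ _ _ h, hx, hy, ← add_mul, h, one_mul]

lemma half_convex (a b : E) (s : ℝ) : Convex ℝ {z | s ≤ side a b z} := by
  intro x hx y hy α β h1 h2 h
  simp only [mem_ofPred_eq] at *
  rw [side_comb _ _ _ _ _ _ h]
  have : s = α * s + β * s := by rw [← add_mul, h, one_mul]
  nlinarith [mul_le_mul_of_nonneg_left hx h1, mul_le_mul_of_nonneg_left hy h2]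

lemma half_convex' (a b : E) (s : ℝ) : Convex ℝ {z | side a b z ≤ s} := by
  intro x hx y hy α β h1 h2 h
  simp only [mem_ofPred_eq] at *
  rw [side_comb _ _ _ _ _ _ h]
  have : s = α * s + β * s := by rw [← add_mul, h, one_mul]
  nlinarith [mul_le_mul_of_nonneg_left hx h1, mul_le_mul_of_nonneg_left hy h2]

lemma line_null {a b : E} (hab : a ≠ b) (s : ℝ) : volume {z | side a b z = s} = 0 := by
  have h1 := (line_convex a b s).addHaar_frontier volume
  have h2 : frontier {z | side a b z = s} = {z | side a b z = s} := by
    rw [(line_closed a b s).frontier_eq]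
    have : interior {z | side a b z = s} = ∅ := by
      rw [Set.eq_empty_iff_forall_notMem]
      intro x hx
      have h1 : ∀ᶠ t : ℝ in 𝓝 0, x + t • nrm a b ∈ {z | side a b z = s} :=
        (tendsto_line x (nrm a b)).eventually (mem_interior_iff_mem_nhds.1 hx)
      obtain ⟨ε, hε, h2⟩ := Metric.eventually_nhds_iff.1 h1
      have h3 := h2 (y := (ε/2)) (by simp [abs_of_pos hε]; linarith)
      have h4 := interior_subset hx
      simp only [mem_ofPred_eq] at h3 h4
      rw [side_nrm, h4] at h3
      have := mul_pos hε (sq_pos_of_ne hab)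
      linarith
    rw [this, sdiff_empty]
  rwa [h2] at h1

lemma seg_null (a b : E) : volume (segment ℝ a b) = 0 := by
  rcases eq_or_ne a b with rfl | h
  · simp
  · exact measure_mono_null (fun z hz => mem_segment_side hz) (line_null h 0)

lemma FinSeg.null {S : Set E} (h : FinSeg S) : volume S = 0 := by
  obtain ⟨F, hF⟩ := h
  refine measure_mono_null hF ?_
  refine (measure_biUnion_null_iff (μ := volume) F.countable_toSet).2 ?_
  intro e _
  exact seg_null _ _

lemma side_shift {a b : E} (hab : a ≠ b) (s : ℝ) :
    ∃ a' b' : E, a' ≠ b' ∧ ∀ z, side a' b' z = side a b z - s := by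
  have hp := sq_pos_of_ne hab
  set D := (b 0 - a 0) ^ 2 + (b 1 - a 1) ^ 2 with hD
  refine ⟨a + (s / D) • nrm a b, b + (s / D) • nrm a b, fun h => hab (add_right_cancel h), fun z => ?_⟩
  have : s = (s / D) * D := by field_simp
  rw [this]
  generalize s / D = t
  rw [mul_div_cancel_right₀ _ hp.ne', hD]
  simp [side, nrm]; ring

lemma line_seg {K : Set E} (hK : IsCompact K) {a b : E} (hab : a ≠ b) (h : ∀ z ∈ K, side a b z = 0) :
    ∃ p q, p ≠ q ∧ K ⊆ segment ℝ p q := by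
  have hp := sq_pos_of_ne hab
  let f : E → ℝ := fun x => ((b 0 - a 0) * (x 0 - a 0) + (b 1 - a 1) * (x 1 - a 1)) / ((b 0 - a 0) ^ 2 + (b 1 - a 1) ^ 2)
  have hf : Continuous f := by simp only [f]; fun_prop
  obtain ⟨M, hM⟩ := (hK.image hf).isBounded.exists_pos_norm_lt
  obtain ⟨hM0, hM⟩ := hM
  have hfe : ∀ x ∈ K, x = a + f x • (b - a) := by
    intro x hx
    have h := h x hx
    simp only [side] at h
    apply ext2
    · simp only [PiLp.add_apply, PiLp.smul_apply, PiLp.sub_apply, smul_eq_mul, f]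
      field_simp; linear_combination (b 1 - a 1) * (-h)
    · simp only [PiLp.add_apply, PiLp.smul_apply, PiLp.sub_apply, smul_eq_mul, f]
      field_simp; linear_combination (b 0 - a 0) * (h)
  refine ⟨a + (-M) • (b - a), a + M • (b - a), ?_, ?_⟩
  · intro h
    have h1 : (2 * M) • (b - a) = 0 := by
      have := sub_eq_zero.2 h.symm
      rw [← this]; module
    rcases smul_eq_zero.1 h1 with h2 | h2
    · linarith
    · exact hab (sub_eq_zero.1 h2).symm
  · intro x hx
    have h1 := hM (f x) ⟨x, hx, rfl⟩
    rw [Real.norm_eq_abs, abs_lt] at h1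
    rw [seg_iff]
    refine ⟨(f x + M) / (2 * M), div_nonneg (by linarith) (by linarith), by rw [div_le_one (by linarith)]; linarith, ?_⟩
    have e := hfe x hx
    have : (a + M • (b - a)) - (a + (-M) • (b - a)) = (2 * M) • (b - a) := by module
    rw [this, smul_smul, div_mul_cancel₀ _ (by linarith)]
    conv_lhs => rw [e]
    module

def CP (K : Set E) : Prop := IsCompact K ∧ Convex ℝ K ∧ FinSeg (frontier K)

lemma CP.cut {K : Set E} (h : CP K) {a b : E} (hab : a ≠ b) : CP (K ∩ {z | 0 ≤ side a b z}) := by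
  obtain ⟨h1, h2, h3⟩ := h
  have hc : IsClosed {z | 0 ≤ side a b z} := isClosed_le continuous_const (side_cont a b)
  refine ⟨h1.inter_right hc, h2.inter (half_convex a b 0), ?_⟩
  obtain ⟨p, q, _, hpq⟩ := line_seg (h1.inter_right (line_closed a b 0)) hab (fun z hz => hz.2)
  apply (h3.union (finSeg_segment p q)).mono
  intro x hx
  have hx' := frontier_inter_subset _ _ hx
  rcases hx' with ⟨hx1, _⟩ | ⟨hx1, hx2⟩
  · exact Or.inl hx1
  · right
    apply hpq
    refine ⟨by rwa [h1.isClosed.closure_eq] at hx1, ?_⟩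
    have := frontier_le_subset_eq continuous_const (side_cont a b) hx2
    exact this.symm

lemma CP.cut_le {K : Set E} (h : CP K) {a b : E} (hab : a ≠ b) (s : ℝ) : CP (K ∩ {z | side a b z ≤ s}) := by
  obtain ⟨a', b', h', e⟩ := side_shift hab s
  have := h.cut h'.symm
  convert this using 3
  ext z
  rw [side_swap a' b', e]
  constructor <;> intro <;> linarith

lemma closure_interior_of {K : Set E} (h : CP K) (hi : (interior K).Nonempty) : K = closure (interior K) := by
  rw [h.2.1.closure_interior_eq_closure_of_nonempty_interior hi, h.1.isClosed.closure_eq]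

/-- overlapping half discs -/
lemma overlap {C D : Set E} (hC : Convex ℝ C) (hD : Convex ℝ D) {a b p q : E} (hab : a ≠ b)
    (ha : a ∈ C) (hb : b ∈ C) (ha' : a ∈ D) (hb' : b ∈ D) (hp : p ∈ C) (hq : q ∈ D)
    (h1 : 0 < side a b p) (h2 : 0 < side a b q) : (interior C ∩ interior D).Nonempty := by
  have hm : a + (1/2 : ℝ) • (b - a) ∈ openSegment ℝ a b := openSeg_iff.2 ⟨_, by norm_num, by norm_num, rfl⟩
  have n1 := halfdisc hC ha hb hp h1 hm
  have n2 := halfdisc hD ha' hb' hq h2 hm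
  have hz : side b a (a + (1/2 : ℝ) • (b - a)) ≤ 0 := by
    rw [side_swap, mem_segment_side (openSegment_subset_segment _ _ _ hm)]; simp
  obtain ⟨z, hz1, hz2⟩ := exists_neg_near hab.symm hz (eventually_eventually_nhds.2 (n1.and n2))
  rw [side_swap] at hz2
  have hz3 : ∀ᶠ w in 𝓝 z, 0 < side a b w := (side_cont a b).continuousAt.eventually (lt_mem_nhds (by linarith))
  refine ⟨z, ?_, ?_⟩
  · rw [mem_interior_iff_mem_nhds]
    filter_upwards [hz1, hz3] with w h1 h2 using h1.1 h2.le
  · rw [mem_interior_iff_mem_nhds]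
    filter_upwards [hz1, hz3] with w h1 h2 using h1.2 h2.le

lemma exists_side_ne {C : Set E} (hC : (interior C).Nonempty) {a b : E} (hab : a ≠ b) : ∃ p ∈ C, side a b p ≠ 0 := by
  by_contra hh
  push Not at hh
  obtain ⟨x, hx⟩ := hC
  have := side_pos_of_interior hab (fun y hy => (hh y hy).ge) hx
  have h2 := hh x (interior_subset hx)
  linarith

lemma two_sided {C D : Set E} (hC : Convex ℝ C) (hD : Convex ℝ D) (iC : (interior C).Nonempty)
    (iD : (interior D).Nonempty) (hdis : Disjoint (interior C) (interior D)) {a b : E} (hab : a ≠ b)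
    (ha : a ∈ C) (hb : b ∈ C) (ha' : a ∈ D) (hb' : b ∈ D) :
    openSegment ℝ a b ⊆ interior (C ∪ D) := by
  have hno : ¬ (interior C ∩ interior D).Nonempty := by
    rw [Set.not_nonempty_iff_eq_empty]; exact hdis.inter_eq
  obtain ⟨p, hp, hp2⟩ := exists_side_ne iC hab
  obtain ⟨q, hq, hq2⟩ := exists_side_ne iD hab
  intro x hx
  have hx' : x ∈ openSegment ℝ b a := by rwa [openSegment_symm]
  rw [mem_interior_iff_mem_nhds]
  rcases lt_or_gt_of_ne hp2 with h1 | h1 <;> rcases lt_or_gt_of_ne hq2 with h2 | h2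
  · exact absurd (overlap hC hD hab.symm hb ha hb' ha' hp hq (by rw [side_swap]; linarith) (by rw [side_swap]; linarith)) hno
  · filter_upwards [halfdisc hC hb ha hp (by rw [side_swap]; linarith) hx', halfdisc hD ha' hb' hq h2 hx] with z k1 k2
    rcases le_total 0 (side a b z) with h | h
    · exact Or.inr (k2 h)
    · exact Or.inl (k1 (by rw [side_swap]; linarith))
  · filter_upwards [halfdisc hC ha hb hp h1 hx, halfdisc hD hb' ha' hq (by rw [side_swap]; linarith) hx'] with z k1 k2
    rcases le_total 0 (side a b z) with h | h
    · exact Or.inl (k1 h)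
    · exact Or.inr (k2 (by rw [side_swap]; linarith))
  · exact absurd (overlap hC hD hab ha hb ha' hb' hp hq h1 h2) hno

structure Step (P R Y : Set E) (a b : E) : Prop where
  sub : Y ⊆ P
  cp : CP Y
  int : (interior Y).Nonempty
  ne : a ≠ b
  ha : a ∈ Y
  hb : b ∈ Y
  pos : ∀ y ∈ Y, 0 ≤ side a b y
  inter : R ∩ Y ⊆ segment ℝ a b
  icvx : Convex ℝ (R ∩ Y)
  non : (R ∩ Y).Nonempty ∨ R = ∅
  free : ∀ x ∈ openSegment ℝ a b, ∀ᶠ z in 𝓝 x, z ∈ P → side a b z < 0 → z ∈ R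
  tight : ∃ T : Set E, T.Finite ∧ ∀ y ∈ frontier Y, y ∉ segment ℝ a b → y ∉ T → y ∈ interior P

structure Good (P R : Set E) : Prop where
  sub : R ⊆ P
  closed : IsClosed R
  ret : Ret R ∨ R = ∅
  reg : R = closure (interior R)
  fs : FinSeg (frontier R)
  sc : SimplyConnectedSpace (closure (P \ R))

lemma step_good {P R Y : Set E} {a b : E} (hG : Good P R) (hS : Step P R Y a b) : Good P (R ∪ Y) := by
  have cY := hS.cp.1.isClosed
  have hreg := closure_interior_of hS.cp hS.int
  have hint : ∀ x ∈ interior Y, x ∉ R := by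
    intro x hx hR
    have h1 := mem_segment_side (hS.inter ⟨hR, interior_subset hx⟩)
    have h2 := side_pos_of_interior hS.ne hS.pos hx
    linarith
  have hU : closure (P \ R) = closure (P \ (R ∪ Y)) ∪ Y := by
    apply Subset.antisymm
    · apply closure_minimal _ (isClosed_closure.union cY)
      intro x hx
      by_cases h : x ∈ Y
      · exact Or.inr h
      · exact Or.inl (subset_closure ⟨hx.1, fun h' => h'.elim hx.2 h⟩)
    · apply union_subset
      · exact closure_mono (sdiff_subset_sdiff_right subset_union_left)
      · rw [hreg]
        apply closure_mono
        exact fun x hx => ⟨hS.sub (interior_subset hx), hint x hx⟩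
  obtain ⟨hL1, hL2⟩ := lemL hS.cp.1 hS.cp.2.1 hS.int hS.ne hS.ha hS.hb hS.pos
  obtain ⟨o, ho⟩ := hS.int
  have hI : closure (P \ (R ∪ Y)) ∩ Y = frontier Y \ openSegment ℝ a b := by
    apply Subset.antisymm
    · rintro x ⟨hx1, hx2⟩
      refine ⟨⟨subset_closure hx2, ?_⟩, ?_⟩
      · intro hx
        obtain ⟨z, hz1, hz2⟩ := mem_closure_iff_nhds.1 hx1 _ (isOpen_interior.mem_nhds hx)
        exact hz2.2 (Or.inr (interior_subset hz1))
      · intro hx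
        have n1 := hS.free x hx
        have n2 := halfdisc hS.cp.2.1 hS.ha hS.hb (interior_subset ho)
          (side_pos_of_interior hS.ne hS.pos ho) hx
        obtain ⟨z, hz1, hz2⟩ := mem_closure_iff_nhds.1 hx1 _ (n1.and n2)
        rcases lt_or_ge (side a b z) 0 with h | h
        · exact hz2.2 (Or.inl (hz1.1 hz2.1 h))
        · exact hz2.2 (Or.inr (hz1.2 h))
    · apply subset_inter
      · obtain ⟨T, hT, hT2⟩ := hS.tight
        apply hL2 (T ∪ {a, b}) _ (hT.union (by simp)) isClosed_closure
        rintro y ⟨⟨hy1, hy2⟩, hy3⟩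
        have hseg : y ∉ segment ℝ a b := by
          intro h
          rw [← insert_endpoints_openSegment] at h
          rcases h with h | h | h
          · exact hy3 (by simp [h])
          · exact hy3 (by simp [h])
          · exact hy2 h
        have hy4 := hT2 y hy1 hseg (fun h => hy3 (Or.inl h))
        have hyY : y ∈ Y := by rw [← cY.closure_eq]; exact hy1.1
        have hyR : y ∉ R := fun h => hseg (hS.inter ⟨h, hyY⟩)
        rw [mem_closure_iff_nhds]
        intro U hU
        have hy5 : y ∈ closure Yᶜ := by rw [closure_compl]; exact hy1.2
        obtain ⟨z, hz1, hz2⟩ := mem_closure_iff_nhds.1 hy5 (U ∩ (interior P ∩ Rᶜ))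
          (Filter.inter_mem hU (Filter.inter_mem (isOpen_interior.mem_nhds hy4) (hG.closed.isOpen_compl.mem_nhds hyR)))
        exact ⟨z, hz1.1, interior_subset hz1.2.1, fun h => h.elim hz1.2.2 hz2⟩
      · intro x hx; rw [← cY.closure_eq]; exact hx.1.1
  refine ⟨union_subset hG.sub hS.sub, hG.closed.union cY, ?_, ?_, ?_, ?_⟩
  · left
    have hYr : Ret Y := ret_of_convex cY hS.cp.2.1 ⟨a, hS.ha⟩
    rcases hS.non with h | h
    · rcases hG.ret with h' | h'
      · exact ret_glue h' hYr (ret_of_convex (hG.closed.inter cY) hS.icvx h)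
      · rw [h']; simpa using hYr
    · rw [h]; simpa using hYr
  · apply Subset.antisymm
    · apply union_subset
      · conv_lhs => rw [hG.reg]
        exact closure_mono (interior_mono subset_union_left)
      · conv_lhs => rw [hreg]
        exact closure_mono (interior_mono subset_union_right)
    · exact closure_minimal interior_subset (hG.closed.union cY)
  · apply (hG.fs.union hS.cp.2.2).mono
    intro x hx
    rcases frontier_union_subset _ _ hx with h | h
    · exact Or.inl h.1
    · exact Or.inr h.2
  · apply sc_of_union isClosed_closure cY
    · rw [hI]; exact hL1
    · rw [← hU]; exact hG.sc

inductive Chain (P : Set E) : Set E → Prop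
  | nil : Chain P ∅
  | step {R Y : Set E} {a b : E} : Chain P R → Step P R Y a b → Chain P (R ∪ Y)

lemma Chain.good {P R : Set E} (hP : IsSimplePolygon P) (h : Chain P R) : Good P R := by
  induction h with
  | nil =>
    refine ⟨empty_subset _, isClosed_empty, Or.inr rfl, by simp, ⟨∅, by simp⟩, ?_⟩
    rw [sdiff_empty, hP.1.1.isClosed.closure_eq]
    exact hP.2
  | step _ hS ih => exact step_good ih hS

lemma step_slice {P R Y : Set E} {a b : E} (hS : Step P R Y a b) {s : ℝ} (hs : 0 < s) :
    Step P R (Y ∩ {z | side a b z ≤ s}) a b := by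
  obtain ⟨o, ho⟩ := hS.int
  have hD := side_pos_of_interior hS.ne hS.pos ho
  have e0 : R ∩ (Y ∩ {z | side a b z ≤ s}) = R ∩ Y := by
    apply Subset.antisymm
    · exact fun x hx => ⟨hx.1, hx.2.1⟩
    · intro x hx
      refine ⟨hx.1, hx.2, ?_⟩
      have := mem_segment_side (hS.inter hx)
      simp only [mem_ofPred_eq]; linarith
  refine ⟨inter_subset_left.trans hS.sub, hS.cp.cut_le hS.ne s, ?_, hS.ne, ⟨hS.ha, ?_⟩, ⟨hS.hb, ?_⟩,
    fun y hy => hS.pos y hy.1, ?_, ?_, ?_, hS.free, ?_⟩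
  · set t := min (1/2) (s / (2 * side a b o)) with ht
    have t0 : 0 < t := lt_min (by norm_num) (by positivity)
    have t1 : t < 1 := lt_of_le_of_lt (min_le_left _ _) (by norm_num)
    have t2 : t * side a b o < s := by
      have := min_le_right (1/2) (s / (2 * side a b o))
      rw [← ht, le_div_iff₀ (by positivity)] at this
      linarith
    refine ⟨(1 - t) • a + t • o, ?_⟩
    have h1 : (1 - t) • a + t • o ∈ interior Y :=
      hS.cp.2.1.combo_self_interior_mem_interior hS.ha ho (by linarith) t0 (by ring)
    have h2 : side a b ((1 - t) • a + t • o) < s := by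
      rw [side_comb _ _ _ _ _ _ (by ring), side_left]; linarith
    rw [mem_interior_iff_mem_nhds]
    filter_upwards [mem_interior_iff_mem_nhds.1 h1, (side_cont a b).continuousAt.eventually (gt_mem_nhds h2)] with z k1 k2
    exact ⟨k1, k2.le⟩
  · simp only [mem_ofPred_eq, side_left]; exact hs.le
  · simp only [mem_ofPred_eq, side_right]; exact hs.le
  · rw [e0]; exact hS.inter
  · rw [e0]; exact hS.icvx
  · rw [e0]; exact hS.non
  · obtain ⟨T, hT, hT2⟩ := hS.tight
    refine ⟨T, hT, fun y hy h1 h2 => ?_⟩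
    by_cases hf : y ∈ interior Y
    · exact interior_mono hS.sub hf
    · exact hT2 y ⟨closure_mono inter_subset_left hy.1, hf⟩ h1 h2

lemma chain_ivt {P R : Set E} (hP : IsSimplePolygon P) (h : Chain P R) (v : ENNReal) (hv : 0 < v)
    (hvR : v ≤ volume R) : ∃ R', Good P R' ∧ volume R' = v := by
  induction h with
  | nil => simp at hvR; exact absurd hvR hv.ne'
  | @step R Y a b hC hS ih =>
    rcases le_or_gt v (volume R) with h | h
    · exact ih h
    have hG := hC.good hP
    have cY := hS.cp.1
    set A : ℝ → Set E := fun s => R ∪ (Y ∩ {z | side a b z ≤ s}) with hA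
    obtain ⟨S, hS1⟩ := (cY.image (side_cont a b)).isBounded.exists_pos_norm_lt
    have hAS : A S = R ∪ Y := by
      simp only [hA]; congr 1
      refine inter_eq_left.2 fun y hy => ?_
      have := hS1.2 _ ⟨y, hy, rfl⟩
      exact (le_abs_self _).trans this.le
    have hA0 : volume (A 0) ≤ volume R := by
      refine (measure_union_le _ _).trans ?_
      have : volume (Y ∩ {z | side a b z ≤ 0}) = 0 :=
        measure_mono_null (fun z hz => le_antisymm hz.2 (hS.pos z hz.1)) (line_null hS.ne 0)
      rw [this, add_zero]
    have hcl : ∀ s, IsClosed (A s) := fun s =>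
      hG.closed.union (cY.isClosed.inter (isClosed_le (side_cont a b) continuous_const))
    have hcont : Continuous fun s => volume (A s) := by
      rw [continuous_iff_continuousAt]
      intro s
      refine tendsto_measure_of_ae_tendsto_indicator (𝓝 s) (hcl s).measurableSet
        (fun t => (hcl t).measurableSet) (B := P) hP.1.1.isClosed.measurableSet hP.1.1.measure_lt_top.ne ?_ ?_
      · exact Eventually.of_forall fun t => union_subset hG.sub (inter_subset_left.trans hS.sub)
      · have hn := line_null hS.ne s
        filter_upwards [compl_mem_ae_iff.2 hn] with x hx
        have hx : side a b x ≠ s := hx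
        simp only [hA, mem_union, mem_inter_iff, mem_ofPred_eq]
        rcases lt_or_gt_of_ne hx with h | h
        · filter_upwards [lt_mem_nhds h] with t ht
          simp [h.le, ht.le]
        · filter_upwards [gt_mem_nhds h] with t ht
          simp [not_le.2 h, not_le.2 ht]
    have hivt := intermediate_value_Icc hS1.1.le hcont.continuousOn
    obtain ⟨s, hs, hs2⟩ := hivt (show v ∈ Icc _ _ from ⟨hA0.trans h.le, by rw [hAS]; exact hvR⟩)
    have hs0 : 0 < s := by
      rcases eq_or_lt_of_le hs.1 with h' | h'
      · rw [← h'] at hs2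
        have : v ≤ volume R := by rw [← hs2]; exact hA0
        exact absurd this (not_le.2 h)
      · exact h'
    exact ⟨A s, step_good hG (step_slice hS hs0), hs2⟩

end PP

namespace PP
set_option linter.unusedSectionVars false
set_option linter.unusedSimpArgs false
open Set Filter Topology

structure Cells (P : Set E) {ι : Type} (C : ι → Set E) : Prop where
  cp : ∀ i, CP (C i)
  int : ∀ i, (interior (C i)).Nonempty
  dis : ∀ i j, i ≠ j → Disjoint (interior (C i)) (interior (C j))
  union : (⋃ i, C i) = P
  conic : ∀ i (v : E), ∃ δ > 0, ∀ x ∈ C i, dist x v < δ → ∀ t : ℝ, 0 ≤ t →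
    dist (v + t • (x - v)) v < δ → v + t • (x - v) ∈ C i

def WW {κ : Type} (g : κ → E × E) : Set E := {z | ∀ k, 0 ≤ side (g k).1 (g k).2 z}
def OO {κ : Type} (g : κ → E × E) : Set E := {z | ∀ k, 0 < side (g k).1 (g k).2 z}

section
variable {κ : Type} [Finite κ] (g : κ → E × E)

lemma WW_closed : IsClosed (WW g) := by
  have : WW g = ⋂ k, {z | 0 ≤ side (g k).1 (g k).2 z} := by ext; simp [WW]
  rw [this]
  exact isClosed_iInter fun k => isClosed_le continuous_const (side_cont _ _)

lemma OO_open : IsOpen (OO g) := by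
  have : OO g = ⋂ k, {z | 0 < side (g k).1 (g k).2 z} := by ext; simp [OO]
  rw [this]
  exact isOpen_iInter_of_finite fun k => isOpen_lt continuous_const (side_cont _ _)

lemma OO_sub : OO g ⊆ WW g := fun _ hz k => (hz k).le

lemma WW_convex : Convex ℝ (WW g) := by
  have : WW g = ⋂ k, {z | 0 ≤ side (g k).1 (g k).2 z} := by ext; simp [WW]
  rw [this]
  exact convex_iInter fun k => half_convex _ _ 0

lemma OO_convex : Convex ℝ (OO g) := by
  intro x hx y hy s t hs ht hst k
  rw [side_comb _ _ _ _ _ _ hst]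
  have h1 := hx k
  have h2 := hy k
  rcases eq_or_lt_of_le hs with h | h
  · have : t = 1 := by linarith
    rw [← h, this]; linarith
  · have := mul_pos h h1
    have := mul_nonneg ht h2.le
    linarith

lemma WW_sub_closure (h : (OO g).Nonempty) : WW g ⊆ closure (OO g) := by
  obtain ⟨o, ho⟩ := h
  intro x hx
  have h1 : Tendsto (fun t : ℝ => x + t • (o - x)) (𝓝[>] 0) (𝓝 x) :=
    (tendsto_line x (o - x)).mono_left nhdsWithin_le_nhds
  refine mem_closure_of_tendsto h1 ?_
  filter_upwards [Ioo_mem_nhdsGT (show (0:ℝ) < 1 by norm_num)] with t ht k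
  have e : x + t • (o - x) = (1 - t) • x + t • o := by module
  rw [e, side_comb _ _ _ _ _ _ (by ring)]
  have := mul_pos ht.1 (ho k)
  have := mul_nonneg (show 0 ≤ 1 - t by linarith [ht.2]) (hx k)
  linarith

lemma WW_int (hg : ∀ k, (g k).1 ≠ (g k).2) : interior (WW g) ⊆ OO g :=
  fun _ hx k => side_pos_of_interior (Y := WW g) (hg k) (fun _ hy => hy k) hx

lemma WW_conic (v : E) : ∃ δ > 0, ∀ x ∈ WW g, dist x v < δ → ∀ t : ℝ, 0 ≤ t →
    dist (v + t • (x - v)) v < δ → v + t • (x - v) ∈ WW g := by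
  have h1 : ∀ k, ∀ᶠ z in 𝓝 v, side (g k).1 (g k).2 v ≠ 0 → side (g k).1 (g k).2 v * side (g k).1 (g k).2 z > 0 := by
    intro k
    by_cases h : side (g k).1 (g k).2 v = 0
    · simp [h]
    · have : Continuous fun z => side (g k).1 (g k).2 v * side (g k).1 (g k).2 z := by fun_prop
      filter_upwards [this.continuousAt.eventually (lt_mem_nhds (mul_self_pos.2 h))] with z hz _ using hz
  obtain ⟨δ, hδ, h2⟩ := Metric.eventually_nhds_iff.1 (eventually_all.2 h1)
  refine ⟨δ, hδ, fun x hx hxd t ht htd k => ?_⟩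
  by_cases h : side (g k).1 (g k).2 v = 0
  · have e : v + t • (x - v) = (1 - t) • v + t • x := by module
    rw [e, side_comb _ _ _ _ _ _ (by ring), h]
    have := mul_nonneg ht (hx k)
    linarith
  · have a1 := h2 hxd k h
    have a2 := h2 htd k h
    have a3 := hx k
    have a4 : 0 < side (g k).1 (g k).2 v := by
      by_contra hh
      push Not at hh
      nlinarith
    exact (pos_of_mul_pos_right a2 a4.le).le
end

lemma finSeg_iUnion {κ : Type} [Finite κ] {S : κ → Set E} (h : ∀ k, FinSeg (S k)) : FinSeg (⋃ k, S k) := by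
  classical
  have := Fintype.ofFinite κ
  choose F hF using h
  refine ⟨Finset.univ.biUnion F, ?_⟩
  intro x hx
  obtain ⟨k, hk⟩ := mem_iUnion.1 hx
  have := hF k hk
  simp only [mem_iUnion, Finset.mem_biUnion] at this ⊢
  obtain ⟨e, he, h⟩ := this
  exact ⟨e, ⟨k, Finset.mem_univ _, he⟩, h⟩

lemma cells_exist {P : Set E} (hP : IsPolygonalRegion P) :
    ∃ (ι : Type) (_ : Finite ι) (C : ι → Set E), Cells P C := by
  classical
  obtain ⟨hc, hreg, F, hF⟩ := hP
  -- lines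
  let ln : F → E × E := fun e => if (e : E × E).1 = (e : E × E).2 then (e.1.1, e.1.1 + !₂[1, 0]) else e.1
  have lnne : ∀ e, (ln e).1 ≠ (ln e).2 := by
    intro e
    simp only [ln]
    split_ifs with h
    · intro h2
      have := congrArg (fun z : E => z 0) h2
      simp at this
    · exact h
  have hF2 : frontier P ⊆ ⋃ e, {z | side (ln e).1 (ln e).2 z = 0} := by
    intro x hx
    have := hF hx
    simp only [mem_iUnion] at this ⊢
    obtain ⟨e, he, h⟩ := this
    refine ⟨⟨e, he⟩, ?_⟩
    simp only [ln, mem_ofPred_eq]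
    split_ifs with h'
    · rw [← h', segment_same] at h
      rw [mem_singleton_iff.1 h]; exact side_left _ _
    · exact mem_segment_side h
  let G : (F → Bool) → F → E × E := fun σ e => if σ e then ln e else (ln e).swap
  have Gne : ∀ σ e, (G σ e).1 ≠ (G σ e).2 := by
    intro σ e; simp only [G]; split_ifs
    · exact lnne e
    · exact (lnne e).symm
  have Gz : ∀ σ e z, side (ln e).1 (ln e).2 z = 0 → side (G σ e).1 (G σ e).2 z = 0 := by
    intro σ e z h; simp only [G]; split_ifs
    · exact h
    · simp only [Prod.fst_swap, Prod.snd_swap]; rw [side_swap, h, neg_zero]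
  let ι := {σ : F → Bool // (OO (G σ) ∩ interior P).Nonempty}
  have hOP : ∀ σ : ι, OO (G σ.1) ⊆ interior P := by
    rintro ⟨σ, hσ⟩
    have hpre : IsPreconnected (OO (G σ)) := (OO_convex _).isPreconnected
    refine hpre.subset_left_of_subset_union isOpen_interior hc.isClosed.isOpen_compl ?_ ?_ hσ
    · exact disjoint_compl_right.mono_left interior_subset
    · intro x hx
      by_cases hxP : x ∈ P
      · left
        by_contra hi
        have hf : x ∈ frontier P := ⟨subset_closure hxP, hi⟩
        obtain ⟨e, he⟩ := mem_iUnion.1 (hF2 hf)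
        have := Gz σ e x he
        have := hx e
        linarith
      · exact Or.inr hxP
  have hWP : ∀ σ : ι, WW (G σ.1) ⊆ P := by
    intro σ
    refine (WW_sub_closure _ (σ.2.mono inter_subset_left)).trans ?_
    exact closure_minimal ((hOP σ).trans interior_subset) hc.isClosed
  have hcpt : ∀ σ : ι, IsCompact (WW (G σ.1)) := fun σ => hc.of_isClosed_subset (WW_closed _) (hWP σ)
  refine ⟨ι, inferInstance, fun σ => WW (G σ.1), ?_, ?_, ?_, ?_, ?_⟩
  · intro σ
    refine ⟨hcpt σ, WW_convex _, ?_⟩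
    have h1 : ∀ e, FinSeg (WW (G σ.1) ∩ {z | side (G σ.1 e).1 (G σ.1 e).2 z = 0}) := by
      intro e
      obtain ⟨p, q, _, h⟩ := line_seg ((hcpt σ).inter_right (line_closed (G σ.1 e).1 (G σ.1 e).2 0)) (Gne σ.1 e) (fun z hz => hz.2)
      exact (finSeg_segment p q).mono h
    apply (finSeg_iUnion h1).mono
    intro x hx
    have hxW : x ∈ WW (G σ.1) := by rw [← (WW_closed (G σ.1)).closure_eq]; exact hx.1
    have hxO : x ∉ OO (G σ.1) := fun h => hx.2 (interior_maximal (OO_sub _) (OO_open _) h)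
    simp only [OO, mem_ofPred_eq, not_forall, not_lt] at hxO
    obtain ⟨e, he⟩ := hxO
    exact mem_iUnion.2 ⟨e, hxW, le_antisymm he (hxW e)⟩
  · intro σ
    obtain ⟨z, hz⟩ := σ.2
    exact ⟨z, interior_maximal (OO_sub _) (OO_open _) hz.1⟩
  · rintro ⟨σ, hσ⟩ ⟨τ, hτ⟩ hne
    have : σ ≠ τ := fun h => hne (Subtype.ext h)
    obtain ⟨e, he⟩ := Function.ne_iff.1 this
    rw [Set.disjoint_left]
    intro x hx hx'
    have h1 := WW_int _ (Gne σ) hx e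
    have h2 := WW_int _ (Gne τ) hx' e
    simp only [G] at h1 h2
    cases hs : σ e <;> cases ht : τ e <;> simp only [hs, ht] at he h1 h2
    · exact he rfl
    · simp only [Prod.fst_swap, Prod.snd_swap, if_true] at h1 h2
      simp at h1 h2
      rw [side_swap] at h1; linarith
    · simp at h1 h2
      rw [side_swap] at h2; linarith
    · exact he rfl
  · apply Subset.antisymm (iUnion_subset hWP)
    have hcl : IsClosed (⋃ σ : ι, WW (G σ.1)) := isClosed_iUnion_of_finite fun σ => WW_closed _
    refine hreg.le.trans (closure_minimal ?_ hcl)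
    intro x hx
    rw [← hcl.closure_eq, mem_closure_iff_nhds]
    intro U hU
    have hU2 : U ∩ interior P ∈ 𝓝 x := inter_mem hU (isOpen_interior.mem_nhds hx)
    have hnull : volume (⋃ e, {z | side (ln e).1 (ln e).2 z = 0}) = 0 :=
      measure_iUnion_null fun e => line_null (lnne e) 0
    have hpos : 0 < volume (U ∩ interior P) := Measure.measure_pos_of_mem_nhds _ hU2
    obtain ⟨z, hz, hz2⟩ : ∃ z ∈ U ∩ interior P, z ∉ ⋃ e, {z | side (ln e).1 (ln e).2 z = 0} := by
      by_contra hh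
      push Not at hh
      exact hpos.ne' (measure_mono_null hh hnull)
    simp only [mem_iUnion, mem_ofPred_eq, not_exists] at hz2
    have hzO : z ∈ OO (G (fun e => decide (0 < side (ln e).1 (ln e).2 z))) := by
      intro e
      simp only [G]
      by_cases h : 0 < side (ln e).1 (ln e).2 z
      · simp [h]
      · simp only [h, decide_false]
        have := lt_of_le_of_ne (not_lt.1 h) (hz2 e)
        simp only [Bool.false_eq_true, if_false, Prod.fst_swap, Prod.snd_swap]
        rw [side_swap]; linarith
    exact ⟨z, hz.1, mem_iUnion.2 ⟨⟨_, z, hzO, hz.2⟩, OO_sub _ hzO⟩⟩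
  · intro σ v; exact WW_conic _ v

end PP

namespace PP
open Set Filter Topology

structure Frame (C : Set E) (o p q : E) : Prop where
  cp : CP C
  ho : o ∈ interior C
  hp : p ∈ C
  hq : q ∈ C
  ne : p ≠ q
  pos : ∀ x ∈ C, 0 ≤ side p q x

def sc (o : E) (l : ℝ) (x : E) : E := o + l • (x - o)
def Sc (o : E) (l : ℝ) (C : Set E) : Set E := sc o l '' C

def Quad (o p q : E) (l k1 k2 : ℝ) : Set E :=
  {x | 0 ≤ side q o x ∧ 0 ≤ side o p x ∧ l * side o p q ≤ side q o x + side o p x ∧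
    k1 * side q o x + k2 * side o p x ≤ side o p q}

lemma side_sc_sc (o p q x : E) (l : ℝ) : side (sc o l p) (sc o l q) (sc o l x) = l ^ 2 * side p q x := by
  simp [side, sc]; ring

lemma side_sc (o p q x : E) (l : ℝ) :
    side (sc o l p) (sc o l q) x = l * (l * side o p q - (side q o x + side o p x)) := by
  simp [side, sc]; ring

lemma sc_inj (o : E) {l : ℝ} (hl : l ≠ 0) : Function.Injective (sc o l) := by
  intro x y h
  have h1 := add_left_cancel h
  have h2 := smul_right_injective E hl h1
  exact sub_left_injective h2

lemma sc_cont (o : E) (l : ℝ) : Continuous (sc o l) := by unfold sc; fun_prop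

lemma sc_segment (o p q : E) (l : ℝ) : sc o l '' segment ℝ p q = segment ℝ (sc o l p) (sc o l q) := by
  rw [segment_eq_image', segment_eq_image', image_image]
  congr 1
  ext1 t
  simp only [sc]; module

lemma sc_self (o : E) (l : ℝ) : sc o l o = o := by simp [sc]

lemma sc_convex {C : Set E} (hC : Convex ℝ C) (o : E) (l : ℝ) : Convex ℝ (Sc o l C) := by
  have : Sc o l C = AffineMap.homothety o l '' C := by
    unfold Sc; congr 1; ext1 x; simp [sc, AffineMap.homothety_apply, add_comm]
  rw [this]; exact hC.affine_image _

noncomputable def scHomeo (o : E) (l : ℝ) (hl : l ≠ 0) : E ≃ₜ E where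
  toFun := sc o l
  invFun := sc o l⁻¹
  left_inv x := by simp [sc, smul_smul, inv_mul_cancel₀ hl]
  right_inv x := by simp [sc, smul_smul, mul_inv_cancel₀ hl]
  continuous_toFun := sc_cont o l
  continuous_invFun := sc_cont o l⁻¹

lemma sc_cp {C : Set E} (hC : CP C) (o : E) {l : ℝ} (hl : l ≠ 0) : CP (Sc o l C) := by
  refine ⟨hC.1.image (sc_cont o l), sc_convex hC.2.1 o l, ?_⟩
  classical
  obtain ⟨F, hF⟩ := hC.2.2
  refine ⟨F.image (fun e => (sc o l e.1, sc o l e.2)), ?_⟩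
  have h1 : frontier (Sc o l C) = sc o l '' frontier C := ((scHomeo o l hl).image_frontier C).symm
  rw [h1]
  rintro _ ⟨x, hx, rfl⟩
  have := hF hx
  simp only [mem_iUnion] at this ⊢
  obtain ⟨e, he, h⟩ := this
  refine ⟨(sc o l e.1, sc o l e.2), Finset.mem_image_of_mem _ he, ?_⟩
  rw [← sc_segment]; exact ⟨x, h, rfl⟩

lemma sc_interior {C : Set E} (o : E) {l : ℝ} (hl : l ≠ 0) : sc o l '' interior C = interior (Sc o l C) :=
  (scHomeo o l hl).image_interior C

lemma Sc_sub {C : Set E} (hC : Convex ℝ C) {o : E} (ho : o ∈ interior C) {l : ℝ} (h0 : 0 < l) (h1 : l < 1) :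
    Sc o l C ⊆ interior C := by
  rintro _ ⟨x, hx, rfl⟩
  have e : sc o l x = (1 - l) • o + l • x := by simp only [sc]; module
  rw [e]
  exact hC.combo_interior_self_mem_interior ho hx (by linarith) h0.le (by ring)

namespace Frame
variable {C : Set E} {o p q : E} {l k1 k2 : ℝ}

lemma D (f : Frame C o p q) : 0 < side o p q := by
  rw [← side_cyc o p q]; exact side_pos_of_interior f.ne f.pos f.ho

lemma ray (f : Frame C o p q) {x : E} (h1 : 0 ≤ side q o x) (h2 : 0 ≤ side o p x)
    (h3 : 0 < side q o x + side o p x) :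
    ∃ y ∈ segment ℝ p q, x = sc o ((side q o x + side o p x) / side o p q) y := by
  have hD := f.D
  have e := bary (o := o) (p := p) (q := q) hD.ne' x
  refine ⟨p + (side o p x / (side q o x + side o p x)) • (q - p), ?_, ?_⟩
  · rw [seg_iff]
    exact ⟨_, div_nonneg h2 h3.le, by rw [div_le_one h3]; linarith, rfl⟩
  · conv_lhs => rw [e]
    simp only [sc]
    have hne := h3.ne'
    have e2 : ((side q o x + side o p x) / side o p q) * (side o p x / (side q o x + side o p x)) = side o p x / side o p q := by
      field_simp
    have e3 : p + (side o p x / (side q o x + side o p x)) • (q - p) - o =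
      (p - o) + (side o p x / (side q o x + side o p x)) • (q - p) := by module
    rw [e3, smul_add, smul_smul, e2]
    have e4 : (side q o x + side o p x) / side o p q = side q o x / side o p q + side o p x / side o p q := by ring
    rw [e4]
    generalize side q o x / side o p q = a
    generalize side o p x / side o p q = b
    module

lemma seg_sub (f : Frame C o p q) : segment ℝ p q ⊆ C := f.cp.2.1.segment_subset f.hp f.hq

lemma seg_fr (f : Frame C o p q) : segment ℝ p q ⊆ frontier C := fun _ hx =>
  seg_frontier f.ne f.pos (f.seg_sub hx) (mem_segment_side hx)

lemma edge (f : Frame C o p q) {x : E} (h1 : 0 ≤ side q o x) (h2 : 0 ≤ side o p x)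
    (h3 : side q o x + side o p x = side o p q) : x ∈ segment ℝ p q := by
  obtain ⟨y, hy, e⟩ := f.ray h1 h2 (h3 ▸ f.D)
  rw [h3, div_self f.D.ne'] at e
  rw [e]; simpa [sc] using hy

lemma intr (f : Frame C o p q) {x : E} (h1 : 0 ≤ side q o x) (h2 : 0 ≤ side o p x)
    (h4 : side q o x + side o p x < side o p q) : x ∈ interior C := by
  have hD := f.D
  rcases eq_or_lt_of_le (add_nonneg h1 h2) with h3 | h3
  · have e := bary (o := o) (p := p) (q := q) hD.ne' x
    have a1 : side q o x = 0 := by linarith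
    have a2 : side o p x = 0 := by linarith
    rw [a1, a2] at e
    rw [e]; simpa using f.ho
  · obtain ⟨y, hy, e⟩ := f.ray h1 h2 h3
    rw [e]
    exact Sc_sub f.cp.2.1 f.ho (div_pos h3 hD) (by rw [div_lt_one hD]; exact h4) ⟨y, f.seg_sub hy, rfl⟩

lemma quad_cases (f : Frame C o p q) (hk1 : 1 ≤ k1) (hk2 : 1 ≤ k2) {x : E}
    (hx : x ∈ Quad o p q l k1 k2) : x ∈ interior C ∨ x ∈ segment ℝ p q := by
  obtain ⟨h1, h2, h3, h4⟩ := hx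
  have h5 : side q o x + side o p x ≤ side o p q := by nlinarith
  rcases eq_or_lt_of_le h5 with h | h
  · exact Or.inr (f.edge h1 h2 h)
  · exact Or.inl (f.intr h1 h2 h)

lemma quad_sub (f : Frame C o p q) (hk1 : 1 ≤ k1) (hk2 : 1 ≤ k2) : Quad o p q l k1 k2 ⊆ C := by
  intro x hx
  rcases f.quad_cases hk1 hk2 hx with h | h
  · exact interior_subset h
  · exact f.seg_sub h

lemma quad_cone (f : Frame C o p q) (hl : 0 < l) (hk1 : 1 ≤ k1) (hk2 : 1 ≤ k2) {x : E}
    (hx : x ∈ Quad o p q l k1 k2) : ∃ s ∈ segment ℝ p q, x ∈ segment ℝ o s := by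
  obtain ⟨h1, h2, h3, h4⟩ := hx
  have hD := f.D
  have h5 : side q o x + side o p x ≤ side o p q := by nlinarith
  have h6 : 0 < side q o x + side o p x := lt_of_lt_of_le (mul_pos hl hD) h3
  obtain ⟨y, hy, e⟩ := f.ray h1 h2 h6
  refine ⟨y, hy, ?_⟩
  rw [seg_iff]
  exact ⟨_, (div_pos h6 hD).le, by rw [div_le_one hD]; exact h5, e⟩

lemma op (f : Frame C o p q) : o ≠ p := by
  rintro rfl; have := f.D; simp [side_left, side] at this
lemma oq (f : Frame C o p q) : q ≠ o := by
  rintro rfl; have := f.D; rw [side_left] at this; exact lt_irrefl _ this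

lemma quad_cp (f : Frame C o p q) (hl : 0 < l) (hk1 : 1 ≤ k1) (hk2 : 1 ≤ k2) : CP (Quad o p q l k1 k2) := by
  have hD := f.D
  have n1 : sc o l q ≠ sc o l p := fun h => f.ne (sc_inj o hl.ne' h).symm
  set p' := sc o k1⁻¹ p
  set q' := sc o k2⁻¹ q
  have k10 : 0 < k1 := by linarith
  have k20 : 0 < k2 := by linarith
  have e : ∀ x, side p' q' x = k1⁻¹ * k2⁻¹ * (side o p q - (k1 * side q o x + k2 * side o p x)) := by
    intro x
    simp only [p', q', sc, side]
    simp
    field_simp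
    ring
  have n2 : p' ≠ q' := by
    intro h
    have := e o
    rw [h] at this
    have h1 : side q o o = 0 := side_right _ _
    have h2 : side o p o = 0 := side_left _ _
    have h3 : side q' q' o = 0 := by simp [side]
    rw [h1, h2, h3] at this
    have : 0 < k1⁻¹ * k2⁻¹ * (side o p q - (k1 * 0 + k2 * 0)) := by simp; positivity
    linarith
  have key := (((f.cp.cut f.oq).cut f.op).cut n1).cut n2
  convert key using 1
  ext x
  simp only [mem_inter_iff, mem_ofPred_eq, e, side_swap (sc o l p) (sc o l q), side_sc]
  have hpos : 0 < k1⁻¹ * k2⁻¹ := by positivity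
  constructor
  · intro hx
    refine ⟨⟨⟨⟨f.quad_sub hk1 hk2 hx, hx.1⟩, hx.2.1⟩, ?_⟩, mul_nonneg hpos.le (by linarith [hx.2.2.2])⟩
    have := mul_nonneg hl.le (sub_nonneg.2 hx.2.2.1)
    linarith
  · rintro ⟨⟨⟨⟨h0, h1⟩, h2⟩, h3⟩, h4⟩
    refine ⟨h1, h2, ?_, ?_⟩
    · by_contra hh
      push Not at hh
      have := mul_pos hl (sub_pos.2 hh)
      linarith
    · have := (mul_nonneg_iff_of_pos_left hpos).1 h4
      linarith

lemma quad_int (f : Frame C o p q) (hl : 0 < l) (hl1 : l < 1) (hk1 : 1 ≤ k1) (hk2 : 1 ≤ k2) (hk : k1 = 1 ∨ k2 = 1) :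
    (interior (Quad o p q l k1 k2)).Nonempty := by
  have hD := f.D
  have key : ∃ α β : ℝ, 0 < α ∧ 0 < β ∧ l < α + β ∧ k1 * α + k2 * β < 1 := by
    rcases hk with rfl | rfl
    · refine ⟨(1 + l) / 2, (1 - l) / (4 * k2), by linarith, div_pos (by linarith) (by linarith), ?_, ?_⟩
      · have : 0 < (1 - l) / (4 * k2) := div_pos (by linarith) (by linarith)
        linarith
      · have : k2 * ((1 - l) / (4 * k2)) = (1 - l) / 4 := by field_simp
        rw [this]; linarith
    · refine ⟨(1 - l) / (4 * k1), (1 + l) / 2, div_pos (by linarith) (by linarith), by linarith, ?_, ?_⟩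
      · have : 0 < (1 - l) / (4 * k1) := div_pos (by linarith) (by linarith)
        linarith
      · have : k1 * ((1 - l) / (4 * k1)) = (1 - l) / 4 := by field_simp
        rw [this]; linarith
  obtain ⟨α, β, ha, hb, h1, h2⟩ := key
  refine ⟨o + α • (p - o) + β • (q - o), ?_⟩
  rw [mem_interior_iff_mem_nhds]
  have c1 := (side_cont q o).continuousAt (x := o + α • (p - o) + β • (q - o))
  have c2 := (side_cont o p).continuousAt (x := o + α • (p - o) + β • (q - o))
  have c3 : Continuous fun x => side q o x + side o p x := by fun_prop
  have c4 : Continuous fun x => k1 * side q o x + k2 * side o p x := by fun_prop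
  have e1 := c1.eventually (lt_mem_nhds (show 0 < _ by rw [bary_a]; positivity))
  have e2 := c2.eventually (lt_mem_nhds (show 0 < _ by rw [bary_b]; positivity))
  have e3 := (c3.continuousAt (x := o + α • (p - o) + β • (q - o))).eventually
    (lt_mem_nhds (show l * side o p q < _ by beta_reduce; rw [bary_a, bary_b]; nlinarith))
  have e4 := (c4.continuousAt (x := o + α • (p - o) + β • (q - o))).eventually
    (gt_mem_nhds (show _ < side o p q by beta_reduce; rw [bary_a, bary_b]; nlinarith))
  filter_upwards [e1, e2, e3, e4] with z h1 h2 h3 h4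
  exact ⟨h1.le, h2.le, h3.le, h4.le⟩

lemma seg_coord (f : Frame C o p q) {y : E} (hy : y ∈ segment ℝ p q) :
    0 ≤ side q o y ∧ 0 ≤ side o p y ∧ side q o y + side o p y = side o p q := by
  have hD := f.D
  have h1 := mem_segment_side hy
  obtain ⟨t, t0, t1, rfl⟩ := seg_iff.1 hy
  have e : p + t • (q - p) = o + (1 - t) • (p - o) + t • (q - o) := by module
  rw [e, bary_a, bary_b]
  exact ⟨mul_nonneg (by linarith) hD.le, mul_nonneg t0 hD.le, by ring⟩

lemma scoord (o p q y : E) (l : ℝ) : side q o (sc o l y) = l * side q o y ∧ side o p (sc o l y) = l * side o p y := by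
  constructor <;> (simp [side, sc]; ring)

lemma ssub (f : Frame C o p q) (hl : 0 < l) (hk1 : k1 * l ≤ 1) (hk2 : k2 * l ≤ 1) :
    segment ℝ (sc o l p) (sc o l q) ⊆ Quad o p q l k1 k2 := by
  have hD := f.D
  rw [← sc_segment]
  rintro _ ⟨y, hy, rfl⟩
  obtain ⟨h1, h2, h3⟩ := f.seg_coord hy
  obtain ⟨e1, e2⟩ := scoord o p q y l
  refine ⟨?_, ?_, ?_, ?_⟩
  · rw [e1]; positivity
  · rw [e2]; positivity
  · rw [e1, e2, ← mul_add, h3]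
  · rw [e1, e2]; nlinarith

/-- the outer segment is in the full quad -/
lemma osub (f : Frame C o p q) (hl1 : l < 1) : segment ℝ p q ⊆ Quad o p q l 1 1 := by
  have hD := f.D
  intro y hy
  obtain ⟨h1, h2, h3⟩ := f.seg_coord hy
  refine ⟨h1, h2, by rw [h3]; nlinarith, by linarith⟩

lemma qinter (f : Frame C o p q) (hl : 0 < l) : Quad o p q l k1 k2 ∩ Sc o l C ⊆ segment ℝ (sc o l p) (sc o l q) := by
  have hD := f.D
  rintro x ⟨⟨h1, h2, h3, h4⟩, y, hy, rfl⟩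
  have h5 : 0 ≤ side (sc o l p) (sc o l q) (sc o l y) := by
    rw [side_sc_sc]; exact mul_nonneg (sq_nonneg _) (f.pos y hy)
  rw [side_sc] at h5
  have h6 : side q o (sc o l y) + side o p (sc o l y) = l * side o p q := by
    refine le_antisymm ?_ h3
    have := (mul_nonneg_iff_of_pos_left hl).1 h5
    linarith
  obtain ⟨z, hz, e⟩ := f.ray h1 h2 (by rw [h6]; positivity)
  rw [h6, mul_div_assoc, div_self hD.ne', mul_one] at e
  rw [e, ← sc_segment]
  exact ⟨z, hz, rfl⟩

lemma sfree (f : Frame C o p q) (hl : 0 < l) {x : E} (hx : x ∈ openSegment ℝ (sc o l p) (sc o l q)) :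
    ∀ᶠ z in 𝓝 x, 0 ≤ side (sc o l p) (sc o l q) z → z ∈ Sc o l C := by
  refine halfdisc (sc_convex f.cp.2.1 o l) (p := o) ⟨p, f.hp, rfl⟩ ⟨q, f.hq, rfl⟩ ⟨o, interior_subset f.ho, sc_self o l⟩ ?_ hx
  rw [side_sc, side_right, side_left]
  have := f.D
  have : 0 < l * (l * side o p q) := by positivity
  linarith

lemma qfree_in (f : Frame C o p q) (hl : 0 < l) (hl1 : l < 1) {x : E}
    (hx : x ∈ openSegment ℝ (sc o l q) (sc o l p)) :
    ∀ᶠ z in 𝓝 x, 0 ≤ side (sc o l q) (sc o l p) z → z ∈ Quad o p q l 1 1 := by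
  have hD := f.D
  have hs := f.ssub (k1 := 1) (k2 := 1) hl (by linarith) (by linarith)
  refine halfdisc (f.quad_cp hl le_rfl le_rfl).2.1 (p := p) (hs (right_mem_segment _ _ _)) (hs (left_mem_segment _ _ _))
    (f.osub hl1 (left_mem_segment _ _ _)) ?_ hx
  rw [side_swap, side_sc, side_right]
  have : side q o p = side o p q := by simp [side]; ring
  rw [this]
  nlinarith [mul_pos hl hD, mul_pos (mul_pos hl hD) (sub_pos.2 hl1)]

lemma qfree_out (f : Frame C o p q) (hl : 0 < l) (hl1 : l < 1) {x : E}
    (hx : x ∈ openSegment ℝ p q) :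
    ∀ᶠ z in 𝓝 x, 0 ≤ side p q z → z ∈ Quad o p q l 1 1 := by
  have hD := f.D
  have hs := f.ssub (k1 := 1) (k2 := 1) hl (by linarith) (by linarith)
  refine halfdisc (f.quad_cp hl le_rfl le_rfl).2.1 (p := sc o l p) (f.osub hl1 (left_mem_segment _ _ _)) (f.osub hl1 (right_mem_segment _ _ _))
    (hs (left_mem_segment _ _ _)) ?_ hx
  have e : side p q (sc o l p) = (1 - l) * side o p q := by simp [side, sc]; ring
  rw [e]; exact mul_pos (by linarith) hD

lemma qpos_in (f : Frame C o p q) (hl : 0 < l) {x : E} (hx : x ∈ Quad o p q l k1 k2) :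
    0 ≤ side (sc o l q) (sc o l p) x := by
  rw [side_swap, side_sc]
  have := mul_nonneg hl.le (sub_nonneg.2 hx.2.2.1)
  linarith

end Frame
end PP

namespace PP
open Set Filter Topology

lemma frontier_side {C : Set E} (hC : Convex ℝ C) {a b x : E} (ha : a ∈ C) (hb : b ∈ C)
    (hx : x ∈ openSegment ℝ a b) (hn : x ∉ interior C) :
    (∀ y ∈ C, 0 ≤ side a b y) ∨ (∀ y ∈ C, side a b y ≤ 0) := by
  by_contra hh
  push Not at hh
  obtain ⟨⟨u, hu, hu'⟩, w, hw, hw'⟩ := hh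
  have n1 := halfdisc hC ha hb hw hw' hx
  have n2 := halfdisc hC hb ha hu (by rw [side_swap]; linarith) (openSegment_symm ℝ a b ▸ hx)
  apply hn
  rw [mem_interior_iff_mem_nhds]
  filter_upwards [n1, n2] with z h1 h2
  rcases le_total 0 (side a b z) with h | h
  · exact h1 h
  · exact h2 (by rw [side_swap]; linarith)

lemma disj_interior {C D : Set E} (hD : CP D) (iD : (interior D).Nonempty)
    (h : Disjoint (interior C) (interior D)) {x : E} (hx : x ∈ interior C) : x ∉ D := by
  intro hd
  rw [closure_interior_of hD iD] at hd
  exact Set.disjoint_left.1 (h.closure_right isOpen_interior) hx hd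

section
variable {P : Set E} {ι : Type} {C : ι → Set E}

namespace Cells

lemma sub (h : Cells P C) (i : ι) : C i ⊆ P := h.union ▸ subset_iUnion C i

lemma nint (h : Cells P C) {i j : ι} (hij : i ≠ j) {x : E} (hx : x ∈ interior (C i)) : x ∉ C j :=
  disj_interior (h.cp j) (h.int j) (h.dis i j hij) hx

lemma fr (h : Cells P C) {i j : ι} (hij : i ≠ j) {x : E} (hi : x ∈ C i) (hj : x ∈ C j) : x ∈ frontier (C i) :=
  ⟨subset_closure hi, fun hx => h.nint hij hx hj⟩

lemma nint2 (h : Cells P C) {i c j : ι} (hi : i ≠ j) (hc : c ≠ j) {x : E} (hx : x ∈ interior (C i ∪ C c)) :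
    x ∉ C j := by
  intro hj
  rw [closure_interior_of (h.cp j) (h.int j)] at hj
  obtain ⟨z, hz, hz'⟩ := mem_closure_iff.1 hj _ isOpen_interior hx
  rcases interior_subset hz with h1 | h1
  · exact h.nint hi.symm hz' h1
  · exact h.nint hc.symm hz' h1

lemma isClosed (h : Cells P C) (i : ι) : IsClosed (C i) := (h.cp i).1.isClosed

lemma conic_unif [Finite ι] (h : Cells P C) (v : E) : ∃ δ > 0, ∀ i, ∀ x ∈ C i, dist x v < δ → ∀ t : ℝ, 0 ≤ t →
    dist (v + t • (x - v)) v < δ → v + t • (x - v) ∈ C i := by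
  choose d d0 hd using fun i => h.conic i v
  have h1 : ∀ᶠ e in 𝓝[>] (0:ℝ), ∀ i, e < d i := by
    rw [eventually_all]
    exact fun i => nhdsWithin_le_nhds (gt_mem_nhds (d0 i))
  obtain ⟨e, he, he0⟩ := (h1.and self_mem_nhdsWithin).exists
  exact ⟨e, he0, fun i x hx hxe t ht hte => hd i x hx (hxe.trans (he i)) t ht (hte.trans (he i))⟩

lemma lemW [Finite ι] (h : Cells P C) (𝓑 : Set ι) {v : E} (hv : ∃ c ∈ 𝓑, v ∈ C c)
    (hAB : ∀ᶠ x in 𝓝 v, ∀ i ∈ 𝓑, ∀ j ∉ 𝓑, x ∈ C i → x ∈ C j → x = v)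
    (hout : ∀ U ∈ 𝓝 v, ∃ w ∈ U, ∀ i ∈ 𝓑, w ∉ C i) :
    ∃ c ∈ 𝓑, v ∈ C c ∧ ∃ y, y ≠ v ∧ segment ℝ v y ⊆ frontier (C c) ∧
      ∀ d, d ≠ c → C d ∩ segment ℝ v y ⊆ {v} := by
  obtain ⟨e, e0, hcon⟩ := h.conic_unif v
  obtain ⟨e1, e10, hAB⟩ := Metric.eventually_nhds_iff.1 hAB
  set B : Set E := ⋃ i ∈ 𝓑, C i with hB
  have memB : ∀ x, x ∈ B ↔ ∃ i ∈ 𝓑, x ∈ C i := by intro x; simp [hB]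
  have hconB : ∀ x ∈ B, dist x v < e → ∀ t : ℝ, 0 ≤ t → dist (v + t • (x - v)) v < e → v + t • (x - v) ∈ B := by
    intro x hx h1 t h2 h3
    obtain ⟨i, hi, hx⟩ := (memB x).1 hx
    exact (memB _).2 ⟨i, hi, hcon i x hx h1 t h2 h3⟩
  have dst : ∀ (t : ℝ) (x : E), 0 ≤ t → dist (v + t • (x - v)) v = t * dist x v := by
    intro t x ht
    rw [dist_eq_norm, add_sub_cancel_left, norm_smul, Real.norm_of_nonneg ht, dist_eq_norm]
  obtain ⟨r, r0, re, re1⟩ : ∃ r, 0 < r ∧ r < e ∧ r < e1 :=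
    ⟨min e e1 / 2, by positivity, by linarith [min_le_left e e1], by linarith [min_le_right e e1]⟩
  -- points on the sphere
  have hvB : v ∈ B := (memB v).2 hv
  have s1 : (Metric.sphere v r ∩ B).Nonempty := by
    obtain ⟨c, hc, hvc⟩ := hv
    have : ∃ w ∈ interior (C c), w ≠ v := by
      by_contra hh
      push Not at hh
      have h1 : interior (C c) ⊆ {v} := hh
      obtain ⟨x, hx⟩ := h.int c
      have hne : (0:ℝ) < 1 := one_pos
      have : (interior (C c)).Infinite := infinite_of_mem_nhds x (isOpen_interior.mem_nhds hx)
      exact this ((finite_singleton v).subset h1)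
    obtain ⟨w, hw, hwv⟩ := this
    have hd : 0 < dist w v := dist_pos.2 hwv
    obtain ⟨t, t0, t1, ht⟩ : ∃ t : ℝ, 0 < t ∧ t < 1 ∧ t * dist w v < e := by
      refine ⟨min (1/2) (e / (2 * dist w v)), by positivity, by linarith [min_le_left (1/2 : ℝ) (e / (2 * dist w v))], ?_⟩
      calc _ ≤ e / (2 * dist w v) * dist w v := by gcongr; exact min_le_right _ _
        _ = e / 2 := by field_simp
        _ < e := by linarith
    have hx : v + t • (w - v) ∈ C c :=
      (h.cp c).2.1.segment_subset hvc (interior_subset hw) (seg_iff.2 ⟨t, t0.le, t1.le, rfl⟩)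
    have hx' := dst t w t0.le
    set x := v + t • (w - v)
    have hxd : 0 < dist x v := by rw [hx']; positivity
    have q := dst (r / dist x v) x (by positivity)
    rw [div_mul_cancel₀ _ hxd.ne'] at q
    exact ⟨_, q, (memB _).2 ⟨c, hc, hcon c x hx (by linarith) _ (by positivity) (by linarith)⟩⟩
  have s2 : (Metric.sphere v r ∩ Bᶜ).Nonempty := by
    obtain ⟨x, hx, hxB⟩ := hout _ (Metric.ball_mem_nhds v e0)
    have hxB' : x ∉ B := fun hh => by obtain ⟨i, hi, h'⟩ := (memB x).1 hh; exact hxB i hi h'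
    have hxd : 0 < dist x v := dist_pos.2 (fun hh => hxB' (hh ▸ hvB))
    have q := dst (r / dist x v) x (by positivity)
    rw [div_mul_cancel₀ _ hxd.ne'] at q
    refine ⟨_, q, fun hh => hxB' ?_⟩
    have := hconB _ hh (by linarith) (dist x v / r) (by positivity)
    have ee : v + (dist x v / r) • (v + (r / dist x v) • (x - v) - v) = x := by
      rw [add_sub_cancel_left, smul_smul]
      have : dist x v / r * (r / dist x v) = 1 := by field_simp
      rw [this]; simp
    rw [ee] at this
    exact this hx
  have cB : IsClosed B := by
    rw [hB]; exact (Set.toFinite 𝓑).isClosed_biUnion (fun i _ => h.isClosed i)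
  have key : ∃ y ∈ Metric.sphere v r, y ∈ B ∧ y ∉ interior B := by
    by_contra hh
    push Not at hh
    have hpre : IsPreconnected (Metric.sphere v r) := isPreconnected_sphere (by
      rw [← Module.finrank_eq_rank]; simp) v r
    obtain ⟨z, hz, hz1, hz2⟩ := hpre (interior B) Bᶜ isOpen_interior cB.isOpen_compl
      (fun y hy => by
        by_cases hyB : y ∈ B
        · exact Or.inl (hh y hy hyB)
        · exact Or.inr hyB)
      (by obtain ⟨z, hz, hzB⟩ := s1; exact ⟨z, hz, hh z hz hzB⟩) s2
    exact hz2 (interior_subset hz1)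
  obtain ⟨y, hyS, hyB, hyn⟩ := key
  have hyr : dist y v = r := hyS
  have hyv : y ≠ v := by rintro rfl; simp at hyr; linarith
  have scl : ∀ t : ℝ, 0 < t → t ≤ 1 → v + t • (y - v) ∉ interior B := by
    intro t t0 t1 hh
    apply hyn
    rw [mem_interior_iff_mem_nhds] at hh ⊢
    have ct : ContinuousAt (fun x => v + t • (x - v)) y := by fun_prop
    have n1 := ct.eventually hh
    filter_upwards [n1, Metric.isOpen_ball.mem_nhds (show y ∈ Metric.ball v e by simp [hyr, re])] with x hx hxe
    have hxe : dist x v < e := hxe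
    have q := dst t x t0.le
    have := hconB _ hx (by rw [q]; nlinarith [dist_nonneg (x := x) (y := v)]) (1 / t) (by positivity)
    have ee : v + (1 / t) • (v + t • (x - v) - v) = x := by
      rw [add_sub_cancel_left, smul_smul, one_div_mul_cancel t0.ne']; simp
    rw [ee] at this
    exact this hxe
  obtain ⟨c, hc, hyc⟩ := (memB y).1 hyB
  have hseg : ∀ d ∈ 𝓑, ∀ t : ℝ, 0 < t → t ≤ 1 → v + t • (y - v) ∈ C d → v ∈ C d ∧ y ∈ C d := by
    intro d hd t t0 t1 hx
    have q := dst t y t0.le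
    have qe : dist (v + t • (y - v)) v < e := by rw [q]; nlinarith
    have a1 := hcon d _ hx qe 0 le_rfl (by simpa using e0)
    have a2 := hcon d _ hx qe (1 / t) (by positivity)
    have ee : v + (1 / t) • (v + t • (y - v) - v) = y := by
      rw [add_sub_cancel_left, smul_smul, one_div_mul_cancel t0.ne']; simp
    rw [ee] at a2
    exact ⟨by simpa using a1, a2 (by linarith)⟩
  have hvc : v ∈ C c := (hseg c hc 1 one_pos le_rfl (by simpa using hyc)).1
  have hcB : C c ⊆ B := fun x hx => (memB x).2 ⟨c, hc, hx⟩
  refine ⟨c, hc, hvc, y, hyv, ?_, ?_⟩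
  · intro x hx
    have hxc := (h.cp c).2.1.segment_subset hvc hyc hx
    refine ⟨subset_closure hxc, fun hi => ?_⟩
    have hi' := interior_mono hcB hi
    obtain ⟨t, t0, t1, rfl⟩ := seg_iff.1 hx
    rcases eq_or_lt_of_le t0 with h0 | h0
    · rw [← h0, zero_smul, add_zero] at hi'
      obtain ⟨w, hw, hw'⟩ := hout _ (mem_interior_iff_mem_nhds.1 hi')
      obtain ⟨i, hi, h'⟩ := (memB w).1 hw
      exact hw' i hi h'
    · exact scl t h0 t1 hi'
  · rintro d hd x ⟨hxd, hx⟩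
    have hxc := (h.cp c).2.1.segment_subset hvc hyc hx
    by_cases hdB : d ∈ 𝓑
    · obtain ⟨t, t0, t1, rfl⟩ := seg_iff.1 hx
      rcases eq_or_lt_of_le t0 with h0 | h0
      · simp [← h0]
      exfalso
      obtain ⟨b1, b2⟩ := hseg d hdB t h0 t1 hxd
      have := two_sided (h.cp c).2.1 (h.cp d).2.1 (h.int c) (h.int d) (h.dis _ _ hd.symm) hyv.symm hvc hyc b1 b2
        (openSeg_iff.2 ⟨1/2, by norm_num, by norm_num, rfl⟩)
      refine scl (1/2) (by norm_num) (by norm_num) (interior_mono ?_ this)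
      exact union_subset hcB (fun x hx => (memB x).2 ⟨d, hdB, hx⟩)
    · obtain ⟨t, t0, t1, rfl⟩ := seg_iff.1 hx
      refine hAB (y := v + t • (y - v)) ?_ c hc d hdB hxc hxd
      rw [dst t y t0]; nlinarith

end Cells
end
end PP

namespace PP
open Set Filter Topology

structure Inv (P : Set E) {ι : Type} (C : ι → Set E) (o : ι → E) (l : ℝ) (𝓔 : Set ι) (R S : Set E) : Prop where
  chain : Chain P R
  sub : ∀ x ∈ R, ∃ i ∈ 𝓔, x ∈ C i
  inner : ∀ i ∈ 𝓔, Sc (o i) l (C i) ⊆ R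
  cone : ∀ i ∈ 𝓔, ∀ x ∈ R, x ∈ C i → x ∈ Sc (o i) l (C i) ∨ ∃ s ∈ S, s ∈ frontier (C i) ∧ x ∈ segment ℝ (o i) s
  out : ∀ j ∉ 𝓔, R ∩ C j = S ∩ C j
  closed : IsClosed S

section
variable {P : Set E} {ι : Type} {C : ι → Set E} {o : ι → E} {l : ℝ} {𝓔 : Set ι} {R S : Set E}

lemma inv_nil : Inv P C o l ∅ ∅ ∅ :=
  ⟨.nil, by simp, by simp, by simp, by simp, isClosed_empty⟩

/-- a boundary point on the ray of a point of the quad is in the base -/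
lemma Frame.ray_unique {C : Set E} {o p q : E} (f : Frame C o p q) {s x : E} {k1 k2 : ℝ} (hl : 0 < l)
    (hk1 : 1 ≤ k1) (hk2 : 1 ≤ k2) (hs : s ∈ frontier C) (hx : x ∈ segment ℝ o s) (hq : x ∈ Quad o p q l k1 k2) :
    s ∈ segment ℝ p q := by
  have hD := f.D
  obtain ⟨t, t0, t1, rfl⟩ := seg_iff.1 hx
  obtain ⟨h1, h2, h3, h4⟩ := hq
  obtain ⟨e1, e2⟩ := scoord o p q s t
  change side q o (o + t • (s - o)) = _ at e1
  change side o p (o + t • (s - o)) = _ at e2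
  rw [e1] at h1 h3 h4
  rw [e2] at h2 h3 h4
  have tpos : 0 < t := by
    rcases eq_or_lt_of_le t0 with h | h
    · rw [← h] at h3
      have := mul_pos hl hD
      linarith
    · exact h
  have g1 : 0 ≤ side q o s := (mul_nonneg_iff_of_pos_left tpos).1 h1
  have g2 : 0 ≤ side o p s := (mul_nonneg_iff_of_pos_left tpos).1 h2
  have hsC : s ∈ C := by rw [← f.cp.1.isClosed.closure_eq]; exact hs.1
  have g3 := f.pos s hsC
  have g4 := side_sum o p q s
  rcases eq_or_lt_of_le (show side q o s + side o p s ≤ side o p q by linarith) with h | h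
  · exact f.edge g1 g2 h
  · exact absurd (f.intr g1 g2 h) hs.2

lemma exit_step (h : Cells P C) (hI : Inv P C o l 𝓔 R S) {i : ι} (hi : i ∈ 𝓔) {p q : E} (f : Frame (C i) (o i) p q)
    (hl : 0 < l) (hl1 : l < 1) {k1 k2 : ℝ} (hk1 : 1 ≤ k1) (hk2 : 1 ≤ k2) (hk : k1 = 1 ∨ k2 = 1)
    (hk1' : k1 * l ≤ 1) (hk2' : k2 * l ≤ 1) (hJS : ∀ x ∈ segment ℝ p q, x ∉ S)
    (ht : ∃ T : Set E, T.Finite ∧ ∀ y ∈ segment ℝ p q, y ∈ Quad (o i) p q l k1 k2 → y ∉ T → y ∈ interior P)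
    (hJ : ∀ j ∉ 𝓔, ∀ x ∈ segment ℝ p q, x ∈ C j → x ∈ Quad (o i) p q l k1 k2) :
    Inv P C o l 𝓔 (R ∪ Quad (o i) p q l k1 k2) (S ∪ segment ℝ p q) := by
  have hcp := f.quad_cp hl hk1 hk2
  have hsub : Quad (o i) p q l k1 k2 ⊆ C i := f.quad_sub hk1 hk2
  have hss : segment ℝ (sc (o i) l p) (sc (o i) l q) ⊆ Quad (o i) p q l k1 k2 := f.ssub hl hk1' hk2'
  have hsR : segment ℝ (sc (o i) l p) (sc (o i) l q) ⊆ R := by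
    rw [← sc_segment]
    exact (image_mono f.seg_sub).trans (hI.inner i hi)
  have hRQ : R ∩ Quad (o i) p q l k1 k2 = segment ℝ (sc (o i) l p) (sc (o i) l q) := by
    apply Subset.antisymm
    · rintro x ⟨hx, hxq⟩
      rcases hI.cone i hi x hx (hsub hxq) with h1 | ⟨s, hs, hsf, hxs⟩
      · exact f.qinter hl ⟨hxq, h1⟩
      · exact absurd hs (hJS s (f.ray_unique hl hk1 hk2 hsf hxs hxq))
    · exact subset_inter hsR hss
  have step : Step P R (Quad (o i) p q l k1 k2) (sc (o i) l q) (sc (o i) l p) := by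
    refine ⟨hsub.trans (h.sub i), hcp, f.quad_int hl hl1 hk1 hk2 hk, fun hh => f.ne (sc_inj _ hl.ne' hh).symm,
      hss (right_mem_segment _ _ _), hss (left_mem_segment _ _ _), fun y hy => f.qpos_in hl hy, ?_, ?_, ?_, ?_, ?_⟩
    · rw [hRQ, segment_symm]
    · rw [hRQ]; exact convex_segment _ _
    · rw [hRQ]; exact Or.inl ⟨_, left_mem_segment _ _ _⟩
    · intro x hx
      rw [openSegment_symm] at hx
      filter_upwards [f.sfree hl hx] with z hz _ hs
      exact hI.inner i hi (hz (by rw [side_swap]; linarith))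
    · obtain ⟨T, hT, ht⟩ := ht
      refine ⟨T, hT, fun y hy _ hyT => ?_⟩
      have hyQ := hcp.1.isClosed.frontier_subset hy
      rcases f.quad_cases hk1 hk2 hyQ with h1 | h1
      · exact interior_mono (h.sub i) h1
      · exact ht y h1 hyQ hyT
  refine ⟨.step hI.chain step, ?_, fun j hj => (hI.inner j hj).trans subset_union_left, ?_, ?_,
    hI.closed.union (by rw [← convexHull_pair]; exact (Set.toFinite {p, q}).isClosed_convexHull ℝ)⟩
  · rintro x (hx | hx)
    · exact hI.sub x hx
    · exact ⟨i, hi, hsub hx⟩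
  · rintro j hj x (hx | hx) hxj
    · rcases hI.cone j hj x hx hxj with h1 | ⟨s, hs, h1⟩
      · exact Or.inl h1
      · exact Or.inr ⟨s, Or.inl hs, h1⟩
    · right
      by_cases hij : i = j
      · subst hij
        obtain ⟨s, hs, hxs⟩ := f.quad_cone hl hk1 hk2 hx
        exact ⟨s, Or.inr hs, f.seg_fr hs, hxs⟩
      · rcases f.quad_cases hk1 hk2 hx with h1 | h1
        · exact absurd hxj (h.nint hij h1)
        · exact ⟨x, Or.inr h1, h.fr (Ne.symm hij) hxj (hsub hx), right_mem_segment _ _ _⟩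
  · intro j hj
    have hij : i ≠ j := fun hh => hj (hh ▸ hi)
    rw [union_inter_distrib_right, union_inter_distrib_right, hI.out j hj]
    congr 1
    ext x
    constructor
    · rintro ⟨hx, hxj⟩
      rcases f.quad_cases hk1 hk2 hx with h1 | h1
      · exact absurd hxj (h.nint hij h1)
      · exact ⟨h1, hxj⟩
    · rintro ⟨hx, hxj⟩
      exact ⟨hJ j hj x hx hxj, hxj⟩

lemma enter_step (h : Cells P C) (hI : Inv P C o l 𝓔 R S) {c : ι} (hc : c ∉ 𝓔) {p q : E} (f : Frame (C c) (o c) p q)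
    (hl : 0 < l) (hl1 : l < 1) (hcv : Convex ℝ (R ∩ segment ℝ p q)) (hne : (R ∩ segment ℝ p q).Nonempty ∨ R = ∅)
    (hfree : ∀ x ∈ openSegment ℝ p q, ∀ᶠ z in 𝓝 x, z ∈ P → side p q z < 0 → z ∈ R) :
    Inv P C o l (insert c 𝓔) (R ∪ Quad (o c) p q l 1 1 ∪ Sc (o c) l (C c)) (S ∪ segment ℝ p q) := by
  have hcp : CP (Quad (o c) p q l 1 1) := f.quad_cp hl le_rfl le_rfl
  have hsub : Quad (o c) p q l 1 1 ⊆ C c := f.quad_sub le_rfl le_rfl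
  have hss : segment ℝ (sc (o c) l p) (sc (o c) l q) ⊆ Quad (o c) p q l 1 1 := f.ssub hl (by linarith) (by linarith)
  have hos : segment ℝ p q ⊆ Quad (o c) p q l 1 1 := f.osub hl1
  have hSi : Sc (o c) l (C c) ⊆ interior (C c) := Sc_sub f.cp.2.1 f.ho hl hl1
  have hRi : ∀ x ∈ R, x ∉ interior (C c) := by
    intro x hx hxi
    obtain ⟨i, hi, hxC⟩ := hI.sub x hx
    exact h.nint (show c ≠ i from fun hh => hc (hh ▸ hi)) hxi hxC
  have hRQ : R ∩ Quad (o c) p q l 1 1 = R ∩ segment ℝ p q := by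
    apply Subset.antisymm
    · rintro x ⟨hx, hxq⟩
      rcases f.quad_cases le_rfl le_rfl hxq with h1 | h1
      · exact absurd h1 (hRi x hx)
      · exact ⟨hx, h1⟩
    · exact inter_subset_inter_right _ hos
  have step1 : Step P R (Quad (o c) p q l 1 1) p q := by
    refine ⟨hsub.trans (h.sub c), hcp, f.quad_int hl hl1 le_rfl le_rfl (Or.inl rfl), f.ne,
      hos (left_mem_segment _ _ _), hos (right_mem_segment _ _ _), fun y hy => f.pos y (hsub hy), ?_, ?_, ?_, hfree, ?_⟩
    · rw [hRQ]; exact inter_subset_right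
    · rw [hRQ]; exact hcv
    · rw [hRQ]; exact hne
    · refine ⟨∅, finite_empty, fun y hy hy' _ => ?_⟩
      rcases f.quad_cases le_rfl le_rfl (hcp.1.isClosed.frontier_subset hy) with h1 | h1
      · exact interior_mono (h.sub c) h1
      · exact absurd h1 hy'
  have hint : (R ∪ Quad (o c) p q l 1 1) ∩ Sc (o c) l (C c) = segment ℝ (sc (o c) l p) (sc (o c) l q) := by
    apply Subset.antisymm
    · rintro x ⟨hx | hx, hxs⟩
      · exact absurd (hSi hxs) (hRi x hx)
      · exact f.qinter hl ⟨hx, hxs⟩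
    · refine subset_inter (hss.trans subset_union_right) ?_
      rw [← sc_segment]; exact image_mono f.seg_sub
  have step2 : Step P (R ∪ Quad (o c) p q l 1 1) (Sc (o c) l (C c)) (sc (o c) l p) (sc (o c) l q) := by
    refine ⟨(hSi.trans interior_subset).trans (h.sub c), sc_cp f.cp _ hl.ne', ?_, fun hh => f.ne (sc_inj _ hl.ne' hh),
      ⟨p, f.hp, rfl⟩, ⟨q, f.hq, rfl⟩, ?_, ?_, ?_, ?_, ?_, ?_⟩
    · rw [← sc_interior _ hl.ne']; exact ⟨_, o c, f.ho, rfl⟩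
    · rintro _ ⟨x, hx, rfl⟩
      rw [side_sc_sc]; exact mul_nonneg (sq_nonneg _) (f.pos x hx)
    · rw [hint]
    · rw [hint]; exact convex_segment _ _
    · rw [hint]; exact Or.inl ⟨_, left_mem_segment _ _ _⟩
    · intro x hx
      rw [openSegment_symm] at hx
      filter_upwards [f.qfree_in hl hl1 hx] with z hz _ hs
      exact Or.inr (hz (by rw [side_swap]; linarith))
    · refine ⟨∅, finite_empty, fun y hy _ _ => ?_⟩
      exact interior_mono (h.sub c) (hSi ((sc_cp f.cp (o c) hl.ne').1.isClosed.frontier_subset hy))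
  refine ⟨.step (.step hI.chain step1) step2, ?_, ?_, ?_, ?_,
    hI.closed.union (by rw [← convexHull_pair]; exact (Set.toFinite {p, q}).isClosed_convexHull ℝ)⟩
  · rintro x ((hx | hx) | hx)
    · obtain ⟨i, hi, hx⟩ := hI.sub x hx
      exact ⟨i, Or.inr hi, hx⟩
    · exact ⟨c, Or.inl rfl, hsub hx⟩
    · exact ⟨c, Or.inl rfl, interior_subset (hSi hx)⟩
  · rintro i (rfl | hi)
    · exact subset_union_right
    · exact (hI.inner i hi).trans (subset_union_left.trans subset_union_left)
  · rintro i hi x hx hxi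
    by_cases hic : c = i
    · subst hic
      rcases hx with (hx | hx) | hx
      · right
        have : x ∈ S ∩ C c := hI.out c hc ▸ ⟨hx, hxi⟩
        exact ⟨x, Or.inl this.1, ⟨subset_closure hxi, hRi x hx⟩, right_mem_segment _ _ _⟩
      · right
        obtain ⟨s, hs, hxs⟩ := f.quad_cone hl le_rfl le_rfl hx
        exact ⟨s, Or.inr hs, f.seg_fr hs, hxs⟩
      · exact Or.inl hx
    · have hi : i ∈ 𝓔 := hi.resolve_left (fun hh => hic hh.symm)
      rcases hx with (hx | hx) | hx
      · rcases hI.cone i hi x hx hxi with h1 | ⟨s, hs, h1⟩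
        · exact Or.inl h1
        · exact Or.inr ⟨s, Or.inl hs, h1⟩
      · rcases f.quad_cases le_rfl le_rfl hx with h1 | h1
        · exact absurd hxi (h.nint hic h1)
        · exact Or.inr ⟨x, Or.inr h1, h.fr (Ne.symm hic) hxi (hsub hx), right_mem_segment _ _ _⟩
      · exact absurd hxi (h.nint hic (hSi hx))
  · intro j hj
    have hcj : c ≠ j := fun hh => hj (Or.inl hh.symm)
    have hj' : j ∉ 𝓔 := fun hh => hj (Or.inr hh)
    rw [union_inter_distrib_right, union_inter_distrib_right, union_inter_distrib_right, hI.out j hj']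
    have e1 : Sc (o c) l (C c) ∩ C j = ∅ := by
      rw [Set.eq_empty_iff_forall_notMem]
      exact fun x hx => h.nint hcj (hSi hx.1) hx.2
    rw [e1, union_empty]
    congr 1
    ext x
    constructor
    · rintro ⟨hx, hxj⟩
      rcases f.quad_cases le_rfl le_rfl hx with h1 | h1
      · exact absurd hxj (h.nint hcj h1)
      · exact ⟨h1, hxj⟩
    · rintro ⟨hx, hxj⟩
      exact ⟨hos hx, hxj⟩

end
end PP

namespace PP
open Set Filter Topology

lemma seg_inj {a b : E} (hab : a ≠ b) {s t : ℝ} (h : a + s • (b - a) = a + t • (b - a)) : s = t := by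
  have := add_left_cancel h
  by_contra hne
  have h2 : (s - t) • (b - a) = 0 := by rw [sub_smul, this, sub_self]
  rcases smul_eq_zero.1 h2 with h3 | h3
  · exact hne (sub_eq_zero.1 h3)
  · exact hab (sub_eq_zero.1 h3).symm

lemma avoid {a b : E} (hab : a ≠ b) {F : Set E} (hF : F.Finite) :
    ∃ p q, p ≠ q ∧ segment ℝ p q ⊆ openSegment ℝ a b ∧ ∀ x ∈ segment ℝ p q, x ∉ F := by
  have hc : Continuous (fun t : ℝ => a + t • (b - a)) := by fun_prop
  have hinj : Function.Injective (fun t : ℝ => a + t • (b - a)) := fun s t h => seg_inj hab h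
  have hfin : ((fun t : ℝ => a + t • (b - a)) ⁻¹' F).Finite := hF.preimage hinj.injOn
  obtain ⟨t, ht, htF⟩ := ((Ioo_infinite (zero_lt_one' ℝ)).sdiff hfin).nonempty
  have h1 : ∀ᶠ s in 𝓝 t, s ∈ Ioo (0:ℝ) 1 ∧ a + s • (b - a) ∉ F :=
    Filter.Eventually.and (isOpen_Ioo.mem_nhds ht) ((hF.isClosed.isOpen_compl.preimage hc).mem_nhds htF)
  obtain ⟨e, e0, he⟩ := Metric.eventually_nhds_iff.1 h1
  have key : ∀ x ∈ segment ℝ (a + t • (b - a)) (a + (t + e / 2) • (b - a)), x ∈ openSegment ℝ a b ∧ x ∉ F := by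
    intro x hx
    obtain ⟨s, s0, s1, rfl⟩ := seg_iff.1 hx
    have e1 : a + t • (b - a) + s • (a + (t + e / 2) • (b - a) - (a + t • (b - a))) = a + (t + s * (e / 2)) • (b - a) := by
      module
    rw [e1]
    obtain ⟨h2, h3⟩ := he (y := t + s * (e / 2)) (by
      rw [Real.dist_eq, add_sub_cancel_left, abs_of_nonneg (by positivity)]; nlinarith)
    exact ⟨openSeg_iff.2 ⟨_, h2.1, h2.2, rfl⟩, h3⟩
  refine ⟨_, _, fun hh => ?_, fun x hx => (key x hx).1, fun x hx => (key x hx).2⟩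
  have := seg_inj hab hh
  linarith

lemma mid_mem (a b : E) : a + (1/2 : ℝ) • (b - a) ∈ openSegment ℝ a b :=
  openSeg_iff.2 ⟨1/2, by norm_num, by norm_num, rfl⟩

namespace Frame
variable {C : Set E} {o p q : E} {l : ℝ}

lemma apexp (f : Frame C o p q) (hl : 0 < l) (hl1 : l < 1) :
    p ∈ Quad o p q l 1 (1 / l) ∧ ∀ y ∈ segment ℝ p q, y ∈ Quad o p q l 1 (1 / l) → y = p := by
  have hD := f.D
  have e1 : side q o p = side o p q := by simp [side]; ring
  constructor
  · refine ⟨?_, ?_, ?_, ?_⟩ <;> try simp only [e1, side_right]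
    all_goals nlinarith
  · intro y hy hq
    obtain ⟨h1, h2, h3⟩ := f.seg_coord hy
    have h4 := hq.2.2.2
    have h5 : 1 < 1 / l := by rw [lt_div_iff₀ hl]; linarith
    have h6 : side o p y = 0 := by nlinarith
    have e := bary (o := o) (p := p) (q := q) hD.ne' y
    rw [h6, show side q o y = side o p q by linarith, div_self hD.ne'] at e
    rw [e]; simp

lemma apexq (f : Frame C o p q) (hl : 0 < l) (hl1 : l < 1) :
    q ∈ Quad o p q l (1 / l) 1 ∧ ∀ y ∈ segment ℝ p q, y ∈ Quad o p q l (1 / l) 1 → y = q := by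
  have hD := f.D
  constructor
  · refine ⟨?_, ?_, ?_, ?_⟩ <;> try simp only [side_left]
    all_goals nlinarith
  · intro y hy hq
    obtain ⟨h1, h2, h3⟩ := f.seg_coord hy
    have h4 := hq.2.2.2
    have h5 : 1 < 1 / l := by rw [lt_div_iff₀ hl]; linarith
    have h6 : side q o y = 0 := by nlinarith
    have e := bary (o := o) (p := p) (q := q) hD.ne' y
    rw [h6, show side o p y = side o p q by linarith, div_self hD.ne'] at e
    rw [e]; simp

end Frame

section
variable {P : Set E} {ι : Type} {C : ι → Set E} {o : ι → E} {l : ℝ} {𝓔 : Set ι} {R S : Set E}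

lemma edge_link_aux (h : Cells P C) (ho : ∀ i, o i ∈ interior (C i)) (hl : 0 < l) (hl1 : l < 1)
    (hI : Inv P C o l 𝓔 R S) (hfin : ∀ j ∉ 𝓔, (S ∩ C j).Finite) {i c : ι} (hi : i ∈ 𝓔) (hc : c ∉ 𝓔)
    {p q : E} (hpq : p ≠ q) (hpi : segment ℝ p q ⊆ C i) (hpc : segment ℝ p q ⊆ C c)
    (hint : segment ℝ p q ⊆ interior (C i ∪ C c)) (hS : ∀ x ∈ segment ℝ p q, x ∉ S)
    (hpos : ∀ x ∈ C i, 0 ≤ side p q x) :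
    ∃ R' S', Inv P C o l (insert c 𝓔) R' S' ∧ ∀ j ∉ insert c 𝓔, (S' ∩ C j).Finite := by
  have hic : i ≠ c := fun hh => hc (hh ▸ hi)
  have f : Frame (C i) (o i) p q := ⟨h.cp i, ho i, hpi (left_mem_segment _ _ _), hpi (right_mem_segment _ _ _), hpq, hpos⟩
  have hneg : ∀ x ∈ C c, side p q x ≤ 0 := by
    have hm := mid_mem p q
    have hn : p + (1/2 : ℝ) • (q - p) ∉ interior (C c) := fun hh =>
      h.nint hic.symm hh (hpi (openSegment_subset_segment _ _ _ hm))
    rcases frontier_side (h.cp c).2.1 (hpc (left_mem_segment _ _ _)) (hpc (right_mem_segment _ _ _)) hm hn with h1 | h1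
    · exfalso
      obtain ⟨z, hz1, hz2⟩ := overlap (h.cp i).2.1 (h.cp c).2.1 hpq (hpi (left_mem_segment _ _ _))
        (hpi (right_mem_segment _ _ _)) (hpc (left_mem_segment _ _ _)) (hpc (right_mem_segment _ _ _))
        (interior_subset (ho i)) (interior_subset (ho c)) (side_pos_of_interior hpq hpos (ho i))
        (side_pos_of_interior hpq h1 (ho c))
      exact Set.disjoint_left.1 (h.dis i c hic) hz1 hz2
    · exact h1
  have g : Frame (C c) (o c) q p := ⟨h.cp c, ho c, hpc (right_mem_segment _ _ _), hpc (left_mem_segment _ _ _), hpq.symm,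
    fun x hx => by rw [side_swap]; linarith [hneg x hx]⟩
  have os : segment ℝ p q ⊆ Quad (o i) p q l 1 1 := f.osub hl1
  have I1 := exit_step h hI hi f hl hl1 le_rfl le_rfl (Or.inl rfl) (by linarith) (by linarith) hS
    ⟨∅, finite_empty, fun y hy _ _ => interior_mono (union_subset (h.sub i) (h.sub c)) (hint hy)⟩
    (fun j _ x hx _ => os hx)
  have hR1 : (R ∪ Quad (o i) p q l 1 1) ∩ segment ℝ q p = segment ℝ q p := by
    rw [inter_eq_right, segment_symm]; exact os.trans subset_union_right
  have I2 := enter_step h I1 hc g hl hl1 (by rw [hR1]; exact convex_segment _ _)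
    (by rw [hR1]; exact Or.inl ⟨_, left_mem_segment _ _ _⟩) (by
      intro x hx
      rw [openSegment_symm] at hx
      filter_upwards [f.qfree_out hl hl1 hx] with z hz _ hs
      exact Or.inr (hz (by rw [side_swap]; linarith)))
  refine ⟨_, _, I2, fun j hj => ?_⟩
  have hj1 : c ≠ j := fun hh => hj (Or.inl hh.symm)
  have hj2 : j ∉ 𝓔 := fun hh => hj (Or.inr hh)
  refine (hfin j hj2).subset ?_
  have hij : i ≠ j := fun hh => hj2 (hh ▸ hi)
  rintro x ⟨(hx | hx) | hx, hxj⟩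
  · exact ⟨hx, hxj⟩
  · exact absurd hxj (h.nint2 hij hj1 (hint hx))
  · exact absurd hxj (h.nint2 hij hj1 (hint (segment_symm ℝ q p ▸ hx)))

lemma edge_link (h : Cells P C) (ho : ∀ i, o i ∈ interior (C i)) (hl : 0 < l) (hl1 : l < 1)
    (hI : Inv P C o l 𝓔 R S) (hfin : ∀ j ∉ 𝓔, (S ∩ C j).Finite) {i c : ι} (hi : i ∈ 𝓔) (hc : c ∉ 𝓔)
    {a b : E} (hab : a ≠ b) (ha : a ∈ C i ∩ C c) (hb : b ∈ C i ∩ C c) :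
    ∃ R' S', Inv P C o l (insert c 𝓔) R' S' ∧ ∀ j ∉ insert c 𝓔, (S' ∩ C j).Finite := by
  have hic : i ≠ c := fun hh => hc (hh ▸ hi)
  obtain ⟨p, q, hpq, h1, h2⟩ := avoid hab (hfin c hc)
  have h3 : segment ℝ p q ⊆ segment ℝ a b := h1.trans (openSegment_subset_segment _ _ _)
  have hpi := h3.trans ((h.cp i).2.1.segment_subset ha.1 hb.1)
  have hpc := h3.trans ((h.cp c).2.1.segment_subset ha.2 hb.2)
  have hint := h1.trans (two_sided (h.cp i).2.1 (h.cp c).2.1 (h.int i) (h.int c) (h.dis i c hic) hab ha.1 hb.1 ha.2 hb.2)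
  have hS : ∀ x ∈ segment ℝ p q, x ∉ S := fun x hx hxS => h2 x hx ⟨hxS, hpc hx⟩
  have hm := mid_mem p q
  have hn : p + (1/2 : ℝ) • (q - p) ∉ interior (C i) := fun hh =>
    h.nint hic hh (hpc (openSegment_subset_segment _ _ _ hm))
  rcases frontier_side (h.cp i).2.1 (hpi (left_mem_segment _ _ _)) (hpi (right_mem_segment _ _ _)) hm hn with h4 | h4
  · exact edge_link_aux h ho hl hl1 hI hfin hi hc hpq hpi hpc hint hS h4
  · rw [segment_symm] at hpi hpc hint
    refine edge_link_aux h ho hl hl1 hI hfin hi hc hpq.symm hpi hpc hint ?_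
      (fun x hx => by rw [side_swap]; linarith [h4 x hx])
    rw [segment_symm]; exact hS

lemma exit_vertex (h : Cells P C) (ho : ∀ i, o i ∈ interior (C i)) (hl : 0 < l) (hl1 : l < 1)
    (hI : Inv P C o l 𝓔 R S) (hfin : ∀ j ∉ 𝓔, (S ∩ C j).Finite) {i : ι} (hi : i ∈ 𝓔) {v y : E} (hvy : y ≠ v)
    (hfr : segment ℝ v y ⊆ frontier (C i)) (hoth : ∀ d, d ≠ i → C d ∩ segment ℝ v y ⊆ {v}) (hvS : v ∉ S) :
    ∃ R' S', Inv P C o l 𝓔 R' S' ∧ v ∈ R' ∧ ∀ j ∉ 𝓔, (S' ∩ C j).Finite := by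
  -- shorten
  have h1 : ∀ᶠ t : ℝ in 𝓝 0, v + t • (y - v) ∉ S :=
    (tendsto_line v (y - v)).eventually (hI.closed.isOpen_compl.mem_nhds hvS)
  obtain ⟨e, e0, he⟩ := Metric.eventually_nhds_iff.1 h1
  obtain ⟨r, r0, r1, re⟩ : ∃ r : ℝ, 0 < r ∧ r ≤ 1 ∧ r < e :=
    ⟨min 1 (e/2), by positivity, min_le_left _ _, by linarith [min_le_right 1 (e/2)]⟩
  set z := v + r • (y - v) with hz
  have hzv : z ≠ v := by
    intro hh
    have : v + r • (y - v) = v + (0:ℝ) • (y - v) := by rw [← hz, hh]; simp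
    exact r0.ne' (seg_inj hvy.symm this)
  have hsub : segment ℝ v z ⊆ segment ℝ v y ∩ Sᶜ := by
    intro x hx
    obtain ⟨s, s0, s1, rfl⟩ := seg_iff.1 hx
    have e1 : v + s • (z - v) = v + (s * r) • (y - v) := by rw [hz]; module
    rw [e1]
    refine ⟨seg_iff.2 ⟨s * r, by positivity, by nlinarith, rfl⟩, he ?_⟩
    rw [Real.dist_eq, sub_zero, abs_of_nonneg (by positivity)]; nlinarith
  have hfr' : segment ℝ v z ⊆ frontier (C i) := fun x hx => hfr (hsub hx).1
  have hzC : segment ℝ v z ⊆ C i := hfr'.trans (h.isClosed i).frontier_subset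
  have hoth' : ∀ d ∉ 𝓔, ∀ x ∈ segment ℝ v z, x ∈ C d → x = v := fun d hd x hx hxd =>
    hoth d (fun hh => hd (hh ▸ hi)) ⟨hxd, (hsub hx).1⟩
  have hfin' : ∀ j ∉ 𝓔, ((S ∪ segment ℝ v z) ∩ C j).Finite := by
    intro j hj
    refine ((hfin j hj).union (finite_singleton v)).subset ?_
    rintro x ⟨hx | hx, hxj⟩
    · exact Or.inl ⟨hx, hxj⟩
    · exact Or.inr (hoth' j hj x hx hxj)
  have hm := mid_mem v z
  have hll : 1 ≤ 1 / l := by rw [le_div_iff₀ hl]; linarith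
  have hll' : 1 / l * l ≤ 1 := by rw [one_div_mul_cancel hl.ne']
  rcases frontier_side (h.cp i).2.1 (hzC (left_mem_segment _ _ _)) (hzC (right_mem_segment _ _ _)) hm
    (hfr' (openSegment_subset_segment _ _ _ hm)).2 with h4 | h4
  · have f : Frame (C i) (o i) v z := ⟨h.cp i, ho i, hzC (left_mem_segment _ _ _), hzC (right_mem_segment _ _ _), hzv.symm, h4⟩
    obtain ⟨a1, a2⟩ := f.apexp hl hl1
    have I1 := exit_step h hI hi f hl hl1 le_rfl hll (Or.inl rfl) (by linarith) hll' (fun x hx => (hsub hx).2)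
      ⟨{v}, finite_singleton v, fun y hy hq hT => absurd (a2 y hy hq) hT⟩
      (fun j hj x hx hxj => by rw [hoth' j hj x hx hxj]; exact a1)
    exact ⟨_, _, I1, Or.inr a1, hfin'⟩
  · have f : Frame (C i) (o i) z v := ⟨h.cp i, ho i, hzC (right_mem_segment _ _ _), hzC (left_mem_segment _ _ _), hzv,
      fun x hx => by rw [side_swap]; linarith [h4 x hx]⟩
    obtain ⟨a1, a2⟩ := f.apexq hl hl1
    rw [segment_symm] at hsub hoth' hfin'
    have I1 := exit_step h hI hi f hl hl1 hll le_rfl (Or.inr rfl) hll' (by linarith) (fun x hx => (hsub hx).2)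
      ⟨{v}, finite_singleton v, fun y hy hq hT => absurd (a2 y hy hq) hT⟩
      (fun j hj x hx hxj => by rw [hoth' j hj x hx hxj]; exact a1)
    exact ⟨_, _, I1, Or.inr a1, hfin'⟩

lemma enter_vertex_aux [Finite ι] (h : Cells P C) (hl : 0 < l) (hl1 : l < 1)
    (hI : Inv P C o l 𝓔 R S) (hfin : ∀ j ∉ 𝓔, (S ∩ C j).Finite) {c : ι} (hc : c ∉ 𝓔) {v p q : E}
    (f : Frame (C c) (o c) p q) (hv : v = p ∨ v = q)
    (hoth : ∀ d, d ≠ c → C d ∩ segment ℝ p q ⊆ {v}) (hvR : v ∈ R ∨ R = ∅) :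
    ∃ R' S', Inv P C o l (insert c 𝓔) R' S' ∧ ∀ j ∉ insert c 𝓔, (S' ∩ C j).Finite := by
  have hvs : v ∈ segment ℝ p q := by
    rcases hv with rfl | rfl
    · exact left_mem_segment _ _ _
    · exact right_mem_segment _ _ _
  have hRs : R ∩ segment ℝ p q ⊆ {v} := by
    rintro x ⟨hx, hxs⟩
    obtain ⟨i, hi, hxi⟩ := hI.sub x hx
    exact hoth i (fun hh => hc (hh ▸ hi)) ⟨hxi, hxs⟩
  have I1 := enter_step h hI hc f hl hl1 (Set.Subsingleton.convex (subsingleton_singleton.anti hRs))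
    (hvR.imp_left fun hh => ⟨v, hh, hvs⟩) (by
      intro x hx
      have hxs := openSegment_subset_segment _ _ _ hx
      have hxv : x ≠ v := by
        rintro rfl
        obtain ⟨t, t0, t1, e⟩ := openSeg_iff.1 hx
        rcases hv with rfl | rfl
        · have : x + (0:ℝ) • (q - x) = x + t • (q - x) := by rw [← e]; simp
          exact t0.ne (seg_inj f.ne this)
        · have : p + (1:ℝ) • (x - p) = p + t • (x - p) := by rw [← e]; simp
          exact t1.ne' (seg_inj f.ne this)
      have : ∀ᶠ z in 𝓝 x, ∀ d, d ≠ c → z ∉ C d := by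
        rw [eventually_all]
        intro d
        by_cases hd : d = c
        · exact Eventually.of_forall fun z hz => absurd hd hz
        · filter_upwards [(h.isClosed d).isOpen_compl.mem_nhds (show x ∉ C d from fun hh => hxv (hoth d hd ⟨hh, hxs⟩))] with z hz _
          exact hz
      filter_upwards [this] with z hz hzP hs
      rw [← h.union] at hzP
      obtain ⟨d, hzd⟩ := mem_iUnion.1 hzP
      have : d = c := by by_contra hd; exact hz d hd hzd
      subst this
      exact absurd (f.pos z hzd) (not_le.2 hs))
  refine ⟨_, _, I1, fun j hj => ?_⟩
  have hj2 : j ∉ 𝓔 := fun hh => hj (Or.inr hh)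
  refine ((hfin j hj2).union (finite_singleton v)).subset ?_
  rintro x ⟨hx | hx, hxj⟩
  · exact Or.inl ⟨hx, hxj⟩
  · exact Or.inr (hoth j (fun hh => hj (Or.inl hh)) ⟨hxj, hx⟩)

lemma enter_vertex [Finite ι] (h : Cells P C) (ho : ∀ i, o i ∈ interior (C i)) (hl : 0 < l) (hl1 : l < 1)
    (hI : Inv P C o l 𝓔 R S) (hfin : ∀ j ∉ 𝓔, (S ∩ C j).Finite) {c : ι} (hc : c ∉ 𝓔) {v y : E} (hvy : y ≠ v)
    (hfr : segment ℝ v y ⊆ frontier (C c)) (hoth : ∀ d, d ≠ c → C d ∩ segment ℝ v y ⊆ {v}) (hvR : v ∈ R ∨ R = ∅) :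
    ∃ R' S', Inv P C o l (insert c 𝓔) R' S' ∧ ∀ j ∉ insert c 𝓔, (S' ∩ C j).Finite := by
  have hm := mid_mem v y
  have hzC : segment ℝ v y ⊆ C c := hfr.trans (h.isClosed c).frontier_subset
  rcases frontier_side (h.cp c).2.1 (hzC (left_mem_segment _ _ _)) (hzC (right_mem_segment _ _ _)) hm
    (hfr (openSegment_subset_segment _ _ _ hm)).2 with h4 | h4
  · exact enter_vertex_aux h hl hl1 hI hfin hc (p := v) (q := y)
      ⟨h.cp c, ho c, hzC (left_mem_segment _ _ _), hzC (right_mem_segment _ _ _), hvy.symm, h4⟩ (Or.inl rfl) hoth hvR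
  · exact enter_vertex_aux h hl hl1 hI hfin hc (p := y) (q := v)
      ⟨h.cp c, ho c, hzC (right_mem_segment _ _ _), hzC (left_mem_segment _ _ _), hvy,
        fun x hx => by rw [side_swap]; linarith [h4 x hx]⟩ (Or.inr rfl) (by rw [segment_symm]; exact hoth) hvR

lemma link [Finite ι] (h : Cells P C) (hP : IsPreconnected P) (ho : ∀ i, o i ∈ interior (C i)) (hl : 0 < l) (hl1 : l < 1)
    (hI : Inv P C o l 𝓔 R S) (hfin : ∀ j ∉ 𝓔, (S ∩ C j).Finite) (hne : 𝓔.Nonempty) (hnu : 𝓔 ≠ univ) :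
    ∃ c ∉ 𝓔, ∃ R' S', Inv P C o l (insert c 𝓔) R' S' ∧ ∀ j ∉ insert c 𝓔, (S' ∩ C j).Finite := by
  by_cases hsub : ∀ i ∈ 𝓔, ∀ j ∉ 𝓔, (C i ∩ C j).Subsingleton
  swap
  · push Not at hsub
    obtain ⟨i, hi, j, hj, a, ha, b, hb, hab⟩ := hsub
    exact ⟨j, hj, edge_link h ho hl hl1 hI hfin hi hj hab ha hb⟩
  have hv : ∃ v, (∃ i ∈ 𝓔, v ∈ C i) ∧ (∃ j ∉ 𝓔, v ∈ C j) := by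
    have cA : IsClosed (⋃ i ∈ 𝓔, C i) := (Set.toFinite 𝓔).isClosed_biUnion (fun i _ => h.isClosed i)
    have cB : IsClosed (⋃ i ∈ 𝓔ᶜ, C i) := (Set.toFinite 𝓔ᶜ).isClosed_biUnion (fun i _ => h.isClosed i)
    obtain ⟨i, hi⟩ := hne
    obtain ⟨j, hj⟩ := (Set.ne_univ_iff_exists_notMem 𝓔).1 hnu
    obtain ⟨v, hv, h1, h2⟩ := isPreconnected_closed_iff.1 hP _ _ cA cB (by
        intro x hx
        rw [← h.union] at hx
        obtain ⟨k, hk⟩ := mem_iUnion.1 hx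
        by_cases hkE : k ∈ 𝓔
        · exact Or.inl (mem_biUnion hkE hk)
        · exact Or.inr (mem_biUnion (show k ∈ 𝓔ᶜ from hkE) hk))
      ⟨o i, h.sub i (interior_subset (ho i)), mem_biUnion hi (interior_subset (ho i))⟩
      ⟨o j, h.sub j (interior_subset (ho j)), mem_biUnion (show j ∈ 𝓔ᶜ from hj) (interior_subset (ho j))⟩
    obtain ⟨i', hi', h1⟩ := mem_iUnion₂.1 h1
    obtain ⟨j', hj', h2⟩ := mem_iUnion₂.1 h2
    exact ⟨v, ⟨i', hi', h1⟩, ⟨j', hj', h2⟩⟩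
  obtain ⟨v, hvA, hvB⟩ := hv
  have hnear : ∀ᶠ x in 𝓝 v, ∀ i, ∀ j, i ∈ 𝓔 → j ∉ 𝓔 → x ∈ C i → x ∈ C j → x = v := by
    rw [eventually_all]; intro i
    rw [eventually_all]; intro j
    by_cases hvi : v ∈ C i
    · by_cases hvj : v ∈ C j
      · exact Eventually.of_forall fun x hi hj hxi hxj => hsub i hi j hj ⟨hxi, hxj⟩ ⟨hvi, hvj⟩
      · filter_upwards [(h.isClosed j).isOpen_compl.mem_nhds hvj] with x hx _ _ _ hxj
        exact absurd hxj hx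
    · filter_upwards [(h.isClosed i).isOpen_compl.mem_nhds hvi] with x hx _ _ hxi
      exact absurd hxi hx
  have hout : ∀ 𝓑 : Set ι, (∃ j ∉ 𝓑, v ∈ C j) → ∀ U ∈ 𝓝 v, ∃ w ∈ U, ∀ i ∈ 𝓑, w ∉ C i := by
    rintro 𝓑 ⟨j, hj, hvj⟩ U hU
    rw [closure_interior_of (h.cp j) (h.int j)] at hvj
    obtain ⟨w, hw, hwj⟩ := mem_closure_iff_nhds.1 hvj U hU
    exact ⟨w, hw, fun i hi => h.nint (show j ≠ i from fun hh => hj (hh ▸ hi)) hwj⟩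
  obtain ⟨c, hc, hvc, y, hyv, hyf, hyo⟩ := h.lemW 𝓔ᶜ hvB (by
    filter_upwards [hnear] with x hx j hj i hi hxj hxi
    exact hx i j (not_not.1 hi) hj hxi hxj) (hout 𝓔ᶜ (by
      obtain ⟨i, hi, h1⟩ := hvA; exact ⟨i, fun hh => hh hi, h1⟩))
  refine ⟨c, hc, ?_⟩
  by_cases hvR : v ∈ R
  · exact enter_vertex h ho hl hl1 hI hfin hc hyv hyf hyo (Or.inl hvR)
  · obtain ⟨i, hi, hvi, y', hyv', hyf', hyo'⟩ := h.lemW 𝓔 hvA (by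
      filter_upwards [hnear] with x hx i hi j hj hxi hxj
      exact hx i j hi hj hxi hxj) (hout 𝓔 hvB)
    have hvS : v ∉ S := by
      obtain ⟨j, hj, hvj⟩ := hvB
      intro hh
      have : v ∈ R ∩ C j := (hI.out j hj).symm ▸ ⟨hh, hvj⟩
      exact hvR this.1
    obtain ⟨R1, S1, I1, hv1, hfin1⟩ := exit_vertex h ho hl hl1 hI hfin hi hyv' hyf' hyo' hvS
    exact enter_vertex h ho hl hl1 I1 hfin1 hc hyv hyf hyo (Or.inl hv1)

lemma root [Finite ι] (h : Cells P C) (hne : P.Nonempty) (hcomp : IsCompact P) (ho : ∀ i, o i ∈ interior (C i))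
    (hl : 0 < l) (hl1 : l < 1) :
    ∃ c : ι, ∃ R' S', Inv P C o l {c} R' S' ∧ ∀ j ∉ ({c} : Set ι), (S' ∩ C j).Finite := by
  have hnu : P ≠ univ := by
    rintro rfl
    exact noncompact_univ E hcomp
  obtain ⟨v, hv⟩ := nonempty_frontier_iff.2 ⟨hne, hnu⟩
  have hvP := hcomp.isClosed.frontier_subset hv
  obtain ⟨c, _, hvc, y, hyv, hyf, hyo⟩ := h.lemW univ (v := v) (by
      rw [← h.union] at hvP
      obtain ⟨c, hc⟩ := mem_iUnion.1 hvP
      exact ⟨c, mem_univ _, hc⟩) (Eventually.of_forall fun x i _ j hj => absurd (mem_univ j) hj) (by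
      intro U hU
      by_contra hh
      push Not at hh
      apply hv.2
      rw [mem_interior_iff_mem_nhds]
      filter_upwards [hU] with w hw
      obtain ⟨i, _, hi⟩ := hh w hw
      exact h.sub i hi)
  have := enter_vertex (𝓔 := ∅) h ho hl hl1 (inv_nil (o := o) (l := l)) (by simp) (c := c) (by simp) hyv hyf hyo (Or.inr rfl)
  simp only [insert_empty_eq] at this
  exact ⟨c, this⟩

lemma full [Finite ι] (h : Cells P C) (hne : P.Nonempty) (hcomp : IsCompact P) (hP : IsPreconnected P)
    (ho : ∀ i, o i ∈ interior (C i)) (hl : 0 < l) (hl1 : l < 1) :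
    ∃ R, Chain P R ∧ ∀ i, Sc (o i) l (C i) ⊆ R := by
  obtain ⟨c, R0, S0, I0, f0⟩ := root h hne hcomp ho hl hl1
  set X : Set (Set ι) := {𝓔 | 𝓔.Nonempty ∧ ∃ R S, Inv P C o l 𝓔 R S ∧ ∀ j ∉ 𝓔, (S ∩ C j).Finite}
  obtain ⟨m, hm⟩ := (Set.toFinite X).exists_maximal ⟨{c}, ⟨singleton_nonempty c, R0, S0, I0, f0⟩⟩
  obtain ⟨hmn, R, S, hI, hfin⟩ := hm.1
  have hmu : m = univ := by
    by_contra hmu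
    obtain ⟨d, hd, hh⟩ := link h hP ho hl hl1 hI hfin hmn hmu
    have := hm.2 (show insert d m ∈ X from ⟨insert_nonempty _ _, hh⟩) (subset_insert d m)
    exact hd (this (mem_insert d m))
  exact ⟨R, hI.chain, fun i => hI.inner i (hmu ▸ mem_univ i)⟩

end
end PP

namespace PP
open Set Filter Topology

lemma vol_sc (o : E) {l : ℝ} (C : Set E) : volume (Sc o l C) = ENNReal.ofReal (l ^ 2) * volume C := by
  have : Sc o l C = AffineMap.homothety o l '' C := by
    unfold Sc; congr 1; ext1 x; simp [sc, AffineMap.homothety_apply, add_comm]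
  rw [this, Measure.addHaar_image_homothety]
  simp

lemma poly_nonempty {P : Set E} (hP : IsSimplePolygon P) : P.Nonempty := by
  have := hP.2
  obtain ⟨x⟩ : Nonempty P := inferInstance
  exact ⟨x, x.2⟩

lemma poly_vol_pos {P : Set E} (hP : IsSimplePolygon P) : 0 < volume P := by
  have h1 : (interior P).Nonempty := by
    rw [← closure_nonempty_iff, ← hP.1.2.1]; exact poly_nonempty hP
  exact (isOpen_interior.measure_pos volume h1).trans_le (measure_mono interior_subset)

lemma chain_big {P : Set E} (hP : IsSimplePolygon P) {v : ENNReal} (hv : v < volume P) :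
    ∃ R, Chain P R ∧ v ≤ volume R := by
  obtain ⟨ι, hι, C, hC⟩ := cells_exist hP.1
  have := Fintype.ofFinite ι
  have hfin : volume P ≠ ⊤ := hP.1.1.measure_lt_top.ne
  have ht : Tendsto (fun l : ℝ => ENNReal.ofReal (l ^ 2) * volume P) (𝓝[<] 1) (𝓝 (ENNReal.ofReal (1 ^ 2) * volume P)) := by
    refine ENNReal.Tendsto.mul_const ?_ (Or.inr hfin)
    refine (ENNReal.continuous_ofReal.tendsto _).comp ?_
    exact ((continuous_pow 2).tendsto (1:ℝ)).mono_left nhdsWithin_le_nhds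
  rw [one_pow, ENNReal.ofReal_one, one_mul] at ht
  obtain ⟨l, ⟨hl, hl1⟩, hl0⟩ := ((((ht.eventually (lt_mem_nhds hv)).and self_mem_nhdsWithin)).and
    (nhdsWithin_le_nhds (lt_mem_nhds (zero_lt_one' ℝ)))).exists
  choose o ho using hC.int
  have := hP.2
  have hcon : IsPreconnected P := by
    have : IsPathConnected P := isPathConnected_iff_pathConnectedSpace.2 inferInstance
    exact this.isConnected.isPreconnected
  obtain ⟨R, hR, hsub⟩ := full hC (poly_nonempty hP) hP.1.1 hcon ho hl0 hl1
  refine ⟨R, hR, hl.le.trans ?_⟩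
  calc ENNReal.ofReal (l ^ 2) * volume P ≤ ENNReal.ofReal (l ^ 2) * ∑ i, volume (C i) := by
        gcongr
        rw [← hC.union]
        exact measure_iUnion_fintype_le volume C
    _ = ∑ i, volume (Sc (o i) l (C i)) := by
        rw [Finset.mul_sum]; simp [vol_sc]
    _ = volume (⋃ i, Sc (o i) l (C i)) := by
        rw [measure_iUnion, tsum_fintype]
        · intro i j hij
          exact (hC.dis i j hij).mono (Sc_sub (hC.cp i).2.1 (ho i) hl0 hl1) (Sc_sub (hC.cp j).2.1 (ho j) hl0 hl1)
        · exact fun i => (sc_cp (hC.cp i) (o i) hl0.ne').1.isClosed.measurableSet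
    _ ≤ volume R := measure_mono (iUnion_subset hsub)

lemma two_cut {P : Set E} (hP : IsSimplePolygon P) {v : ENNReal} (h0 : 0 < v) (hv : v < volume P) :
    ∃ Q1 Q2 : Set E, IsSimplePolygon Q1 ∧ IsSimplePolygon Q2 ∧ Disjoint (interior Q1) (interior Q2) ∧
      Q1 ∪ Q2 = P ∧ volume Q1 = v ∧ volume Q2 = volume P - v := by
  obtain ⟨R0, hc, hR0⟩ := chain_big hP hv
  obtain ⟨R, hG, hvol⟩ := chain_ivt hP hc v h0 hR0
  have hfin : volume P ≠ ⊤ := hP.1.1.measure_lt_top.ne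
  have hPc := hP.1.1.isClosed
  have hret : Ret R := hG.ret.resolve_right (by rintro rfl; simp at hvol; exact h0.ne hvol)
  have hQP : closure (P \ R) ⊆ P := closure_minimal sdiff_subset hPc
  have hPF : FinSeg (frontier P) := hP.1.2.2
  have hreg : P \ R ⊆ closure (interior (P \ R)) := by
    rintro x ⟨hx, hxR⟩
    rw [hP.1.2.1] at hx
    rw [mem_closure_iff_nhds] at hx ⊢
    intro U hU
    obtain ⟨z, ⟨hzU, hzR⟩, hzi⟩ := hx (interior U ∩ Rᶜ) (inter_mem (interior_mem_nhds.2 hU) (hG.closed.isOpen_compl.mem_nhds hxR))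
    refine ⟨z, interior_subset hzU, ?_⟩
    rw [sdiff_eq, interior_inter, hG.closed.isOpen_compl.interior_eq]
    exact ⟨hzi, hzR⟩
  have hdisj : ∀ x ∈ interior R, x ∉ closure (P \ R) := by
    intro x hx hxc
    obtain ⟨z, hz, hz'⟩ := mem_closure_iff.1 hxc _ isOpen_interior hx
    exact hz'.2 (interior_subset hz)
  refine ⟨R, closure (P \ R), ⟨⟨hP.1.1.of_isClosed_subset hG.closed hG.sub, hG.reg, hG.fs⟩, hret.sc⟩,
    ⟨⟨hP.1.1.of_isClosed_subset isClosed_closure hQP, ?_, ?_⟩, hG.sc⟩, ?_, ?_, hvol, ?_⟩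
  · apply Subset.antisymm
    · refine closure_minimal (hreg.trans (closure_mono (interior_mono subset_closure))) isClosed_closure
    · exact closure_minimal interior_subset isClosed_closure
  · refine (hPF.union hG.fs).mono ?_
    refine frontier_closure_subset.trans ?_
    rw [sdiff_eq]
    refine (frontier_inter_subset _ _).trans ?_
    rw [frontier_compl]
    exact union_subset_union inter_subset_left inter_subset_right
  · rw [Set.disjoint_left]
    exact fun x hx hx' => hdisj x hx (interior_subset hx')
  · apply Subset.antisymm (union_subset hG.sub hQP)
    intro x hx
    by_cases hxR : x ∈ R
    · exact Or.inl hxR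
    · exact Or.inr (subset_closure ⟨hx, hxR⟩)
  · rw [← hvol, ← measure_sdiff hG.sub hG.closed.measurableSet.nullMeasurableSet
      (ne_top_of_le_ne_top hfin (measure_mono hG.sub))]
    refine le_antisymm ?_ (measure_mono subset_closure)
    have : closure (P \ R) ⊆ (P \ R) ∪ frontier R := by
      intro x hx
      by_cases hxR : x ∈ R
      · exact Or.inr ⟨subset_closure hxR, fun hi => hdisj x hi hx⟩
      · exact Or.inl ⟨hQP hx, hxR⟩
    calc _ ≤ volume ((P \ R) ∪ frontier R) := measure_mono this
      _ ≤ volume (P \ R) + volume (frontier R) := measure_union_le _ _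
      _ = volume (P \ R) := by rw [hG.fs.null, add_zero]

lemma main (k : ℕ) : ∀ (P : Set E) (_ : IsSimplePolygon P) (a : Fin k → ℝ) (_ : ∀ i, 0 < a i)
    (_ : volume P = ENNReal.ofReal (∑ i, a i)),
    ∃ Q : Fin k → Set E, (∀ i, IsSimplePolygon (Q i)) ∧
      (Pairwise fun i j => Disjoint (interior (Q i)) (interior (Q j))) ∧
      (⋃ i, Q i) = P ∧ ∀ i, volume (Q i) = ENNReal.ofReal (a i) := by
  induction k with
  | zero =>
    intro P hP a _ hs
    have := poly_vol_pos hP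
    simp [hs] at this
  | succ k ih =>
    intro P hP a ha hs
    rcases Nat.eq_zero_or_pos k with rfl | hk
    · have hS : Subsingleton (Fin (0 + 1)) := inferInstanceAs (Subsingleton (Fin 1))
      refine ⟨fun _ => P, fun _ => hP, fun i j hij => absurd (Subsingleton.elim i j) hij, by simp [iUnion_const], ?_⟩
      intro i
      rw [hs, Subsingleton.elim i 0]; simp
    · rw [Fin.sum_univ_succ] at hs
      have hpos : 0 < ∑ i : Fin k, a i.succ := Finset.sum_pos (fun i _ => ha _) ⟨⟨0, hk⟩, Finset.mem_univ _⟩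
      rw [ENNReal.ofReal_add (ha 0).le hpos.le] at hs
      obtain ⟨Q1, Q2, h1, h2, hd, hu, hv1, hv2⟩ := two_cut hP (v := ENNReal.ofReal (a 0)) (by simpa using ha 0) (by
        rw [hs]; exact ENNReal.lt_add_right ENNReal.ofReal_ne_top (by simpa using hpos))
      rw [hs, ENNReal.add_sub_cancel_left ENNReal.ofReal_ne_top] at hv2
      obtain ⟨Q, q1, q2, q3, q4⟩ := ih Q2 h2 (fun i => a i.succ) (fun i => ha _) hv2
      have hsub : ∀ i, interior (Q i) ⊆ interior Q2 := fun i => interior_mono (q3 ▸ subset_iUnion Q i)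
      refine ⟨Fin.cons Q1 Q, ?_, ?_, ?_, ?_⟩
      · intro i
        refine Fin.cases ?_ (fun i => ?_) i
        · simpa using h1
        · simpa using q1 i
      · intro i j
        refine Fin.cases ?_ (fun i => ?_) i <;> refine Fin.cases ?_ (fun j => ?_) j
        · intro h; exact absurd rfl h
        · intro _
          simpa using hd.mono_right (hsub j)
        · intro _
          simpa using (hd.mono_right (hsub i)).symm
        · intro hij
          simpa using q2 (fun hh => hij (by rw [hh]))
      · rw [← hu, ← q3]
        ext x
        simp
      · intro i
        refine Fin.cases ?_ (fun i => ?_) i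
        · simpa using hv1
        · simpa using q4 i

end PP

theorem area_partition_of_simple_polygon
    (P : Set (EuclideanSpace ℝ (Fin 2))) (hP : IsSimplePolygon P)
    (k : ℕ) (a : Fin k → ℝ) (ha : ∀ i, 0 < a i)
    (hsum : volume P = ENNReal.ofReal (∑ i, a i)) :
    ∃ Q : Fin k → Set (EuclideanSpace ℝ (Fin 2)),
      (∀ i, IsSimplePolygon (Q i)) ∧
      (Pairwise fun i j => Disjoint (interior (Q i)) (interior (Q j))) ∧
      (⋃ i, Q i) = P ∧
      ∀ i, volume (Q i) = ENNReal.ofReal (a i) := by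
  exact PP.main k P hP a ha hsum
end

section
/- Let a, b, c ∈ ℝ² and let α be a real number with 0 ≤ α ≤ area(conv{a, b, c}). Then there exists a point d on the closed segment from b to c such that area(conv{a, b, d}) = α. -/
open MeasureTheory

noncomputable def cutMap (u v : EuclideanSpace ℝ (Fin 2)) :
    EuclideanSpace ℝ (Fin 2) →ₗ[ℝ] EuclideanSpace ℝ (Fin 2) where
  toFun x := x 0 • u + x 1 • v
  map_add' x y := by simp only [PiLp.add_apply]; module
  map_smul' r x := by simp only [PiLp.smul_apply, smul_eq_mul, RingHom.id_apply]; module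

theorem cutMap_det (u v : EuclideanSpace ℝ (Fin 2)) :
    LinearMap.det (cutMap u v) = u 0 * v 1 - v 0 * u 1 := by
  rw [← LinearMap.det_toMatrix (EuclideanSpace.basisFun (Fin 2) ℝ).toBasis, Matrix.det_fin_two]
  simp [LinearMap.toMatrix_apply, cutMap]

theorem volume_tri (a b c : EuclideanSpace ℝ (Fin 2)) :
    volume (convexHull ℝ ({a, b, c} : Set (EuclideanSpace ℝ (Fin 2)))) =
      ENNReal.ofReal |(a - b) 0 * (c - b) 1 - (c - b) 0 * (a - b) 1| *
      volume (convexHull ℝ ({!₂[1, 0], 0, !₂[0, 1]} : Set (EuclideanSpace ℝ (Fin 2)))) := by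
  rw [← cutMap_det, ← Measure.addHaar_image_linearMap, LinearMap.image_convexHull,
    ← measure_preimage_add_right volume b]
  congr 1
  have h : ({a, b, c} : Set (EuclideanSpace ℝ (Fin 2))) =
      (fun x => b + x) '' (cutMap (a - b) (c - b) '' {!₂[1, 0], 0, !₂[0, 1]}) := by
    simp [Set.image_insert_eq, cutMap]
  rw [h]
  have := convexHull_vadd (𝕜 := ℝ) b
    (cutMap (a - b) (c - b) '' {!₂[1, 0], 0, !₂[0, 1]})
  change convexHull ℝ ((fun x => b + x) '' _) = (fun x => b + x) '' _ at this
  rw [this]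
  ext x
  simp [add_comm]

theorem exists_cut_point_with_area (a b c : EuclideanSpace ℝ (Fin 2)) (α : ℝ)
    (hα : 0 ≤ α)
    (hα' : ENNReal.ofReal α ≤ volume (convexHull ℝ ({a, b, c} : Set (EuclideanSpace ℝ (Fin 2))))) :
    ∃ d ∈ segment ℝ b c,
      volume (convexHull ℝ ({a, b, d} : Set (EuclideanSpace ℝ (Fin 2)))) = ENNReal.ofReal α := by
  have key : ∀ t : ℝ, 0 ≤ t →
      volume (convexHull ℝ ({a, b, b + t • (c - b)} : Set (EuclideanSpace ℝ (Fin 2)))) =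
      ENNReal.ofReal t *
        volume (convexHull ℝ ({a, b, c} : Set (EuclideanSpace ℝ (Fin 2)))) := by
    intro t ht
    rw [volume_tri a b c, volume_tri, ← mul_assoc, ← ENNReal.ofReal_mul ht]
    congr 2
    have e (x : ℝ) : t * |x| = |t * x| := by rw [abs_mul, abs_of_nonneg ht]
    rw [e]
    congr 1
    simp
    ring
  have hfin : volume (convexHull ℝ ({a, b, c} : Set (EuclideanSpace ℝ (Fin 2)))) ≠ ⊤ :=
    ((Set.toFinite _).isCompact_convexHull ℝ).measure_lt_top.ne
  generalize volume (convexHull ℝ ({a, b, c} : Set (EuclideanSpace ℝ (Fin 2)))) = V at *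
  lift V to NNReal using hfin
  have hle : α ≤ V := by
    rw [← ENNReal.ofReal_coe_nnreal] at hα'
    exact (ENNReal.ofReal_le_ofReal_iff V.2).1 hα'
  have h0 : 0 ≤ α / V := div_nonneg hα V.2
  refine ⟨b + (α / V) • (c - b), ?_, ?_⟩
  · rw [segment_eq_image']
    exact ⟨α / V, ⟨h0, div_le_one_of_le₀ hle V.2⟩, rfl⟩
  · rw [key _ h0, ← ENNReal.ofReal_coe_nnreal, ← ENNReal.ofReal_mul h0]
    congr 1
    apply div_mul_cancel_of_imp
    intro h
    linarith
end

section
/- Let L > 0 and let g : ℝ → ℝ be a function satisfying: (i) g is monotone (x ≤ y implies g(x) ≤ g(y)); (ii) x ≤ g(x) for all x; and (iii) g(x + L) = g(x) + L for all x. Suppose there exist real numbers t_0 ≤ t_1 ≤ ⋯ ≤ t_m with t_m = t_0 + L and t_{i+1} ≤ g(t_i) for every 0 ≤ i < m. Then for every x ∈ ℝ, the (m+1)-fold iterate of g satisfies g^[m+1](x) ≥ x + L. -/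
theorem greedy_boundary_wraps (L : ℝ) (hL : 0 < L) (g : ℝ → ℝ)
    (hmono : ∀ x y : ℝ, x ≤ y → g x ≤ g y)
    (hle : ∀ x : ℝ, x ≤ g x)
    (hper : ∀ x : ℝ, g (x + L) = g x + L)
    (m : ℕ) (t : Fin (m + 1) → ℝ) (ht : Monotone t)
    (hlast : t (Fin.last m) = t 0 + L)
    (hcov : ∀ i : Fin m, t i.succ ≤ g (t i.castSucc)) :
    ∀ x : ℝ, x + L ≤ g^[m + 1] x := by
  intro x
  have hz : ∀ (z : ℤ) (y : ℝ), g (y + z * L) = g y + z * L := by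
    intro z
    induction z using Int.induction_on with
    | zero => intro y; simp
    | succ k ih =>
      intro y
      have h1 := hper (y + (k : ℤ) * L)
      rw [ih] at h1
      have e : y + ((k + 1 : ℤ) : ℝ) * L = y + ((k : ℤ) : ℝ) * L + L := by push_cast; ring
      rw [e, h1]; push_cast; ring
    | pred k ih =>
      intro y
      have h1 := hper (y + ((-(k : ℤ) - 1 : ℤ) : ℝ) * L)
      have e : y + ((-(k : ℤ) - 1 : ℤ) : ℝ) * L + L = y + ((-(k : ℤ) : ℤ) : ℝ) * L := by
        push_cast; ring
      rw [e, ih] at h1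
      push_cast at h1 ⊢
      linarith
  obtain ⟨z, hz1, hz2⟩ : ∃ z : ℤ, t 0 + z * L ≤ x ∧ x < t 0 + z * L + L := by
    refine ⟨⌊(x - t 0) / L⌋, ?_, ?_⟩
    · have := Int.floor_le ((x - t 0) / L)
      rw [le_div_iff₀ hL] at this
      linarith
    · have := Int.lt_floor_add_one ((x - t 0) / L)
      rw [div_lt_iff₀ hL] at this
      linarith
  obtain ⟨v, hv0, hvm, hv⟩ : ∃ v : ℕ → ℝ, v 0 = t 0 + z * L ∧ v m = v 0 + L ∧
      ∀ n < m, v (n + 1) ≤ g (v n) := by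
    refine ⟨fun n => if h : n < m + 1 then t ⟨n, h⟩ + z * L else 0, ?_, ?_, ?_⟩
    · simp
    · have : t ⟨m, Nat.lt_succ_self m⟩ = t 0 + L := hlast
      simp [this]; ring
    · intro n hn
      have h1 : n + 1 < m + 1 := by omega
      have h2 : n < m + 1 := by omega
      have := hcov ⟨n, hn⟩
      simp only [h1, h2, dif_pos, hz]
      simpa using this
  have A : ∀ k i y, i + k ≤ m → v i ≤ y → v (i + k) ≤ g^[k] y := by
    intro k
    induction k with
    | zero => intro i y _ h; simpa using h
    | succ k ih =>
      intro i y hk h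
      rw [Function.iterate_succ_apply', ← add_assoc]
      exact (hv _ (by omega)).trans (hmono _ _ (ih i y (by omega) h))
  have hI : ∀ k y, g^[k] (y + L) = g^[k] y + L := by
    intro k
    induction k with
    | zero => intro y; rfl
    | succ k ih => intro y; simp only [Function.iterate_succ_apply', ih, hper]
  have hM : Monotone g := fun a b h => hmono a b h
  have hex : ∃ n, n ≤ m ∧ x < v n := ⟨m, le_rfl, by rw [hvm, hv0]; exact hz2⟩
  classical
  obtain ⟨hn1, hn2⟩ := Nat.find_spec hex
  have hmin := fun k => @Nat.find_min _ _ hex k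
  generalize Nat.find hex = n at hn1 hn2 hmin
  obtain _ | i := n
  · rw [hv0] at hn2; linarith
  have hi : v i ≤ x := by
    by_contra h
    exact hmin i (by omega) ⟨by omega, not_le.1 h⟩
  have h1 := A (m - i) i x (by omega) hi
  rw [show i + (m - i) = m by omega, hvm] at h1
  have h2 := A (i + 1) 0 (v 0) (by omega) le_rfl
  have h3 := hM.iterate (i + 1) h1
  rw [hI, ← Function.iterate_add_apply, show i + 1 + (m - i) = m + 1 by omega] at h3
  rw [Nat.zero_add] at h2
  linarith
end

section
/- Let α be a type and let l be a list of elements of α of length n ≥ 1, and let m ≥ 2 be the number of distinct elements occurring in l. Suppose that for every cyclic rotation l' of l: (i) no two consecutive entries of l' are equal, and (ii) l' has no (not necessarily contiguous) subsequence of the form [x, y, x, y] with x ≠ y. Then n ≤ 2m − 2. -/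
theorem ds_linear {α : Type*} [DecidableEq α] (n : ℕ) : ∀ l : List α, l.length ≤ n → l ≠ [] →
    l.IsChain (· ≠ ·) → (∀ x y : α, x ≠ y → ¬ List.Sublist [x, y, x, y] l) →
    l.length + 1 ≤ 2 * l.toFinset.card := by
  induction n with
  | zero =>
    intro l h h0
    exact absurd (List.length_eq_zero_iff.1 (Nat.le_zero.1 h)) h0
  | succ n ih =>
    intro l hl h0 hc hs
    obtain ⟨a, t, rfl⟩ := List.exists_cons_of_ne_nil h0
    simp only [List.length_cons] at hl ⊢
    by_cases ha : a ∈ t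
    · obtain ⟨u, v, rfl, hu⟩ := List.eq_append_cons_of_mem ha
      simp only [List.length_append, List.length_cons] at hl ⊢
      have hu0 : u ≠ [] := by
        rintro rfl
        simp at hc
      have hct : (u ++ a :: v).IsChain (· ≠ ·) := hc.tail
      have h1 := ih u (by omega) hu0 hct.left_of_append
        (fun x y hxy h => hs x y hxy (h.trans ((List.sublist_append_left _ _).cons _)))
      have h2 := ih (a :: v) (by simp; omega) (by simp) hct.right_of_append
        (fun x y hxy h => hs x y hxy (h.trans ((List.sublist_append_right _ _).cons _)))
      have hd : Disjoint u.toFinset (a :: v).toFinset := by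
        rw [Finset.disjoint_left]
        intro x hx hx'
        rw [List.mem_toFinset] at hx hx'
        have hxa : a ≠ x := by
          rintro rfl
          exact hu hx
        have hxv : x ∈ v := by
          rcases List.mem_cons.1 hx' with h | h
          · exact absurd h.symm hxa
          · exact h
        refine hs a x hxa (List.Sublist.cons_cons a ?_)
        exact (List.singleton_sublist.2 hx).append
          (List.Sublist.cons_cons a (List.singleton_sublist.2 hxv))
      have he : (a :: (u ++ a :: v)).toFinset = u.toFinset ∪ (a :: v).toFinset := by
        ext x
        simp
      rw [he, Finset.card_union_of_disjoint hd]
      simp only [List.length_cons] at h2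
      omega
    · rw [List.toFinset_cons, Finset.card_insert_of_notMem (by simpa using ha)]
      by_cases ht : t = []
      · subst ht
        simp
      · have := ih t (by omega) ht hc.tail (fun x y hxy h => hs x y hxy (h.cons _))
        omega

theorem cyclic_davenport_schinzel {α : Type*} [DecidableEq α] (l : List α)
    (hn : 1 ≤ l.length) (hm : 2 ≤ l.toFinset.card)
    (hconsec : ∀ k : ℕ, (l.rotate k).Chain' (· ≠ ·))
    (halt : ∀ k : ℕ, ∀ x y : α, x ≠ y → ¬ List.Sublist [x, y, x, y] (l.rotate k)) :
    l.length ≤ 2 * l.toFinset.card - 2 := by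
  obtain ⟨a, t, rfl⟩ := List.exists_cons_of_ne_nil (List.length_pos_iff.1 hn)
  have h0 : (a :: t).IsChain (· ≠ ·) := by
    have h : List.IsChain _ _ := hconsec 0
    simpa using h
  have h1 : (t ++ [a]).IsChain (· ≠ ·) := by
    have h : List.IsChain _ _ := hconsec 1
    simpa using h
  have hs : ∀ x y : α, x ≠ y → ¬ List.Sublist [x, y, x, y] (a :: t) := by
    simpa using halt 0
  have hs1 : ∀ x y : α, x ≠ y → ¬ List.Sublist [x, y, x, y] (t ++ [a]) := by
    simpa using halt 1
  have ht : t ≠ [] := by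
    rintro rfl
    simp at hm
  have hc : (a :: (t ++ [a])).IsChain (· ≠ ·) := by
    obtain ⟨b, s, rfl⟩ := List.exists_cons_of_ne_nil ht
    simp only [List.cons_append, List.isChain_cons_cons] at h0 h1 ⊢
    exact ⟨h0.1, h1⟩
  have key := ds_linear _ (a :: (t ++ [a])) le_rfl (by simp) hc (by
    intro x y hxy h
    cases h with
    | cons _ h => exact hs1 x y hxy h
    | cons_cons _ h =>
      obtain ⟨p, q, hpq, hp, hq⟩ := List.sublist_append_iff.1 h
      rcases List.sublist_singleton.1 hq with rfl | rfl
      · rw [List.append_nil] at hpq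
        subst hpq
        exact hs _ y hxy (hp.cons_cons _)
      · have := congrArg List.getLast? hpq
        simp at this
        exact hxy this.symm)
  have he : (a :: (t ++ [a])).toFinset = (a :: t).toFinset := by
    ext x
    simp
  rw [he] at key
  simp only [List.length_cons, List.length_append, List.length_nil] at key ⊢
  omega
end

section
/- Let s ≥ 0 and let a, b, c be three points in the square [0, s] × [0, s] ⊆ ℝ². Then dist(a, b) + dist(b, c) + dist(c, a) ≤ (2 + √2)·s. -/
theorem aux_hyp (k u v : ℝ) (hk : 0 ≤ k) (hk2 : k ^ 2 + 2 * k = 1) (hu : 0 ≤ u) (hv : 0 ≤ v) :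
    √(u ^ 2 + v ^ 2) ≤ u + k * v ∨ √(u ^ 2 + v ^ 2) ≤ v + k * u := by
  rcases le_total v u with h | h
  · left
    apply Real.sqrt_le_iff.2 ⟨by positivity, ?_⟩
    have h1 : 0 ≤ k * (v * (u - v)) := mul_nonneg hk (mul_nonneg hv (sub_nonneg.2 h))
    have h2 : (u + k * v) ^ 2 - (u ^ 2 + v ^ 2)
      = 2 * (k * (v * (u - v))) + (k ^ 2 + 2 * k - 1) * v ^ 2 := by ring
    rw [hk2] at h2
    linarith
  · right
    apply Real.sqrt_le_iff.2 ⟨by positivity, ?_⟩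
    have h1 : 0 ≤ k * (u * (v - u)) := mul_nonneg hk (mul_nonneg hu (sub_nonneg.2 h))
    have h2 : (v + k * u) ^ 2 - (u ^ 2 + v ^ 2)
      = 2 * (k * (u * (v - u))) + (k ^ 2 + 2 * k - 1) * u ^ 2 := by ring
    rw [hk2] at h2
    linarith

theorem aux_sum (s x y z : ℝ) (hx : x ∈ Set.Icc 0 s) (hy : y ∈ Set.Icc 0 s)
    (hz : z ∈ Set.Icc 0 s) : |x - y| + |y - z| + |z - x| ≤ 2 * s ∧
    |x - y| ≤ s ∧ |y - z| ≤ s ∧ |z - x| ≤ s := by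
  obtain ⟨_, _⟩ := hx
  obtain ⟨_, _⟩ := hy
  obtain ⟨_, _⟩ := hz
  refine ⟨?_, ?_, ?_, ?_⟩
  · rcases abs_cases (x - y) with h | h <;> rcases abs_cases (y - z) with h' | h' <;>
      rcases abs_cases (z - x) with h'' | h'' <;> linarith
  all_goals rw [abs_le]; constructor <;> linarith

theorem triangle_perimeter_in_square (s : ℝ) (hs : 0 ≤ s)
    (a b c : EuclideanSpace ℝ (Fin 2))
    (ha : ∀ i, a i ∈ Set.Icc (0 : ℝ) s)
    (hb : ∀ i, b i ∈ Set.Icc (0 : ℝ) s)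
    (hc : ∀ i, c i ∈ Set.Icc (0 : ℝ) s) :
    dist a b + dist b c + dist c a ≤ (2 + Real.sqrt 2) * s := by
  obtain ⟨k, hk⟩ : ∃ k, k = √2 - 1 := ⟨_, rfl⟩
  have hq : √2 = k + 1 := by linarith
  have hsq : √2 ^ 2 = 2 := Real.sq_sqrt (by norm_num)
  have hk2 : k ^ 2 + 2 * k = 1 := by rw [hq] at hsq; linarith
  have hk0 : 0 ≤ k := by
    have : 1 ≤ √2 := Real.one_le_sqrt.2 (by norm_num)
    linarith
  have hk1 : 0 ≤ 1 - k := by nlinarith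
  simp only [EuclideanSpace.dist_eq, Fin.sum_univ_two, Real.dist_eq]
  obtain ⟨hu, hu1, hu2, hu3⟩ := aux_sum s _ _ _ (ha 0) (hb 0) (hc 0)
  obtain ⟨hv, hv1, hv2, hv3⟩ := aux_sum s _ _ _ (ha 1) (hb 1) (hc 1)
  rw [hq]
  have p1 := abs_nonneg (a 0 - b 0)
  have p2 := abs_nonneg (b 0 - c 0)
  have p3 := abs_nonneg (c 0 - a 0)
  have q1 := abs_nonneg (a 1 - b 1)
  have q2 := abs_nonneg (b 1 - c 1)
  have q3 := abs_nonneg (c 1 - a 1)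
  generalize |a 0 - b 0| = u1 at *
  generalize |b 0 - c 0| = u2 at *
  generalize |c 0 - a 0| = u3 at *
  generalize |a 1 - b 1| = v1 at *
  generalize |b 1 - c 1| = v2 at *
  generalize |c 1 - a 1| = v3 at *
  have m0 := mul_nonneg hk1 hs
  have mu := mul_le_mul_of_nonneg_left hu hk0
  have mv := mul_le_mul_of_nonneg_left hv hk0
  have a1 := mul_nonneg hk1 p1
  have a2 := mul_nonneg hk1 p2
  have a3 := mul_nonneg hk1 p3
  have b1 := mul_nonneg hk1 q1
  have b2 := mul_nonneg hk1 q2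
  have b3 := mul_nonneg hk1 q3
  have c1 := mul_le_mul_of_nonneg_left hu1 hk1
  have c2 := mul_le_mul_of_nonneg_left hu2 hk1
  have c3 := mul_le_mul_of_nonneg_left hu3 hk1
  have d1 := mul_le_mul_of_nonneg_left hv1 hk1
  have d2 := mul_le_mul_of_nonneg_left hv2 hk1
  have d3 := mul_le_mul_of_nonneg_left hv3 hk1
  rcases aux_hyp k u1 v1 hk0 hk2 p1 q1 with h1 | h1 <;>
  rcases aux_hyp k u2 v2 hk0 hk2 p2 q2 with h2 | h2 <;>
  rcases aux_hyp k u3 v3 hk0 hk2 p3 q3 with h3 | h3 <;>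
  linarith
end

section
/- Let K and L be compact convex subsets of ℝ² with K ⊆ L. Then the 1-dimensional Hausdorff measure of the frontier of K is at most the 1-dimensional Hausdorff measure of the frontier of L, i.e., μH¹(∂K) ≤ μH¹(∂L). -/
open MeasureTheory

theorem aux_ray_frontier {E : Type*} [NormedAddCommGroup E] [NormedSpace ℝ E]
    (L : Set E) (hL : IsCompact L) (p n : E) (hp : p ∈ L) (hn : n ≠ 0) :
    ∃ t : ℝ, 0 ≤ t ∧ p + t • n ∈ frontier L := by
  have hg : Continuous (fun t : ℝ => p + t • n) := by fun_prop
  obtain ⟨R, hR⟩ := hL.isBounded.exists_norm_le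
  have hnpos : 0 < ‖n‖ := norm_pos_iff.mpr hn
  let S : Set ℝ := Set.Icc 0 ((R + ‖p‖) / ‖n‖) ∩ (fun t : ℝ => p + t • n) ⁻¹' L
  have hbd : ∀ t : ℝ, 0 ≤ t → p + t • n ∈ L → t ∈ S := by
    intro t ht h
    refine ⟨⟨ht, ?_⟩, h⟩
    rw [le_div_iff₀ hnpos]
    have h1 : ‖t • n‖ = t * ‖n‖ := by rw [norm_smul, Real.norm_of_nonneg ht]
    have h2 : ‖t • n‖ ≤ ‖p + t • n‖ + ‖p‖ := by
      have := norm_sub_le (p + t • n) p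
      simpa using this
    have := hR _ h
    linarith
  have hS : IsCompact S := isCompact_Icc.inter_right (hL.isClosed.preimage hg)
  have hne : S.Nonempty := ⟨0, hbd 0 le_rfl (by simpa using hp)⟩
  obtain ⟨t, htS, hmax⟩ := hS.exists_isGreatest hne
  refine ⟨t, htS.1.1, subset_closure htS.2, fun hint => ?_⟩
  have hev : ∀ᶠ s in nhds t, p + s • n ∈ L :=
    hg.continuousAt.eventually (mem_interior_iff_mem_nhds.mp hint)
  obtain ⟨ε, hε, hball⟩ := Metric.eventually_nhds_iff.mp hev
  have h1 : p + (t + ε / 2) • n ∈ L := hball (by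
    rw [Real.dist_eq, add_sub_cancel_left, abs_of_pos (by positivity)]; linarith)
  have := hmax (hbd (t + ε / 2) (by have := htS.1.1; linarith) h1)
  linarith

theorem aux_proj_le {E : Type*} [NormedAddCommGroup E] [InnerProductSpace ℝ E]
    (x y a b : E) (h1 : inner ℝ (x - a) (b - a) ≤ 0) (h2 : inner ℝ (y - b) (a - b) ≤ 0) :
    ‖a - b‖ ≤ ‖x - y‖ := by
  have h3 : ‖a - b‖ * ‖a - b‖ ≤ inner ℝ (x - y) (a - b) := by
    rw [← real_inner_self_eq_norm_mul_norm]
    simp only [inner_sub_left, inner_sub_right] at *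
    linarith
  have h4 := real_inner_le_norm (x - y) (a - b)
  by_contra hlt
  push Not at hlt
  nlinarith [norm_nonneg (x - y), norm_nonneg (a - b)]

theorem perimeter_mono_of_convex_subset
    (K L : Set (EuclideanSpace ℝ (Fin 2)))
    (hKc : IsCompact K) (hKconv : Convex ℝ K)
    (hLc : IsCompact L) (hLconv : Convex ℝ L)
    (hKL : K ⊆ L) :
    μH[1] (frontier K) ≤ μH[1] (frontier L) := by
  rcases K.eq_empty_or_nonempty with rfl | hne
  · simp
  have hex : ∀ u, ∃ v ∈ K, ∀ w ∈ K, inner ℝ (u - v) (w - v) ≤ 0 := by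
    intro u
    obtain ⟨v, hv, h⟩ := exists_norm_eq_iInf_of_complete_convex hne hKc.isComplete hKconv u
    exact ⟨v, hv, (norm_eq_iInf_iff_real_inner_le_zero hKconv hv).mp h⟩
  choose P hPK hP using hex
  have hlip : LipschitzWith 1 P := LipschitzWith.of_dist_le_mul fun x y => by
    rw [dist_eq_norm, dist_eq_norm, NNReal.coe_one, one_mul]
    exact aux_proj_le x y _ _ (hP x _ (hPK y)) (hP y _ (hPK x))
  have huniq : ∀ u v, v ∈ K → (∀ w ∈ K, inner ℝ (u - v) (w - v) ≤ 0) → P u = v := by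
    intro u v hv h
    have := aux_proj_le u u _ _ (hP u _ hv) (h _ (hPK u))
    rw [sub_self, norm_zero] at this
    exact sub_eq_zero.mp (norm_le_zero_iff.mp this)
  have hfc : IsCompact (frontier L) :=
    hLc.of_isClosed_subset isClosed_frontier hLc.isClosed.frontier_subset
  have hcl : IsClosed (P '' frontier L) := (hfc.image hlip.continuous).isClosed
  have hout : ∀ y ∉ K, P y ∈ P '' frontier L := by
    intro y hy
    have hn : y - P y ≠ 0 := fun h => hy (by rw [sub_eq_zero.mp h]; exact hPK y)
    obtain ⟨t, ht, hfr⟩ := aux_ray_frontier L hLc (P y) (y - P y) (hKL (hPK y)) hn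
    refine ⟨_, hfr, huniq _ _ (hPK y) fun w hw => ?_⟩
    rw [add_sub_cancel_left, real_inner_smul_left]
    exact mul_nonpos_of_nonneg_of_nonpos ht (hP y w hw)
  have hsub : frontier K ⊆ P '' frontier L := by
    intro x hx
    have hxK : x ∈ K := hKc.isClosed.frontier_subset hx
    have hPx : P x = x := huniq x x hxK (by simp)
    rw [← hPx, ← hcl.closure_eq]
    have hxc : x ∈ closure Kᶜ := by
      rw [frontier_eq_closure_inter_closure] at hx
      exact hx.2
    exact map_mem_closure hlip.continuous hxc hout
  calc μH[1] (frontier K) ≤ μH[1] (P '' frontier L) := measure_mono hsub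
    _ ≤ μH[1] (frontier L) := by
      simpa using hlip.hausdorffMeasure_image_le zero_le_one (frontier L)
end

section
/- Let P be a simply connected polygonal region in the plane (a simple polygon). Then there exists a finite family of sets Q_1, …, Q_k ⊆ ℝ², each of which is the convex hull of a finite set of points, such that the interiors of the Q_i are pairwise disjoint, the union Q_1 ∪ ⋯ ∪ Q_k equals P, and each Q_i has perimeter at most 1, where the perimeter of Q_i is the 1-dimensional Hausdorff measure of its frontier. -/
open MeasureTheory

local notation "E2" => EuclideanSpace ℝ (Fin 2)

/-- closed cell -/
def ccell {ι : Type} (n : ι → E2) (c : ι → ℝ) : Set E2 := {x | ∀ i, inner ℝ (n i) x ≤ c i}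
/-- open cell -/
def ocell {ι : Type} (n : ι → E2) (c : ι → ℝ) : Set E2 := {x | ∀ i, inner ℝ (n i) x < c i}

lemma ccell_closed {ι : Type} (n : ι → E2) (c : ι → ℝ) : IsClosed (ccell n c) := by
  have : ccell n c = ⋂ i, {x | inner ℝ (n i) x ≤ c i} := by ext; simp [ccell]
  rw [this]
  exact isClosed_iInter fun i => isClosed_le (by fun_prop) (by fun_prop)

lemma ocell_open {ι : Type} [Finite ι] (n : ι → E2) (c : ι → ℝ) : IsOpen (ocell n c) := by
  have : ocell n c = ⋂ i, {x | inner ℝ (n i) x < c i} := by ext; simp [ocell]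
  rw [this]
  exact isOpen_iInter_of_finite fun i => isOpen_lt (by fun_prop) (by fun_prop)

lemma ccell_convex {ι : Type} (n : ι → E2) (c : ι → ℝ) : Convex ℝ (ccell n c) := by
  intro x hx y hy a b ha hb hab i
  rw [inner_add_right, inner_smul_right, inner_smul_right]
  have h1 := mul_le_mul_of_nonneg_left (hx i) ha
  have h2 := mul_le_mul_of_nonneg_left (hy i) hb
  have : a * c i + b * c i = c i := by rw [← add_mul, hab, one_mul]
  linarith

lemma cell_mix {ι : Type} (n : ι → E2) (c : ι → ℝ) {x y : E2} (hx : x ∈ ocell n c)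
    (hy : y ∈ ccell n c) {a b : ℝ} (ha : 0 < a) (hb : 0 ≤ b) (hab : a + b = 1) :
    a • x + b • y ∈ ocell n c := by
  intro i
  rw [inner_add_right, inner_smul_right, inner_smul_right]
  have h1 := mul_lt_mul_of_pos_left (hx i) ha
  have h2 := mul_le_mul_of_nonneg_left (hy i) hb
  have : a * c i + b * c i = c i := by rw [← add_mul, hab, one_mul]
  linarith

lemma ocell_sub {ι : Type} (n : ι → E2) (c : ι → ℝ) : ocell n c ⊆ ccell n c :=
  fun _ hx i => (hx i).le

lemma ocell_convex {ι : Type} (n : ι → E2) (c : ι → ℝ) : Convex ℝ (ocell n c) := by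
  intro x hx y hy a b ha hb hab
  rcases ha.eq_or_lt with rfl | h
  · have : b = 1 := by linarith
    subst this
    simpa using hy
  · exact cell_mix n c hx (ocell_sub n c hy) h hb hab

lemma ccell_eq {ι : Type} (n : ι → E2) (c : ι → ℝ) (h : (ocell n c).Nonempty) :
    ccell n c = closure (ocell n c) := by
  apply subset_antisymm
  · intro y hy
    obtain ⟨x, hx⟩ := h
    have ht : Filter.Tendsto (fun a : ℝ => a • x + (1 - a) • y) (nhdsWithin 0 (Set.Ioo 0 1))
        (nhds y) := by
      have : ContinuousAt (fun a : ℝ => a • x + (1 - a) • y) 0 := by fun_prop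
      have h2 := this.tendsto
      simp only [zero_smul, sub_zero, one_smul, zero_add] at h2
      exact h2.mono_left nhdsWithin_le_nhds
    have : (nhdsWithin (0:ℝ) (Set.Ioo 0 1)).NeBot := by
      rw [← mem_closure_iff_nhdsWithin_neBot, closure_Ioo (by norm_num)]
      simp
    apply mem_closure_of_tendsto ht
    filter_upwards [self_mem_nhdsWithin] with a ha
    exact cell_mix n c hx hy ha.1 (by linarith [ha.2]) (by ring)
  · exact closure_minimal (ocell_sub n c) (ccell_closed n c)

lemma ccell_frontier {ι : Type} [Finite ι] (n : ι → E2) (c : ι → ℝ) :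
    frontier (ccell n c) ⊆ ⋃ i, ({x | inner ℝ (n i) x = c i} ∩ ccell n c) := by
  intro x hx
  rw [(ccell_closed n c).frontier_eq] at hx
  by_contra hcon
  apply hx.2
  apply interior_maximal (ocell_sub n c) (ocell_open n c)
  intro i
  apply lt_of_le_of_ne (hx.1 i)
  intro h
  exact hcon (Set.mem_iUnion.2 ⟨i, h, hx.1⟩)

lemma ccell_hull {ι : Type} [Finite ι] (n : ι → E2) (c : ι → ℝ)
    (hb : Bornology.IsBounded (ccell n c)) :
    ∃ V : Finset E2, ccell n c = convexHull ℝ (V : Set E2) := by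
  have hfin : (Set.extremePoints ℝ (ccell n c)).Finite := by
    let T : E2 → Set ι := fun x => {i | inner ℝ (n i) x = c i}
    apply Set.Finite.of_finite_image (f := T) (Set.toFinite _)
    intro x hx y hy hxy
    by_contra hne
    have hev : ∀ᶠ t : ℝ in nhds 0, ∀ i, inner ℝ (n i) (x + t • (y - x)) ≤ c i := by
      rw [Filter.eventually_all]
      intro i
      by_cases hi : i ∈ T x
      · have hi' : i ∈ T y := hxy ▸ hi
        refine Filter.Eventually.of_forall fun t => ?_
        have h1 : inner ℝ (n i) x = c i := hi
        have h2 : inner ℝ (n i) y = c i := hi'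
        rw [inner_add_right, inner_smul_right, inner_sub_right, h1, h2]
        simp
      · have h1 : inner ℝ (n i) x < c i := lt_of_le_of_ne (hx.1 i) hi
        have hc : ContinuousAt (fun t : ℝ => inner ℝ (n i) (x + t • (y - x))) 0 := by fun_prop
        have := hc.eventually_lt (continuousAt_const (y := c i)) (by simpa using h1)
        exact this.mono fun t ht => ht.le
    obtain ⟨ε, hε, hball⟩ := Metric.eventually_nhds_iff.1 hev
    have hp : x + (ε/2) • (y - x) ∈ ccell n c := hball (by simp [abs_of_pos hε]; linarith)
    have hm : x + (-(ε/2)) • (y - x) ∈ ccell n c := hball (by simp [abs_of_pos hε]; linarith)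
    have hmid : x ∈ openSegment ℝ (x + (ε/2) • (y - x)) (x + (-(ε/2)) • (y - x)) := by
      refine ⟨1/2, 1/2, by norm_num, by norm_num, by norm_num, ?_⟩
      module
    have := hx.2 hp hm hmid
    have h0 : (ε/2) • (y - x) = 0 := by simpa using this
    rcases smul_eq_zero.1 h0 with h | h
    · linarith
    · exact hne (sub_eq_zero.1 h).symm
  refine ⟨hfin.toFinset, ?_⟩
  rw [hfin.coe_toFinset]
  have hcomp : IsCompact (ccell n c) := Metric.isCompact_of_isClosed_isBounded (ccell_closed n c) hb
  have := closure_convexHull_extremePoints hcomp (ccell_convex n c)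
  rw [(hfin.isCompact_convexHull ℝ).isClosed.closure_eq] at this
  exact this.symm

lemma line_measure (n : E2) (hn : n ≠ 0) (c : ℝ) (K : Set E2) :
    μH[1] ({x | inner ℝ n x = c} ∩ K) ≤ Metric.ediam K := by
  rcases ({x | inner ℝ n x = c} ∩ K).eq_empty_or_nonempty with h | ⟨p, hp⟩
  · rw [h]; simp
  set S := {x | inner ℝ n x = c} ∩ K
  let v : E2 := !₂[-(n 1), n 0]
  have hv : v ≠ 0 := by
    intro h
    apply hn
    ext i
    fin_cases i
    · simpa [v] using congrArg (fun x : E2 => x 1) h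
    · simpa [v] using congrArg (fun x : E2 => x 0) h
  have hv' : ‖v‖ ≠ 0 := norm_ne_zero_iff.2 hv
  let f : ℝ → E2 := fun t => p + t • ((‖v‖)⁻¹ • v)
  have hf : Isometry f := by
    apply Isometry.of_dist_eq
    intro s t
    simp only [f, dist_add_left]
    rw [dist_eq_norm, ← sub_smul, norm_smul, norm_smul, norm_inv, norm_norm,
      inv_mul_cancel₀ hv', mul_one, Real.dist_eq, Real.norm_eq_abs]
  have hq : n 0 * n 0 + n 1 * n 1 ≠ 0 := by
    intro h
    apply hn
    ext i
    fin_cases i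
    · simp; nlinarith [mul_self_nonneg (n 0), mul_self_nonneg (n 1)]
    · simp; nlinarith [mul_self_nonneg (n 0), mul_self_nonneg (n 1)]
  have hq1 : n 0 ^ 2 + n 1 ^ 2 ≠ 0 := by rwa [pow_two, pow_two]
  have hq2 : n 1 ^ 2 + n 0 ^ 2 ≠ 0 := by rwa [add_comm]
  have hS : S ⊆ f '' (f ⁻¹' S) := by
    intro x hx
    have h1 : inner ℝ n x = c := hx.1
    have h2 : inner ℝ n p = c := hp.1
    simp only [PiLp.inner_apply, Fin.sum_univ_two, RCLike.inner_apply, conj_trivial] at h1 h2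
    have key : f (((-(n 1)) * (x 0 - p 0) + n 0 * (x 1 - p 1)) / (n 0 * n 0 + n 1 * n 1) * ‖v‖)
        = x := by
      simp only [f]
      rw [smul_smul, mul_assoc, mul_inv_cancel₀ hv', mul_one]
      ext i
      fin_cases i
      · simp [v]
        field_simp
        linear_combination (n 0) * (h2 - h1)
      · simp [v]
        field_simp
        linear_combination (n 1) * (h2 - h1)
    exact ⟨_, by rw [Set.mem_preimage, key]; exact hx, key⟩
  calc μH[1] S ≤ μH[1] (f '' (f ⁻¹' S)) := measure_mono hS
    _ = μH[1] (f ⁻¹' S) := hf.hausdorffMeasure_image (Or.inl zero_le_one) _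
    _ = volume (f ⁻¹' S) := by rw [hausdorffMeasure_real]
    _ ≤ Metric.ediam (f ⁻¹' S) := Real.volume_le_diam _
    _ = Metric.ediam (f '' (f ⁻¹' S)) := (hf.ediam_image _).symm
    _ ≤ Metric.ediam K := Metric.ediam_mono ((Set.image_preimage_subset _ _).trans Set.inter_subset_right)

lemma exists_normal (e : E2 × E2) :
    ∃ n : E2, n ≠ 0 ∧ ∀ x ∈ segment ℝ e.1 e.2, inner ℝ n x = inner ℝ n e.1 := by
  by_cases h : e.1 = e.2
  · refine ⟨EuclideanSpace.single 0 1, by simp, ?_⟩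
    intro x hx
    rw [h, segment_same] at hx
    rw [h, Set.mem_singleton_iff.1 hx]
  · refine ⟨!₂[-((e.2 - e.1) 1), (e.2 - e.1) 0], ?_, ?_⟩
    · intro h0
      apply h
      symm
      rw [← sub_eq_zero]
      ext i
      fin_cases i
      · simpa using congrArg (fun x : E2 => x 1) h0
      · have h1 := congrArg (fun x : E2 => x 0) h0
        simp at h1 ⊢
        linarith
    · rintro x ⟨a, b, ha, hb, hab, rfl⟩
      have : a = 1 - b := by linarith
      subst this
      simp [PiLp.inner_apply, Fin.sum_univ_two]
      ring

lemma hyper_dense (n : E2) (hn : n ≠ 0) (c : ℝ) : Dense {x : E2 | inner ℝ n x ≠ c} := by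
  intro x
  by_cases h : inner ℝ n x = c
  · have ht : Filter.Tendsto (fun a : ℝ => x + a • n) (nhdsWithin 0 {0}ᶜ) (nhds x) := by
      have : ContinuousAt (fun a : ℝ => x + a • n) 0 := by fun_prop
      have h2 := this.tendsto
      simp only [zero_smul, add_zero] at h2
      exact h2.mono_left nhdsWithin_le_nhds
    apply mem_closure_of_tendsto ht
    filter_upwards [self_mem_nhdsWithin] with a ha
    simp only [inner_add_right, inner_smul_right, h]
    simpa [hn] using ha
  · exact subset_closure h

lemma grid_floor {δ t : ℝ} (hδ : 0 < δ) {g : ℤ} (h1 : (g:ℝ) * δ ≤ t) (h2 : t ≤ (g + 1) * δ)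
    (h3 : ∀ m : ℤ, t ≠ m * δ) : g = ⌊t / δ⌋ := by
  symm
  rw [Int.floor_eq_iff]
  refine ⟨by rwa [le_div_iff₀ hδ], ?_⟩
  rw [div_lt_iff₀ hδ]
  refine lt_of_le_of_ne h2 ?_
  have := h3 (g + 1)
  push_cast at this
  exact this

theorem exists_partition_into_small_perimeter_pieces
    (P : Set (EuclideanSpace ℝ (Fin 2))) (hP : IsSimplePolygon P) :
    ∃ (k : ℕ) (Q : Fin k → Set (EuclideanSpace ℝ (Fin 2))),
      (∀ i, ∃ V : Finset (EuclideanSpace ℝ (Fin 2)), Q i = convexHull ℝ (V : Set _)) ∧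
      (Pairwise fun i j => Disjoint (interior (Q i)) (interior (Q j))) ∧
      (⋃ i, Q i) = P ∧
      ∀ i, μH[1] (frontier (Q i)) ≤ 1 := by
  obtain ⟨⟨hcomp, hcl, F, hF⟩, -⟩ := hP
  choose nr hnr hline using exists_normal
  let ι : Type := F ⊕ (Fin 2 × Bool)
  let δ : ℝ := 1 / (2 * (Fintype.card ι + 1))
  have hδ : 0 < δ := by positivity
  let bs : Fin 2 → E2 := fun i => EuclideanSpace.single i 1
  have hbs : ∀ i, bs i ≠ 0 := fun i => by simp [bs]
  have hbi : ∀ i x, inner ℝ (bs i) x = x i := fun i x => by simp [bs, EuclideanSpace.inner_single_left]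
  let κ : Type := (F → Bool) × (Fin 2 → ℤ)
  let N : κ → ι → E2 := fun k => Sum.elim
    (fun e => if k.1 e then nr e else - nr e) (fun p => if p.2 then bs p.1 else - bs p.1)
  let C : κ → ι → ℝ := fun k => Sum.elim
    (fun e => if k.1 e then inner ℝ (nr e) e.1.1 else - inner ℝ (nr e) e.1.1)
    (fun p => if p.2 then ((k.2 p.1 : ℝ) + 1) * δ else - ((k.2 p.1 : ℝ) * δ))
  have hN : ∀ k i, N k i ≠ 0 := by
    rintro k (e | ⟨i, b⟩)
    · simp only [N, Sum.elim_inl]; split_ifs <;> simp [hnr]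
    · simp only [N, Sum.elim_inr]; split_ifs <;> simp [hbs]
  -- grid bounds
  have hgrid : ∀ k, ∀ x ∈ ccell (N k) (C k), ∀ i,
      (k.2 i : ℝ) * δ ≤ x i ∧ x i ≤ ((k.2 i : ℝ) + 1) * δ := by
    intro k x hx i
    have h1 := hx (Sum.inr (i, true))
    have h2 := hx (Sum.inr (i, false))
    simp [N, C, hbi, inner_neg_left] at h1 h2
    exact ⟨h2, h1⟩
  have hdist : ∀ k, ∀ x ∈ ccell (N k) (C k), ∀ y ∈ ccell (N k) (C k), dist x y ≤ 2 * δ := by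
    intro k x hx y hy
    rw [EuclideanSpace.dist_eq, Fin.sum_univ_two, Real.dist_eq, Real.dist_eq, sq_abs, sq_abs]
    have hh : ∀ i, (x i - y i) ^ 2 ≤ δ ^ 2 := by
      intro i
      obtain ⟨a, b⟩ := hgrid k x hx i
      obtain ⟨a', b'⟩ := hgrid k y hy i
      apply sq_le_sq'
      · linarith
      · linarith
    apply Real.sqrt_le_iff.2
    constructor
    · positivity
    · nlinarith [hh 0, hh 1]
  have hdiam : ∀ k, Metric.ediam (ccell (N k) (C k)) ≤ ENNReal.ofReal (2 * δ) := by
    intro k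
    apply Metric.ediam_le
    intro x hx y hy
    rw [edist_dist]
    exact ENNReal.ofReal_le_ofReal (hdist k x hx y hy)
  have hbdd : ∀ k, Bornology.IsBounded (ccell (N k) (C k)) := by
    intro k
    rw [Metric.isBounded_iff]
    exact ⟨2 * δ, fun x hx y hy => hdist k x hx y hy⟩
  have hper : ∀ k, μH[1] (frontier (ccell (N k) (C k))) ≤ 1 := by
    intro k
    calc μH[1] (frontier (ccell (N k) (C k)))
        ≤ μH[1] (⋃ i, ({x | inner ℝ (N k i) x = C k i} ∩ ccell (N k) (C k))) :=
          measure_mono (ccell_frontier _ _)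
      _ ≤ ∑ i, μH[1] ({x | inner ℝ (N k i) x = C k i} ∩ ccell (N k) (C k)) :=
          measure_iUnion_fintype_le _ _
      _ ≤ ∑ i : ι, ENNReal.ofReal (2 * δ) :=
          Finset.sum_le_sum fun i _ => (line_measure _ (hN k i) _ _).trans (hdiam k)
      _ = ENNReal.ofReal (Fintype.card ι * (2 * δ)) := by
          rw [Finset.sum_const, Finset.card_univ, nsmul_eq_mul, ENNReal.ofReal_mul (Nat.cast_nonneg _),
            ENNReal.ofReal_natCast]
      _ ≤ 1 := by
          rw [ENNReal.ofReal_le_one]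
          have : (0:ℝ) ≤ Fintype.card ι := by positivity
          simp only [δ]
          have h3 : (Fintype.card ι : ℝ) * (2 * (1 / (2 * (Fintype.card ι + 1)))) =
              Fintype.card ι / (Fintype.card ι + 1) := by field_simp
          rw [h3, div_le_one (by positivity)]
          linarith
  -- generic points
  let U : Set E2 := ⋂ j : F ⊕ (Fin 2 × ℤ), Sum.elim
    (fun e : F => {x : E2 | inner ℝ (nr e) x ≠ inner ℝ (nr e) e.1.1})
    (fun p => {x : E2 | inner ℝ (bs p.1) x ≠ (p.2 : ℝ) * δ}) j
  have hU : Dense U := by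
    apply dense_iInter_of_isOpen
    · rintro (e | p)
      · exact isOpen_ne_fun (by fun_prop) (by fun_prop)
      · exact isOpen_ne_fun (by fun_prop) (by fun_prop)
    · rintro (e | p)
      · exact hyper_dense _ (hnr _) _
      · exact hyper_dense _ (hbs _) _
  have hU1 : ∀ x ∈ U, ∀ e : F, inner ℝ (nr e) x ≠ inner ℝ (nr e) e.1.1 := by
    intro x hx e
    exact Set.mem_iInter.1 hx (Sum.inl e)
  have hU2 : ∀ x ∈ U, ∀ i, ∀ m : ℤ, x i ≠ m * δ := by
    intro x hx i m
    have : inner ℝ (bs i) x ≠ (m : ℝ) * δ := Set.mem_iInter.1 hx (Sum.inr (i, m))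
    rwa [hbi] at this
  let code : E2 → κ := fun x => (fun e => decide (inner ℝ (nr e) x < inner ℝ (nr e) e.1.1),
    fun i => ⌊x i / δ⌋)
  have hcode : ∀ x ∈ U, x ∈ ocell (N (code x)) (C (code x)) := by
    rintro x hx (e | ⟨i, b⟩)
    · by_cases h : inner ℝ (nr e) x < inner ℝ (nr e) e.1.1
      · simpa [N, C, code, h] using h
      · have h' := lt_of_le_of_ne (not_lt.1 h) (hU1 x hx e).symm
        simpa [N, C, code, h, inner_neg_left] using h'
    · cases b
      · have h1 := Int.floor_le (x i / δ)
        rw [le_div_iff₀ hδ] at h1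
        have h2 := lt_of_le_of_ne h1 (hU2 x hx i _).symm
        simpa [N, C, code, inner_neg_left, hbi] using h2
      · have h1 := Int.lt_floor_add_one (x i / δ)
        rw [div_lt_iff₀ hδ] at h1
        simpa [N, C, code, hbi] using h1
  have huniq : ∀ k, ∀ x ∈ U, x ∈ ccell (N k) (C k) → k = code x := by
    intro k x hx hxk
    apply Prod.ext
    · funext e
      have h := hxk (Sum.inl e)
      have hne := hU1 x hx e
      cases hs : k.1 e
      · simp [N, C, hs, inner_neg_left] at h
        simp [code, h]
      · simp [N, C, hs] at h
        simp [code, lt_of_le_of_ne h hne]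
    · funext i
      obtain ⟨a, b⟩ := hgrid k x hxk i
      exact grid_floor hδ a b (hU2 x hx i)
  -- good indices
  let G : Set κ := {k | (ocell (N k) (C k) ∩ interior P).Nonempty}
  obtain ⟨R, hR⟩ := hcomp.isBounded.exists_norm_le
  have hGfin : G.Finite := by
    let T : Set (Fin 2 → ℤ) := Set.pi Set.univ fun _ => Set.Icc (⌊-R / δ⌋ - 1) (⌈R / δ⌉)
    have hT : T.Finite := Set.Finite.pi fun _ => Set.finite_Icc _ _
    apply ((Set.toFinite (Set.univ : Set (F → Bool))).prod hT).subset
    rintro k ⟨x, hx, hxP⟩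
    refine ⟨trivial, fun i _ => ?_⟩
    obtain ⟨a, b⟩ := hgrid k x (ocell_sub _ _ hx) i
    have hxR : |x i| ≤ R := (PiLp.norm_apply_le x i).trans (hR x (interior_subset hxP))
    obtain ⟨h1, h2⟩ := abs_le.1 hxR
    constructor
    · have : -R / δ ≤ (k.2 i : ℝ) + 1 := by rw [div_le_iff₀ hδ]; linarith
      have h3 : ((⌊-R / δ⌋ : ℤ) : ℝ) ≤ ((k.2 i + 1 : ℤ) : ℝ) := by
        push_cast; exact (Int.floor_le _).trans this
      have h4 : ⌊-R / δ⌋ ≤ k.2 i + 1 := by exact_mod_cast h3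
      omega
    · have : (k.2 i : ℝ) ≤ R / δ := by rw [le_div_iff₀ hδ]; linarith
      have h3 : (k.2 i : ℝ) ≤ (⌈R / δ⌉ : ℝ) := this.trans (Int.le_ceil _)
      exact_mod_cast h3
  have hGP : ∀ k ∈ G, ccell (N k) (C k) ⊆ P := by
    intro k hk
    rw [ccell_eq _ _ (hk.mono Set.inter_subset_left), hcl]
    apply closure_mono
    have hnf : ∀ x ∈ ocell (N k) (C k), x ∉ frontier P := by
      intro x hx hxf
      have hxf' : x ∈ frontier P := hxf
      obtain ⟨e, he, hxe⟩ := Set.mem_iUnion₂.1 (hF hxf')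
      have h1 := hline e x hxe
      have h2 := hx (Sum.inl ⟨e, he⟩)
      simp only [N, C, Sum.elim_inl] at h2
      split_ifs at h2
      · exact h2.ne h1
      · rw [inner_neg_left] at h2
        linarith
    have hcov : ocell (N k) (C k) ⊆ interior P ∪ Pᶜ := by
      intro x hx
      by_contra h
      simp only [Set.mem_union, Set.mem_compl_iff, not_or, not_not] at h
      exact hnf x hx (by rw [hcomp.isClosed.frontier_eq]; exact ⟨h.2, h.1⟩)
    intro x hx
    rcases hcov hx with h | h
    · exact h
    · obtain ⟨y, -, hy1, hy2⟩ := (ocell_convex (N k) (C k)).isPreconnected _ _ isOpen_interior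
        hcomp.isClosed.isOpen_compl hcov hk ⟨x, hx, h⟩
      exact absurd (interior_subset hy1) hy2
  have : Finite G := hGfin
  obtain ⟨m, ⟨eq⟩⟩ := Finite.exists_equiv_fin G
  refine ⟨m, fun i => ccell (N (eq.symm i)) (C (eq.symm i)), fun i => ccell_hull _ _ (hbdd _),
    ?_, ?_, fun i => hper _⟩
  · intro i j hij
    rw [Set.disjoint_iff_inter_eq_empty, ← Set.not_nonempty_iff_eq_empty]
    intro hne
    obtain ⟨x, hx, hxU⟩ := hU.inter_open_nonempty _ (isOpen_interior.inter isOpen_interior) hne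
    apply hij
    apply eq.symm.injective
    apply Subtype.ext
    rw [huniq _ x hxU (interior_subset hx.1), huniq _ x hxU (interior_subset hx.2)]
  · apply subset_antisymm
    · exact Set.iUnion_subset fun i => hGP _ (eq.symm i).2
    · have hclosed : IsClosed (⋃ i, ccell (N (eq.symm i)) (C (eq.symm i))) :=
        isClosed_iUnion_of_finite fun i => ccell_closed _ _
      rw [hcl]
      apply closure_minimal _ hclosed
      refine (hU.open_subset_closure_inter isOpen_interior).trans (closure_minimal ?_ hclosed)
      rintro x ⟨hxP, hxU⟩
      have hxo := hcode x hxU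
      refine Set.mem_iUnion.2 ⟨eq ⟨code x, x, hxo, hxP⟩, ?_⟩
      rw [Equiv.symm_apply_apply]
      exact ocell_sub _ _ hxo
end
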